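/- Let (X_i)_{i∈ℤ} be a strictly stationary sequence of d-dimensional random vectors with continuous margins whose strong mixing coefficients satisfy α_r = O(r^{−a}) for some a > 1, and suppose Conditions (pd) and (noTies) hold. Then sup_{(s,t,u)∈Δ×[0,1]^d} |ℂ_n(s,t,u) − C̃_n(s,t,u)| converges to 0 in outer probability as n → ∞. -/

import Mathlib

/-!
The empirical copula of a block is the empirical c.d.f. of the unobservable `U_i` in that block,
evaluated at a random point `v` near `u`: the ranks only see the order of the data, so
`{rank ≤ y}` is a set `{U ≤ v_j}` in each coordinate (`exists_threshold`, `exists_representation`).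
With `B = B̃_n(t, ·) - B̃_n(s, ·)` this reads
`ℂ_n(s,t,u) = B(v) + √n λ_n(s,t) (C(v) - C(u))`, and `√n λ_n(s,t) (v_j - u_j) = - B(v^{(j)})` up to
`1 / √n`. Changing one coordinate at a time, the mean value theorem writes `C(v) - C(u)` as
`∑ j, Ċ_j(w_j) (v_j - u_j)` with `w_j` between `u` and `v` (`exists_copula_increment`), so the claim
amounts to replacing `v` by `u` in `B` and `w_j` by `u` in `Ċ_j`. If `t - s` is small, all terms are
small. Otherwise `v - u` is of order `1 / √n`; `Ċ_j` is uniformly continuous away from the faces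
`u_j = 0, 1`, and near those faces `B(u^{(j)})` is small because it vanishes on them
(`exists_uniform_bound`).

Both replacements rest on the asymptotic equicontinuity of `B̃_n` (`exists_equi`), which also makes
`B̃_n` bounded in probability because `B̃_n(0, ·) = 0`. It is proved by dyadic chaining in
`(t, u)` jointly, on a lattice of mesh about `1 / n`: an increment is a sum of centred counts of
dyadic cells, at most one for each cell shape, so it suffices to bound the counts of all the fine
cells at once (`abs_prod_chain_le`, `abs_cSum_sub_le`). For one cell shape, the centred count of
events `A_c(t)` is split as `1(A_c(t)) - P(A_c(t) | F_{t-q})` plus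
`P(A_c(t) | F_{t-q}) - P(A_c(t))`. The first part is a sum of `q` martingales along the residue
classes modulo `q`, controlled by an exponential supermartingale (`integral_prod_exp_le`). The second
part is controlled in mean square, *summed* over the cells: since the cells are disjoint, the sum over
`c` of the covariances at a pair of times is at most four mixing coefficients, with no factor for the
number of cells (`sum_cov_le`). A gap `q` that grows geometrically with the fineness of the cells
makes the two bounds summable as soon as `a > 1` (`core_maximal`, `prob_cells_le`).
-/

open Set Filter MeasureTheory

namespace Stmt0

variable {Ω : Type*} [MeasurableSpace Ω]

/-- σ-field generated by `(Y i)_{i ≤ p}`. -/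
def sigmaLE {β : Type*} [MeasurableSpace β] (Y : ℤ → Ω → β) (p : ℤ) :
    MeasurableSpace Ω :=
  ⨆ i ∈ {i : ℤ | i ≤ p}, MeasurableSpace.comap (Y i) inferInstance

/-- σ-field generated by `(Y i)_{i ≥ p}`. -/
def sigmaGE {β : Type*} [MeasurableSpace β] (Y : ℤ → Ω → β) (p : ℤ) :
    MeasurableSpace Ω :=
  ⨆ i ∈ {i : ℤ | p ≤ i}, MeasurableSpace.comap (Y i) inferInstance

/-- Strong mixing coefficient `α_r` of the sequence `Y`. -/
noncomputable def alphaMix {β : Type*} [MeasurableSpace β]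
    (P : Measure Ω) (Y : ℤ → Ω → β) (r : ℕ) : ℝ :=
  sSup {x : ℝ | ∃ (p : ℤ) (A B : Set Ω),
    MeasurableSet[sigmaLE Y p] A ∧ MeasurableSet[sigmaGE Y (p + r)] B ∧
    x = |(P (A ∩ B)).toReal - (P A).toReal * (P B).toReal|}

/-- Strict stationarity of a sequence indexed by `ℤ`. -/
def Stationary {β : Type*} [MeasurableSpace β]
    (P : Measure Ω) (Y : ℤ → Ω → β) : Prop :=
  ∀ k : ℤ, Measure.map (fun ω (i : ℤ) => Y (i + k) ω) P
    = Measure.map (fun ω (i : ℤ) => Y i ω) P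

variable {d : ℕ}

/-- Rank `R_{ij}^{k:l}` of `X i ω j` among `X k ω j, …, X l ω j`. -/
noncomputable def rank (X : ℤ → Ω → Fin d → ℝ) (k l i : ℤ) (j : Fin d)
    (ω : Ω) : ℕ :=
  ((Finset.Icc k l).filter fun m => X m ω j ≤ X i ω j).card

/-- Empirical copula `C_{k:l}` of `X k, …, X l` (with `C_{k:k−1} ≡ 0`). -/
noncomputable def empCop (X : ℤ → Ω → Fin d → ℝ) (k l : ℤ)
    (u : Fin d → ℝ) (ω : Ω) : ℝ :=
  (((Finset.Icc k l).card : ℝ))⁻¹ * ∑ i ∈ Finset.Icc k l,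
    (if ∀ j, (rank X k l i j ω : ℝ) / ((Finset.Icc k l).card : ℝ) ≤ u j
      then (1 : ℝ) else 0)

/-- `λ_n(s,t) = (⌊nt⌋ − ⌊ns⌋)/n`. -/
noncomputable def lam (n : ℕ) (s t : ℝ) : ℝ :=
  ((⌊(n : ℝ) * t⌋ : ℝ) - (⌊(n : ℝ) * s⌋ : ℝ)) / (n : ℝ)

/-- `j`-th marginal c.d.f. `F_j` of the stationary sequence. -/
noncomputable def margCdf (P : Measure Ω) (X : ℤ → Ω → Fin d → ℝ)
    (j : Fin d) (x : ℝ) : ℝ :=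
  (P {ω | X 1 ω j ≤ x}).toReal

/-- The (unique) copula `C` of the stationary sequence, i.e. the c.d.f. of
`U_1 = (F_1(X_{11}),…,F_d(X_{1d}))`. -/
noncomputable def copula (P : Measure Ω) (X : ℤ → Ω → Fin d → ℝ)
    (u : Fin d → ℝ) : ℝ :=
  (P {ω | ∀ j, margCdf P X j (X 1 ω j) ≤ u j}).toReal

/-- The two-sided sequential empirical copula process
`ℂ_n(s,t,u) = √n λ_n(s,t) {C_{⌊ns⌋+1:⌊nt⌋}(u) − C(u)}`. -/
noncomputable def seqEmpCopProc (P : Measure Ω) (X : ℤ → Ω → Fin d → ℝ)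
    (n : ℕ) (s t : ℝ) (u : Fin d → ℝ) (ω : Ω) : ℝ :=
  Real.sqrt n * lam n s t *
    (empCop X (⌊(n : ℝ) * s⌋ + 1) ⌊(n : ℝ) * t⌋ u ω - copula P X u)

/-- The sequential empirical process
`B̃_n(s,u) = n^{−1/2} Σ_{i=1}^{⌊ns⌋} {1(U_i ≤ u) − C(u)}` of the unobservable
sample `U_{ij} = F_j(X_{ij})`. -/
noncomputable def Btilde (P : Measure Ω) (X : ℤ → Ω → Fin d → ℝ)
    (n : ℕ) (s : ℝ) (u : Fin d → ℝ) (ω : Ω) : ℝ :=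
  (Real.sqrt n)⁻¹ * ∑ i ∈ Finset.Icc (1 : ℤ) ⌊(n : ℝ) * s⌋,
    ((if ∀ j, margCdf P X j (X i ω j) ≤ u j then (1 : ℝ) else 0)
      - copula P X u)

/-- `u^{(j)}`: all coordinates equal to `1` except the `j`-th, which is `u j`. -/
def uvec (u : Fin d → ℝ) (j : Fin d) : Fin d → ℝ :=
  fun i => if i = j then u j else 1

/-- The approximating process
`C̃_n(s,t,u) = {B̃_n(t,u) − B̃_n(s,u)} − Σ_j Ċ_j(u) {B̃_n(t,u^{(j)}) − B̃_n(s,u^{(j)})}`. -/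
noncomputable def Ctilde (P : Measure Ω) (X : ℤ → Ω → Fin d → ℝ)
    (Cdot : Fin d → (Fin d → ℝ) → ℝ) (n : ℕ) (s t : ℝ) (u : Fin d → ℝ)
    (ω : Ω) : ℝ :=
  (Btilde P X n t u ω - Btilde P X n s u ω) -
    ∑ j : Fin d, Cdot j u *
      (Btilde P X n t (uvec u j) ω - Btilde P X n s (uvec u j) ω)

/-! ### Covariance inequalities under strong mixing -/

lemma sigmaLE_le {β : Type*} [MeasurableSpace β] {Y : ℤ → Ω → β}
    (hY : ∀ i, Measurable (Y i)) (p : ℤ) : sigmaLE Y p ≤ ‹MeasurableSpace Ω› :=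
  iSup₂_le fun i _ => (hY i).comap_le

lemma sigmaLE_mono {Ω β : Type*} [MeasurableSpace β] (Y : ℤ → Ω → β) {p p' : ℤ} (h : p ≤ p') :
    sigmaLE Y p ≤ sigmaLE Y p' :=
  biSup_mono fun _ hi => le_trans hi h

lemma comap_le_sigmaLE {Ω β : Type*} [MeasurableSpace β] (Y : ℤ → Ω → β) {i p : ℤ} (h : i ≤ p) :
    MeasurableSpace.comap (Y i) inferInstance ≤ sigmaLE Y p :=
  le_iSup₂_of_le (f := fun (i : ℤ) (_ : i ∈ {i : ℤ | i ≤ p}) =>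
    MeasurableSpace.comap (Y i) inferInstance) i h le_rfl

lemma comap_le_sigmaGE {Ω β : Type*} [MeasurableSpace β] (Y : ℤ → Ω → β) {i p : ℤ} (h : p ≤ i) :
    MeasurableSpace.comap (Y i) inferInstance ≤ sigmaGE Y p :=
  le_iSup₂_of_le (f := fun (i : ℤ) (_ : i ∈ {i : ℤ | p ≤ i}) =>
    MeasurableSpace.comap (Y i) inferInstance) i h le_rfl

lemma abs_cov_le_alphaMix {β : Type*} [MeasurableSpace β] (P : Measure Ω)
    [IsProbabilityMeasure P] (Y : ℤ → Ω → β) (r : ℕ) (p : ℤ) {A B : Set Ω}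
    (hA : MeasurableSet[sigmaLE Y p] A) (hB : MeasurableSet[sigmaGE Y (p + r)] B) :
    |P.real (A ∩ B) - P.real A * P.real B| ≤ alphaMix P Y r := by
  refine le_csSup ⟨1, ?_⟩ ⟨p, A, B, hA, hB, rfl⟩
  rintro x ⟨p, A, B, -, -, rfl⟩
  change |P.real (A ∩ B) - P.real A * P.real B| ≤ 1
  have h1 : P.real (A ∩ B) ≤ 1 := measureReal_le_one
  have h2 : P.real A * P.real B ≤ 1 :=
    mul_le_one₀ measureReal_le_one measureReal_nonneg measureReal_le_one
  have h3 : 0 ≤ P.real (A ∩ B) := measureReal_nonneg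
  have h4 : 0 ≤ P.real A * P.real B := mul_nonneg measureReal_nonneg measureReal_nonneg
  rw [abs_le]; constructor <;> linarith

lemma integral_mul_condExp_eq {Ω : Type*} {m mΩ : MeasurableSpace Ω} {P : Measure Ω}
    [IsProbabilityMeasure P] (hm : m ≤ mΩ) {f g : Ω → ℝ} (hf : StronglyMeasurable[m] f) {c : ℝ}
    (hfc : ∀ᵐ ω ∂P, |f ω| ≤ c) (hg : Integrable g P) :
    ∫ ω, f ω * g ω ∂P = ∫ ω, f ω * (P[g|m]) ω ∂P := by
  have hfg : Integrable (f * g) P :=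
    hg.bdd_mul (hf.mono hm).aestronglyMeasurable (by simpa using hfc)
  have h := condExp_mul_of_stronglyMeasurable_left (μ := P) hf hfg hg
  calc ∫ ω, f ω * g ω ∂P = ∫ ω, (P[f * g|m]) ω ∂P := (integral_condExp hm).symm
    _ = _ := integral_congr_ae h

/-- Covariance of a bounded variable from the past with an event from the future. -/
lemma abs_cov_indicator_le {Ω : Type*} {m mΩ : MeasurableSpace Ω} {P : Measure Ω}
    [IsProbabilityMeasure P] (hm : m ≤ mΩ) {f : Ω → ℝ} (hf : StronglyMeasurable[m] f)
    (hf1 : ∀ᵐ ω ∂P, |f ω| ≤ 1) {B : Set Ω} (hB : MeasurableSet B) {γ : ℝ}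
    (hγ : ∀ A, MeasurableSet[m] A → |P.real (A ∩ B) - P.real A * P.real B| ≤ γ) :
    |∫ ω, f ω * B.indicator 1 ω ∂P - (∫ ω, f ω ∂P) * P.real B| ≤ 2 * γ := by
  have hBi : Integrable (B.indicator (1 : Ω → ℝ)) P :=
    (integrable_const (1 : ℝ)).indicator hB
  set g := P[B.indicator (1 : Ω → ℝ)|m] with hgdef
  have hgi : Integrable g P := integrable_condExp
  have hgm : StronglyMeasurable[m] g := stronglyMeasurable_condExp
  have hfi : Integrable f P :=
    Integrable.of_bound (hf.mono hm).aestronglyMeasurable 1 (by simpa using hf1)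
  have hfgi : Integrable (fun ω => f ω * g ω) P :=
    hgi.bdd_mul (hf.mono hm).aestronglyMeasurable (by simpa using hf1)
  set A : Set Ω := {ω | P.real B ≤ g ω} with hA
  have hAm : MeasurableSet[m] A := measurableSet_le measurable_const hgm.measurable
  have key : ∀ A : Set Ω, MeasurableSet[m] A →
      ∫ ω in A, (g ω - P.real B) ∂P = P.real (A ∩ B) - P.real A * P.real B := by
    intro A hAm
    rw [integral_sub hgi.integrableOn (integrable_const _), hgdef,
      setIntegral_condExp hm hBi hAm, setIntegral_indicator hB]
    simp
  have hsub : Integrable (fun ω => g ω - P.real B) P := hgi.sub (integrable_const _)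
  calc |∫ ω, f ω * B.indicator 1 ω ∂P - (∫ ω, f ω ∂P) * P.real B|
      = |∫ ω, f ω * (g ω - P.real B) ∂P| := by
        rw [integral_mul_condExp_eq hm hf hf1 hBi, ← integral_mul_const, ← integral_sub hfgi
          (hfi.mul_const _)]
        simp only [mul_sub]
    _ ≤ ∫ ω, |f ω * (g ω - P.real B)| ∂P := abs_integral_le_integral_abs
    _ ≤ ∫ ω, |g ω - P.real B| ∂P := by
        refine integral_mono_ae ?_ hsub.abs ?_
        · exact (hsub.bdd_mul (hf.mono hm).aestronglyMeasurable (by simpa using hf1)).abs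
        · filter_upwards [hf1] with ω h
          simp only [abs_mul]
          exact mul_le_of_le_one_left (abs_nonneg _) h
    _ = ∫ ω in A, |g ω - P.real B| ∂P + ∫ ω in Aᶜ, |g ω - P.real B| ∂P :=
        (integral_add_compl (hm _ hAm) hsub.abs).symm
    _ = ∫ ω in A, (g ω - P.real B) ∂P + ∫ ω in Aᶜ, -(g ω - P.real B) ∂P := by
        congr 1
        · refine setIntegral_congr_fun (hm _ hAm) fun ω hω => abs_of_nonneg ?_
          simpa [hA] using hω
        · refine setIntegral_congr_fun (hm _ hAm).compl fun ω hω => abs_of_nonpos ?_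
          have : ¬ P.real B ≤ g ω := hω
          linarith
    _ ≤ 2 * γ := by
        rw [integral_neg, key A hAm, key Aᶜ hAm.compl]
        have h1 := abs_le.1 (hγ A hAm)
        have h2 := abs_le.1 (hγ Aᶜ hAm.compl)
        linarith

/-- Signs can be chosen so that the quadratic form dominates the trace. -/
lemma exists_signs {ι : Type*} [DecidableEq ι] (s : Finset ι) (x : ι → ι → ℝ) :
    ∃ e : ι → ℝ, (∀ i, e i = 1 ∨ e i = -1) ∧
      ∑ i ∈ s, x i i ≤ ∑ i ∈ s, ∑ j ∈ s, e i * e j * x i j := by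
  induction s using Finset.induction_on with
  | empty => exact ⟨fun _ => 1, by simp, by simp⟩
  | insert a s ha ih =>
    obtain ⟨e, he, h⟩ := ih
    set y := ∑ j ∈ s, e j * x a j + ∑ i ∈ s, e i * x i a with hy
    set σ : ℝ := if 0 ≤ y then 1 else -1 with hσ
    have hσ1 : σ = 1 ∨ σ = -1 := by rw [hσ]; split_ifs <;> simp
    have hσy : 0 ≤ σ * y := by
      rw [hσ]; split_ifs with h0
      · simpa using h0
      · push Not at h0; linarith
    refine ⟨Function.update e a σ, fun i => ?_, ?_⟩
    · by_cases hi : i = a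
      · subst hi; simpa using hσ1
      · simpa [hi] using he i
    · have hne : ∀ i ∈ s, Function.update e a σ i = e i := fun i hi =>
        Function.update_of_ne (fun h : i = a => ha (h ▸ hi)) _ _
      have e1 : ∑ i ∈ s, ∑ j ∈ s, Function.update e a σ i * Function.update e a σ j * x i j
          = ∑ i ∈ s, ∑ j ∈ s, e i * e j * x i j :=
        Finset.sum_congr rfl fun i hi => Finset.sum_congr rfl fun j hj => by
          rw [hne i hi, hne j hj]
      have e2 : ∑ j ∈ s, Function.update e a σ a * Function.update e a σ j * x a j
          = σ * ∑ j ∈ s, e j * x a j := by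
        rw [Finset.mul_sum]
        exact Finset.sum_congr rfl fun j hj => by rw [hne j hj]; simp [mul_assoc]
      have e3 : ∑ i ∈ s, Function.update e a σ i * Function.update e a σ a * x i a
          = σ * ∑ i ∈ s, e i * x i a := by
        rw [Finset.mul_sum]
        exact Finset.sum_congr rfl fun j hj => by rw [hne j hj]; simp; ring
      have e4 : Function.update e a σ a * Function.update e a σ a = 1 := by
        rcases hσ1 with h | h <;> simp [h]
      rw [Finset.sum_insert ha, Finset.sum_insert ha, Finset.sum_insert ha]
      simp only [Finset.sum_insert ha]
      rw [Finset.sum_add_distrib, e1, e2, e3, e4]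
      rw [hy, mul_add] at hσy
      linarith

/-- Summed covariance inequality: for disjoint events `A c` of the future and variables `f c` of
the past with `∑ |f c| ≤ 1`, the covariances sum up to at most a constant times the mixing
coefficient, whatever the number of events. -/
lemma sum_cov_le {Ω : Type*} {m m' mΩ : MeasurableSpace Ω} {P : Measure Ω}
    [IsProbabilityMeasure P] (hm : m ≤ mΩ) (hm' : m' ≤ mΩ)
    {ι : Type*} [Fintype ι] [DecidableEq ι] {f : ι → Ω → ℝ}
    (hf : ∀ c, StronglyMeasurable[m] (f c)) (hf1 : ∀ᵐ ω ∂P, ∑ c, |f c ω| ≤ 1)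
    {A : ι → Set Ω} (hA : ∀ c, MeasurableSet[m'] (A c))
    (hdisj : Pairwise (Function.onFun Disjoint A)) {γ : ℝ}
    (hγ : ∀ A B, MeasurableSet[m] A → MeasurableSet[m'] B →
      |P.real (A ∩ B) - P.real A * P.real B| ≤ γ) :
    ∑ c, (∫ ω, f c ω * (A c).indicator 1 ω ∂P - (∫ ω, f c ω ∂P) * P.real (A c)) ≤ 4 * γ := by
  have hfc : ∀ c, ∀ᵐ ω ∂P, |f c ω| ≤ 1 := fun c => by
    filter_upwards [hf1] with ω h
    exact (Finset.single_le_sum (f := fun c => |f c ω|) (fun _ _ => abs_nonneg _)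
      (Finset.mem_univ c)).trans h
  have hfi : ∀ c, Integrable (f c) P := fun c =>
    Integrable.of_bound ((hf c).mono hm).aestronglyMeasurable 1 (by simpa using hfc c)
  have hAi : ∀ c, Integrable ((A c).indicator (1 : Ω → ℝ)) P := fun c =>
    (integrable_const (1 : ℝ)).indicator (hm' _ (hA c))
  have hfA : ∀ c c', Integrable (fun ω => f c ω * (A c').indicator 1 ω) P := fun c c' =>
    (hAi c').bdd_mul ((hf c).mono hm).aestronglyMeasurable (by simpa using hfc c)
  obtain ⟨e, he, hle⟩ := exists_signs (Finset.univ : Finset ι) (fun c c' =>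
    ∫ ω, f c ω * (A c').indicator 1 ω ∂P - (∫ ω, f c ω ∂P) * P.real (A c'))
  refine hle.trans ?_
  set F : Ω → ℝ := fun ω => ∑ c, e c * f c ω with hF
  have hFm : StronglyMeasurable[m] F :=
    Finset.stronglyMeasurable_fun_sum _ fun c _ => (hf c).const_mul _
  have hF1 : ∀ᵐ ω ∂P, |F ω| ≤ 1 := by
    filter_upwards [hf1] with ω h
    refine (Finset.abs_sum_le_sum_abs _ _).trans (le_trans (le_of_eq ?_) h)
    refine Finset.sum_congr rfl fun c _ => ?_
    rcases he c with h | h <;> simp [h]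
  have hBT : ∀ T : Finset ι, |∑ c' ∈ T, (∫ ω, F ω * (A c').indicator 1 ω ∂P
      - (∫ ω, F ω ∂P) * P.real (A c'))| ≤ 2 * γ := by
    intro T
    have hBm : MeasurableSet[m'] (⋃ c ∈ T, A c) := Finset.measurableSet_biUnion _ fun c _ => hA c
    have hpd : (T : Set ι).PairwiseDisjoint A := fun i _ j _ hij => hdisj hij
    have := abs_cov_indicator_le hm hFm hF1 (hm' _ hBm) (γ := γ) (fun A' hA' => hγ _ _ hA' hBm)
    rw [measureReal_biUnion_finset hpd (fun c _ => hm' _ (hA c))] at this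
    have hind : ∀ ω, (⋃ c ∈ T, A c).indicator (1 : Ω → ℝ) ω
        = ∑ c ∈ T, (A c).indicator 1 ω := fun ω =>
      Finset.indicator_biUnion_apply T A hpd ω
    simp only [hind, Finset.mul_sum] at this
    rw [integral_finsetSum] at this
    · rwa [Finset.sum_sub_distrib]
    · intro c _
      exact (hAi c).bdd_mul (hFm.mono hm).aestronglyMeasurable (by simpa using hF1)
  have hexp : ∑ c, ∑ c', e c * e c' * (∫ ω, f c ω * (A c').indicator 1 ω ∂P
        - (∫ ω, f c ω ∂P) * P.real (A c'))
      = ∑ c', e c' * (∫ ω, F ω * (A c').indicator 1 ω ∂P - (∫ ω, F ω ∂P) * P.real (A c')) := by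
    rw [Finset.sum_comm]
    refine Finset.sum_congr rfl fun c' _ => ?_
    simp only [hF, Finset.sum_mul]
    rw [integral_finsetSum, integral_finsetSum, Finset.sum_mul, ← Finset.sum_sub_distrib,
      Finset.mul_sum]
    · refine Finset.sum_congr rfl fun c _ => ?_
      simp only [mul_assoc (e c) (f c _)]
      rw [integral_const_mul, integral_const_mul]
      ring
    · exact fun c _ => (hfi c).const_mul _
    · intro c _
      simp only [mul_assoc (e c) (f c _)]
      exact (hfA c c').const_mul _
  rw [hexp]
  have hsplit : ∀ g : ι → ℝ, ∑ c', e c' * g c'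
      = ∑ c' ∈ Finset.univ.filter (fun c => e c = 1), g c'
        - ∑ c' ∈ Finset.univ.filter (fun c => ¬ e c = 1), g c' := by
    intro g
    rw [← Finset.sum_filter_add_sum_filter_not Finset.univ (fun c => e c = 1), sub_eq_add_neg,
      ← Finset.sum_neg_distrib]
    congr 1
    · exact Finset.sum_congr rfl fun c hc => by rw [(Finset.mem_filter.1 hc).2, one_mul]
    · refine Finset.sum_congr rfl fun c hc => ?_
      rw [(he c).resolve_left (Finset.mem_filter.1 hc).2]; ring
  rw [hsplit]
  have h1 := abs_le.1 (hBT (Finset.univ.filter (fun c => e c = 1)))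
  have h2 := abs_le.1 (hBT (Finset.univ.filter (fun c => ¬ e c = 1)))
  linarith

/-! ### A maximal inequality over disjoint cells -/

/-- Conditional probability of `A t` given the past up to time `t - q`. -/
noncomputable def condP {β : Type*} [MeasurableSpace β] (P : Measure Ω) (X : ℤ → Ω → β)
    (A : ℕ → Set Ω) (q t : ℕ) : Ω → ℝ :=
  P[(A t).indicator (1 : Ω → ℝ)|sigmaLE X ((t : ℤ) - q)]

section core
variable {β : Type*} [MeasurableSpace β] {P : Measure Ω} [IsProbabilityMeasure P]
  {X : ℤ → Ω → β}

lemma condP_sm (A : ℕ → Set Ω) (q t : ℕ) {p : ℤ} (h : (t : ℤ) - q ≤ p) :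
    StronglyMeasurable[sigmaLE X p] (condP P X A q t) :=
  (stronglyMeasurable_condExp (m := sigmaLE X ((t : ℤ) - q))).mono (sigmaLE_mono X h)

lemma meas_of_comap (hX : ∀ i, Measurable (X i)) {t : ℕ} {A : Set Ω}
    (hA : MeasurableSet[MeasurableSpace.comap (X t) inferInstance] A) : MeasurableSet A :=
  (hX t).comap_le _ hA

lemma condP_nonneg (A : ℕ → Set Ω) (q t : ℕ) : ∀ᵐ ω ∂P, 0 ≤ condP P X A q t ω :=
  condExp_nonneg (ae_of_all _ fun _ => indicator_nonneg (fun _ _ => zero_le_one) _)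

/-- Conditional probabilities of disjoint events sum up to at most one. -/
lemma sum_condP_le {ι : Type*} [Fintype ι] (hX : ∀ i, Measurable (X i)) {A : ι → ℕ → Set Ω}
    (q t : ℕ) (hA : ∀ c, MeasurableSet[MeasurableSpace.comap (X t) inferInstance] (A c t))
    (hdisj : Pairwise (Function.onFun Disjoint fun c => A c t)) :
    ∀ᵐ ω ∂P, ∑ c, |condP P X (A c) q t ω| ≤ 1 := by
  have hi : ∀ c, Integrable ((A c t).indicator (1 : Ω → ℝ)) P := fun c =>
    (integrable_const (1 : ℝ)).indicator (meas_of_comap hX (hA c))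
  have h1 := condExp_finsetSum (μ := P) (s := Finset.univ)
    (f := fun c => (A c t).indicator (1 : Ω → ℝ)) (fun c _ => hi c) (sigmaLE X ((t : ℤ) - q))
  have hle : (∑ c, (A c t).indicator (1 : Ω → ℝ)) ≤ᵐ[P] fun _ => (1 : ℝ) := by
    refine ae_of_all _ fun ω => ?_
    have := Finset.indicator_biUnion_apply (Finset.univ : Finset ι) (fun c => A c t)
      (fun i _ j _ hij => hdisj hij) (f := (1 : Ω → ℝ)) ω
    rw [Finset.sum_apply, ← this]
    exact indicator_le_self' (fun _ _ => zero_le_one) _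
  have h2 := condExp_mono (m := sigmaLE X ((t : ℤ) - q))
    (integrable_finsetSum' _ fun c _ => hi c) (integrable_const (1 : ℝ)) hle
  rw [condExp_const (sigmaLE_le hX _)] at h2
  have h3 : ∀ᵐ ω ∂P, ∀ c, 0 ≤ condP P X (A c) q t ω := ae_all_iff.2 fun c => condP_nonneg _ _ _
  filter_upwards [h1, h2, h3] with ω h1 h2 h3
  rw [h1, Finset.sum_apply] at h2
  exact le_trans (le_of_eq (Finset.sum_congr rfl fun c _ => abs_of_nonneg (h3 c))) h2

lemma condP_abs_le (hX : ∀ i, Measurable (X i)) {A : ℕ → Set Ω} (q t : ℕ)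
    (hA : MeasurableSet[MeasurableSpace.comap (X t) inferInstance] (A t)) :
    ∀ᵐ ω ∂P, |condP P X A q t ω| ≤ 1 := by
  have := sum_condP_le (P := P) (ι := Unit) hX (A := fun _ => A) q t (fun _ => hA)
    (fun i j hij => (hij (Subsingleton.elim _ _)).elim)
  simpa using this

lemma integral_condP (hX : ∀ i, Measurable (X i)) {A : ℕ → Set Ω} (q t : ℕ)
    (hA : MeasurableSet[MeasurableSpace.comap (X t) inferInstance] (A t)) :
    ∫ ω, condP P X A q t ω ∂P = P.real (A t) := by
  rw [condP, integral_condExp (sigmaLE_le hX _), integral_indicator_one (meas_of_comap hX hA)]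

lemma integral_condP_mul_condP (hX : ∀ i, Measurable (X i)) {A : ℕ → Set Ω} (q : ℕ) {t t' : ℕ}
    (htt : t' ≤ t) (hA : ∀ t : ℕ, MeasurableSet[MeasurableSpace.comap (X t) inferInstance] (A t)) :
    ∫ ω, (condP P X A q t' ω - P.real (A t')) * (condP P X A q t ω - P.real (A t)) ∂P
      = ∫ ω, condP P X A q t' ω * (A t).indicator 1 ω ∂P
        - (∫ ω, condP P X A q t' ω ∂P) * P.real (A t) := by
  have hb := condP_abs_le (P := P) hX q t' (hA t')
  have hsm := condP_sm (P := P) (X := X) A q t' (p := (t : ℤ) - q) (by omega)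
  have hsm' := (hsm.mono (sigmaLE_le hX _)).aestronglyMeasurable (μ := P)
  have hi : Integrable ((A t).indicator (1 : Ω → ℝ)) P :=
    (integrable_const (1 : ℝ)).indicator (meas_of_comap hX (hA t))
  have hci : ∀ t, Integrable (condP P X A q t) P := fun t => integrable_condExp
  have hprod : Integrable (fun ω => condP P X A q t' ω * condP P X A q t ω) P :=
    (hci t).bdd_mul hsm' (by simpa using hb)
  rw [integral_mul_condExp_eq (sigmaLE_le hX _) hsm hb hi]
  change _ = ∫ ω, condP P X A q t' ω * condP P X A q t ω ∂P - _
  have e : ∀ ω, (condP P X A q t' ω - P.real (A t')) * (condP P X A q t ω - P.real (A t))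
      = condP P X A q t' ω * condP P X A q t ω - condP P X A q t' ω * P.real (A t)
        - (P.real (A t') * condP P X A q t ω - P.real (A t') * P.real (A t)) := fun ω => by ring
  simp only [e]
  have i1 : Integrable (fun ω => condP P X A q t' ω * condP P X A q t ω
      - condP P X A q t' ω * P.real (A t)) P := hprod.sub ((hci t').mul_const _)
  have i2 : Integrable (fun ω => P.real (A t') * condP P X A q t ω
      - P.real (A t') * P.real (A t)) P := ((hci t).const_mul _).sub (integrable_const _)
  rw [integral_sub i1 i2, integral_sub hprod ((hci t').mul_const _),
    integral_sub ((hci t).const_mul _) (integrable_const _), integral_mul_const,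
    integral_const_mul, integral_condP hX q t (hA t)]
  simp

/-- Second moment of the predictable parts, summed over disjoint cells. -/
lemma sum_integral_sq_le {ι : Type*} [Fintype ι] [DecidableEq ι] (hX : ∀ i, Measurable (X i))
    {A : ι → ℕ → Set Ω} {q : ℕ} (hq : 1 ≤ q)
    (hA : ∀ c (t : ℕ), MeasurableSet[MeasurableSpace.comap (X t) inferInstance] (A c t))
    (hdisj : ∀ t, Pairwise (Function.onFun Disjoint fun c => A c t)) {γ : ℕ → ℝ}
    (hγ : ∀ r, 1 ≤ r → alphaMix P X r ≤ γ r) (T : Finset ℕ) :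
    ∑ c, ∫ ω, (∑ t ∈ T, (condP P X (A c) q t ω - P.real (A c t))) ^ 2 ∂P
      ≤ ∑ t ∈ T, ∑ t' ∈ T, 4 * γ (q + ((t - t') + (t' - t))) := by
  have hsmA : ∀ c t, AEStronglyMeasurable (condP P X (A c) q t) P := fun c t =>
    ((condP_sm (P := P) (X := X) (A c) q t le_rfl).mono (sigmaLE_le hX _)).aestronglyMeasurable
  have hprodInt : ∀ c t t', Integrable (fun ω => (condP P X (A c) q t ω - P.real (A c t)) *
      (condP P X (A c) q t' ω - P.real (A c t'))) P := by
    intro c t t'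
    have h1 : Integrable (fun ω => condP P X (A c) q t' ω - P.real (A c t')) P :=
      integrable_condExp.sub (integrable_const _)
    refine h1.bdd_mul ((hsmA c t).sub aestronglyMeasurable_const) (c := 2) ?_
    filter_upwards [condP_abs_le (P := P) hX q t (hA c t)] with ω h
    have h2 : P.real (A c t) ≤ 1 := measureReal_le_one
    have h3 : 0 ≤ P.real (A c t) := measureReal_nonneg
    rw [Real.norm_eq_abs]
    refine (abs_sub _ _).trans ?_
    rw [abs_of_nonneg h3]; linarith
  have key : ∀ t t', t' ≤ t → ∑ c, ∫ ω, (condP P X (A c) q t' ω - P.real (A c t')) *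
      (condP P X (A c) q t ω - P.real (A c t)) ∂P ≤ 4 * γ (q + (t - t')) := by
    intro t t' htt
    simp only [fun c => integral_condP_mul_condP (P := P) hX q htt (hA c)]
    have hm' : MeasurableSpace.comap (X t) inferInstance ≤ ‹MeasurableSpace Ω› := (hX t).comap_le
    refine (sum_cov_le (sigmaLE_le hX ((t' : ℤ) - q)) hm' (γ := alphaMix P X (q + (t - t')))
      (fun c => condP_sm (P := P) (X := X) (A c) q t' le_rfl)
      (sum_condP_le hX q t' (fun c => hA c t') (hdisj t'))
      (fun c => hA c t) (hdisj t) ?_).trans ?_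
    · intro A B hA hB
      refine abs_cov_le_alphaMix P X _ ((t' : ℤ) - q) hA (comap_le_sigmaGE X ?_ _ hB)
      push_cast [htt]; linarith
    · have := hγ (q + (t - t')) (by omega)
      linarith
  calc ∑ c, ∫ ω, (∑ t ∈ T, (condP P X (A c) q t ω - P.real (A c t))) ^ 2 ∂P
      = ∑ c, ∑ t ∈ T, ∑ t' ∈ T, ∫ ω, (condP P X (A c) q t ω - P.real (A c t)) *
          (condP P X (A c) q t' ω - P.real (A c t')) ∂P := by
        refine Finset.sum_congr rfl fun c _ => ?_
        simp only [sq, Finset.sum_mul_sum]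
        rw [integral_finsetSum _ fun t _ => integrable_finsetSum _ fun t' _ => hprodInt c t t']
        exact Finset.sum_congr rfl fun t _ => integral_finsetSum _ fun t' _ => hprodInt c t t'
    _ = ∑ t ∈ T, ∑ t' ∈ T, ∑ c, ∫ ω, (condP P X (A c) q t ω - P.real (A c t)) *
          (condP P X (A c) q t' ω - P.real (A c t')) ∂P := by
        rw [Finset.sum_comm]
        exact Finset.sum_congr rfl fun t _ => Finset.sum_comm
    _ ≤ _ := by
        refine Finset.sum_le_sum fun t _ => Finset.sum_le_sum fun t' _ => ?_
        rcases le_total t' t with h | h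
        · have := key t t' h
          simp only [mul_comm (condP P X (A _) q t' _ - _)] at this
          rwa [Nat.sub_eq_zero_of_le h, add_zero]
        · have := key t' t h
          rwa [Nat.sub_eq_zero_of_le h, zero_add]

/-- Exponential inequality along times that are pairwise congruent modulo `q`. -/
lemma integral_prod_exp_le (hX : ∀ i, Measurable (X i)) {A : ℕ → Set Ω} (q : ℕ)
    (hA : ∀ t : ℕ, MeasurableSet[MeasurableSpace.comap (X t) inferInstance] (A t)) (h : ℝ)
    (s : Finset ℕ) (hs : ∀ t ∈ s, ∀ t' ∈ s, t % q = t' % q) :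
    Integrable (fun ω => ∏ t ∈ s, Real.exp (h * (A t).indicator 1 ω
        - (Real.exp h - 1) * condP P X A q t ω)) P ∧
    ∫ ω, ∏ t ∈ s, Real.exp (h * (A t).indicator 1 ω
        - (Real.exp h - 1) * condP P X A q t ω) ∂P ≤ 1 := by
  set f : ℕ → Ω → ℝ := fun t ω => Real.exp (h * (A t).indicator 1 ω
        - (Real.exp h - 1) * condP P X A q t ω) with hf
  set θ := Real.exp h - 1 with hθ
  set M := Real.exp (|h| + |θ|) with hM
  have hfb : ∀ t, ∀ᵐ ω ∂P, |f t ω| ≤ M := by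
    intro t
    filter_upwards [condP_abs_le (P := P) hX q t (hA t)] with ω hω
    rw [hf]; simp only [Real.abs_exp]
    refine Real.exp_le_exp.2 ?_
    have h1 : h * (A t).indicator 1 ω ≤ |h| := by
      by_cases hm : ω ∈ A t
      · simpa [hm] using le_abs_self h
      · simp [hm]
    have h2 : -(θ * condP P X A q t ω) ≤ |θ| := by
      refine (neg_le_abs _).trans ?_
      rw [abs_mul]; exact mul_le_of_le_one_right (abs_nonneg _) hω
    linarith
  have hfsm : ∀ (t : ℕ) (p : ℤ), (t : ℤ) ≤ p → StronglyMeasurable[sigmaLE X p] (f t) := by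
    intro t p htp
    have h1 : Measurable[sigmaLE X p] ((A t).indicator (1 : Ω → ℝ)) :=
      Measurable.indicator (m := sigmaLE X p) (@measurable_const _ _ _ (sigmaLE X p) (1 : ℝ))
        (comap_le_sigmaLE X htp _ (hA t))
    have h2 := (condP_sm (P := P) (X := X) A q t (p := p) (by omega)).measurable
    exact (Real.measurable_exp.comp ((h1.const_mul h).sub (h2.const_mul θ))).stronglyMeasurable
  have hpb : ∀ s : Finset ℕ, ∀ᵐ ω ∂P, |∏ t ∈ s, f t ω| ≤ M ^ s.card := by
    intro s
    have : ∀ᵐ ω ∂P, ∀ t, |f t ω| ≤ M := ae_all_iff.2 hfb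
    filter_upwards [this] with ω hω
    rw [Finset.abs_prod]
    refine (Finset.prod_le_prod (fun t _ => abs_nonneg _) fun t _ => hω t).trans ?_
    simp
  have hpm : ∀ (s : Finset ℕ) (p : ℤ), (∀ t ∈ s, (t : ℤ) ≤ p) →
      StronglyMeasurable[sigmaLE X p] (fun ω => ∏ t ∈ s, f t ω) := fun s p hsp =>
    Finset.stronglyMeasurable_fun_prod _ fun t ht => hfsm t p (hsp t ht)
  have hpi : ∀ s : Finset ℕ, Integrable (fun ω => ∏ t ∈ s, f t ω) P := by
    intro s
    refine Integrable.of_bound (C := M ^ s.card) ?_ (hpb s)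
    refine ((hpm s ((s.sup id : ℕ) : ℤ) ?_).mono (sigmaLE_le hX _)).aestronglyMeasurable
    exact fun t ht => by exact_mod_cast Finset.le_sup (f := id) ht
  refine ⟨hpi s, ?_⟩
  induction s using Finset.induction_on_max with
  | empty => simp
  | insert a s hmax ih =>
    have ha : a ∉ s := fun h => lt_irrefl _ (hmax a h)
    have ih := ih fun t ht t' ht' =>
      hs t (Finset.mem_insert_of_mem ht) t' (Finset.mem_insert_of_mem ht')
    have hgap : ∀ t ∈ s, (t : ℤ) ≤ (a : ℤ) - q := by
      intro t ht
      have h1 := hs t (Finset.mem_insert_of_mem ht) a (Finset.mem_insert_self _ _)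
      have h2 := hmax t ht
      have h3 : q ∣ a - t := (Nat.modEq_iff_dvd' h2.le).1 h1
      have h4 := Nat.le_of_dvd (by omega) h3
      omega
    refine le_trans ?_ ih
    set W : Ω → ℝ := fun ω => ∏ t ∈ s, f t ω with hW
    set m := condP P X A q a with hm
    set V : Ω → ℝ := fun ω => W ω * Real.exp (-(θ * m ω)) with hV
    have hmsm : StronglyMeasurable[sigmaLE X ((a : ℤ) - q)] m := condP_sm A q a le_rfl
    have hVsm : StronglyMeasurable[sigmaLE X ((a : ℤ) - q)] V :=
      (hpm s _ hgap).mul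
        (Real.measurable_exp.comp (hmsm.measurable.const_mul θ).neg).stronglyMeasurable
    have hmb := condP_abs_le (P := P) hX q a (hA a)
    have hVb : ∀ᵐ ω ∂P, |V ω| ≤ M ^ s.card * Real.exp |θ| := by
      filter_upwards [hpb s, hmb] with ω h1 h2
      rw [hV]; simp only [abs_mul, Real.abs_exp]
      refine mul_le_mul h1 (Real.exp_le_exp.2 ?_) (Real.exp_pos _).le ((abs_nonneg _).trans h1)
      refine (neg_le_abs _).trans ?_
      rw [abs_mul]; exact mul_le_of_le_one_right (abs_nonneg _) h2
    have hVi : Integrable V P :=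
      Integrable.of_bound (hVsm.mono (sigmaLE_le hX _)).aestronglyMeasurable _
        (by simpa using hVb)
    have hAi : Integrable ((A a).indicator (1 : Ω → ℝ)) P :=
      (integrable_const (1 : ℝ)).indicator (meas_of_comap hX (hA a))
    have hmi : Integrable m P := integrable_condExp
    have hVsm' := (hVsm.mono (sigmaLE_le hX _)).aestronglyMeasurable (μ := P)
    have hVA : Integrable (fun ω => V ω * (A a).indicator 1 ω) P :=
      hAi.bdd_mul hVsm' (by simpa using hVb)
    have hVm : Integrable (fun ω => V ω * m ω) P := hmi.bdd_mul hVsm' (by simpa using hVb)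
    calc ∫ ω, ∏ t ∈ insert a s, f t ω ∂P
        = ∫ ω, (V ω + θ * (V ω * (A a).indicator 1 ω)) ∂P := by
          refine integral_congr_ae (ae_of_all _ fun ω => ?_)
          simp only [Finset.prod_insert ha]
          have hfa : f a ω = Real.exp (h * (A a).indicator 1 ω) * Real.exp (-(θ * m ω)) := by
            rw [← Real.exp_add, ← sub_eq_add_neg]
          have : Real.exp (h * (A a).indicator 1 ω) = 1 + θ * (A a).indicator 1 ω := by
            by_cases hω : ω ∈ A a <;> simp [hω, hθ]
          change f a ω * W ω = W ω * Real.exp (-(θ * m ω))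
            + θ * (W ω * Real.exp (-(θ * m ω)) * (A a).indicator 1 ω)
          rw [hfa, this]
          ring
      _ = ∫ ω, V ω ∂P + θ * ∫ ω, V ω * m ω ∂P := by
          rw [integral_add hVi (hVA.const_mul _), integral_const_mul,
            integral_mul_condExp_eq (sigmaLE_le hX _) hVsm hVb hAi]
          rfl
      _ = ∫ ω, (V ω + θ * (V ω * m ω)) ∂P := by
          rw [integral_add hVi (hVm.const_mul _), integral_const_mul]
      _ ≤ ∫ ω, W ω ∂P := by
          refine integral_mono (hVi.add (hVm.const_mul _)) (hpi s) fun ω => ?_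
          have hW0 : 0 ≤ W ω := Finset.prod_nonneg fun t _ => (Real.exp_pos _).le
          have h1 := Real.add_one_le_exp (θ * m ω)
          have h2 : Real.exp (-(θ * m ω)) * Real.exp (θ * m ω) = 1 := by
            rw [← Real.exp_add]; simp
          calc V ω + θ * (V ω * m ω)
              = W ω * (Real.exp (-(θ * m ω)) * (θ * m ω + 1)) := by rw [hV]; ring
            _ ≤ W ω * (Real.exp (-(θ * m ω)) * Real.exp (θ * m ω)) := by gcongr
            _ = W ω := by rw [h2, mul_one]

/-- Maximal inequality over disjoint cells. The first term controls the predictable part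
`∑ (condP - P.real)` in mean square, summed over cells; the second one is an exponential bound
for the `q` martingales obtained by splitting time according to residues modulo `q`. -/
lemma core_maximal {ι : Type*} [Fintype ι] [DecidableEq ι] (hX : ∀ i, Measurable (X i))
    {A : ι → ℕ → Set Ω} {q : ℕ} (hq : 1 ≤ q)
    (hA : ∀ c (t : ℕ), MeasurableSet[MeasurableSpace.comap (X t) inferInstance] (A c t))
    (hdisj : ∀ t, Pairwise (Function.onFun Disjoint fun c => A c t)) {γ : ℕ → ℝ}
    (hγ : ∀ r, 1 ≤ r → alphaMix P X r ≤ γ r) (T : Finset ℕ) {lm V h : ℝ} (hlm : 0 < lm)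
    (hV : ∀ c, ∑ t ∈ T, P.real (A c t) + lm ≤ V) (h0 : 0 < h) (h1 : h ≤ 1) :
    P.real {ω | ∃ c, 2 * lm < |∑ t ∈ T, ((A c t).indicator 1 ω - P.real (A c t))|}
      ≤ (∑ t ∈ T, ∑ t' ∈ T, 4 * γ (q + ((t - t') + (t' - t)))) / lm ^ 2
        + 2 * q * Fintype.card ι * Real.exp (-(h * lm / q) + h ^ 2 * V) := by
  have hq0 : (0 : ℝ) < q := by exact_mod_cast hq
  set η : ι → Ω → ℝ := fun c ω => ∑ t ∈ T, (condP P X (A c) q t ω - P.real (A c t)) with hη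
  set y := h * lm / q - h ^ 2 * V with hy
  set S : ℕ → Finset ℕ := fun r => T.filter (fun t => t % q = r) with hS
  set G : ℝ → ι → ℕ → Ω → ℝ := fun h c r ω => ∏ t ∈ S r, Real.exp (h * (A c t).indicator 1 ω
        - (Real.exp h - 1) * condP P X (A c) q t ω) with hG
  have hGi : ∀ h c r, Integrable (G h c r) P ∧ ∫ ω, G h c r ω ∂P ≤ 1 := fun h c r =>
    integral_prod_exp_le hX q (hA c) h (S r) (fun t ht t' ht' => by
      rw [(Finset.mem_filter.1 ht).2, (Finset.mem_filter.1 ht').2])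
  have hGP : ∀ h c r, P.real {ω | Real.exp y ≤ G h c r ω} ≤ Real.exp (-y) := by
    intro h c r
    have := mul_meas_ge_le_integral_of_nonneg (μ := P) (f := G h c r)
      (ae_of_all _ fun ω => Finset.prod_nonneg fun t _ => (Real.exp_pos _).le) (hGi h c r).1
      (Real.exp y)
    rw [Real.exp_neg, ← one_div, le_div_iff₀ (Real.exp_pos _), mul_comm]
    exact this.trans (hGi h c r).2
  have hηi : ∀ c, Integrable (fun ω => η c ω ^ 2) P := by
    intro c
    have hb : ∀ᵐ ω ∂P, ∀ t, |condP P X (A c) q t ω| ≤ 1 :=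
      ae_all_iff.2 fun t => condP_abs_le (P := P) hX q t (hA c t)
    have hm : AEStronglyMeasurable (η c) P :=
      Finset.aestronglyMeasurable_fun_sum _ fun t _ =>
        (((condP_sm (P := P) (X := X) (A c) q t le_rfl).mono
          (sigmaLE_le hX _)).aestronglyMeasurable).sub aestronglyMeasurable_const
    refine Integrable.of_bound (hm.pow 2) ((T.card * 2 : ℝ) ^ 2) ?_
    filter_upwards [hb] with ω hω
    rw [norm_pow, Real.norm_eq_abs]
    refine pow_le_pow_left₀ (abs_nonneg _) ?_ 2
    refine (Finset.abs_sum_le_sum_abs _ _).trans ?_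
    rw [← nsmul_eq_mul]
    refine Finset.sum_le_card_nsmul _ _ _ fun t _ => ?_
    have h2 : P.real (A c t) ≤ 1 := measureReal_le_one
    have h3 : 0 ≤ P.real (A c t) := measureReal_nonneg
    refine (abs_sub _ _).trans ?_
    rw [abs_of_nonneg h3]; linarith [hω t]
  have hE : P.real {ω | lm ^ 2 ≤ ∑ c, η c ω ^ 2}
      ≤ (∑ t ∈ T, ∑ t' ∈ T, 4 * γ (q + ((t - t') + (t' - t)))) / lm ^ 2 := by
    rw [le_div_iff₀ (by positivity), mul_comm]
    refine (mul_meas_ge_le_integral_of_nonneg (μ := P) (f := fun ω => ∑ c, η c ω ^ 2)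
      (ae_of_all _ fun ω => Finset.sum_nonneg fun c _ => sq_nonneg _)
      (integrable_finsetSum _ fun c _ => hηi c) (lm ^ 2)).trans ?_
    rw [integral_finsetSum _ fun c _ => hηi c]
    exact sum_integral_sq_le hX hq hA hdisj hγ T
  have hsub : ({ω | ∃ c, 2 * lm < |∑ t ∈ T, ((A c t).indicator 1 ω - P.real (A c t))|} : Set Ω)
      ≤ᵐ[P] ({ω | lm ^ 2 ≤ ∑ c, η c ω ^ 2} ∪ ⋃ c ∈ (Finset.univ : Finset ι),
        ⋃ r ∈ Finset.range q, ({ω | Real.exp y ≤ G h c r ω} ∪ {ω | Real.exp y ≤ G (-h) c r ω})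
          : Set Ω) := by
    have hnn : ∀ᵐ ω ∂P, ∀ c t, 0 ≤ condP P X (A c) q t ω :=
      ae_all_iff.2 fun c => ae_all_iff.2 fun t => condP_nonneg _ _ _
    filter_upwards [hnn] with ω hω
    rintro ⟨c, hc⟩
    by_cases hcase : lm ^ 2 ≤ ∑ c, η c ω ^ 2
    · exact Or.inl hcase
    right
    push Not at hcase
    have hηc : |η c ω| ≤ lm := by
      refine abs_le_of_sq_le_sq ?_ hlm.le
      exact (Finset.single_le_sum (f := fun c => η c ω ^ 2) (fun _ _ => sq_nonneg _)
        (Finset.mem_univ c)).trans hcase.le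
    have hdec : ∑ t ∈ T, ((A c t).indicator 1 ω - P.real (A c t))
        = ∑ t ∈ T, ((A c t).indicator 1 ω - condP P X (A c) q t ω) + η c ω := by
      rw [hη, ← Finset.sum_add_distrib]
      exact Finset.sum_congr rfl fun t _ => by ring
    have hbig : lm < |∑ t ∈ T, ((A c t).indicator 1 ω - condP P X (A c) q t ω)| := by
      rw [hdec] at hc
      have := abs_add_le (∑ t ∈ T, ((A c t).indicator 1 ω - condP P X (A c) q t ω)) (η c ω)
      linarith
    have hmaps : ∀ t ∈ T, t % q ∈ Finset.range q := fun t _ =>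
      Finset.mem_range.2 (Nat.mod_lt _ hq)
    rw [← Finset.sum_fiberwise_of_maps_to hmaps] at hbig
    obtain ⟨r, hr, hrb⟩ : ∃ r ∈ Finset.range q,
        lm / q < |∑ t ∈ S r, ((A c t).indicator 1 ω - condP P X (A c) q t ω)| := by
      by_contra hcon
      push Not at hcon
      have h2 := (Finset.abs_sum_le_sum_abs _ _).trans (Finset.sum_le_card_nsmul _ _ _ hcon)
      rw [Finset.card_range, nsmul_eq_mul, mul_div_cancel₀ _ hq0.ne'] at h2
      exact absurd hbig (not_lt.2 h2)
    have hmV : ∑ t ∈ S r, condP P X (A c) q t ω ≤ V := by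
      have h2 : ∑ t ∈ S r, condP P X (A c) q t ω ≤ ∑ t ∈ T, condP P X (A c) q t ω :=
        Finset.sum_le_sum_of_subset_of_nonneg (Finset.filter_subset _ _) fun t _ _ => hω c t
      have h3 : ∑ t ∈ T, condP P X (A c) q t ω = ∑ t ∈ T, P.real (A c t) + η c ω := by
        rw [hη, ← Finset.sum_add_distrib]
        exact Finset.sum_congr rfl fun t _ => by ring
      linarith [hV c, le_abs_self (η c ω)]
    have hm0 : 0 ≤ ∑ t ∈ S r, condP P X (A c) q t ω := Finset.sum_nonneg fun t _ => hω c t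
    -- lower bound of the exponent of `G h'` for `h' = h` and `h' = -h`
    have hGlow : ∀ h' : ℝ, h' ^ 2 = h ^ 2 →
        h * lm / q ≤ h' * ∑ t ∈ S r, ((A c t).indicator 1 ω - condP P X (A c) q t ω) →
        Real.exp y ≤ G h' c r ω := by
      intro h' hh' hlow
      rw [hG]
      simp only
      rw [← Real.exp_sum, Real.exp_le_exp]
      have habs : |h'| ≤ 1 := abs_le_one_iff_mul_self_le_one.2 (by nlinarith)
      have h4 := (abs_le.1 (Real.abs_exp_sub_one_sub_id_le habs)).2
      have e : ∑ t ∈ S r, (h' * (A c t).indicator 1 ω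
          - (Real.exp h' - 1) * condP P X (A c) q t ω)
          = h' * ∑ t ∈ S r, ((A c t).indicator 1 ω - condP P X (A c) q t ω)
            - (Real.exp h' - 1 - h') * ∑ t ∈ S r, condP P X (A c) q t ω := by
        simp only [Finset.mul_sum, ← Finset.sum_sub_distrib]
        exact Finset.sum_congr rfl fun t _ => by ring
      rw [e, hy]
      have h5 : (Real.exp h' - 1 - h') * ∑ t ∈ S r, condP P X (A c) q t ω ≤ h ^ 2 * V := by
        rw [← hh']
        exact mul_le_mul h4 hmV hm0 (sq_nonneg _)
      linarith
    refine Set.mem_biUnion (Finset.mem_univ c) (Set.mem_biUnion hr ?_)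
    have hdiv : h * lm / q = h * (lm / q) := by ring
    rcases lt_abs.1 hrb with h2 | h2
    · left
      refine hGlow h rfl ?_
      rw [hdiv]; gcongr
    · right
      refine hGlow (-h) (by ring) ?_
      rw [hdiv, neg_mul, ← mul_neg]; gcongr
  have hmono : P.real {ω | ∃ c, 2 * lm < |∑ t ∈ T, ((A c t).indicator 1 ω - P.real (A c t))|}
      ≤ P.real ({ω | lm ^ 2 ≤ ∑ c, η c ω ^ 2} ∪ ⋃ c ∈ (Finset.univ : Finset ι),
        ⋃ r ∈ Finset.range q, ({ω | Real.exp y ≤ G h c r ω} ∪ {ω | Real.exp y ≤ G (-h) c r ω})) :=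
    ENNReal.toReal_mono (measure_ne_top _ _) (measure_mono_ae hsub)
  refine hmono.trans ((measureReal_union_le _ _).trans (add_le_add hE ?_))
  have hyy : -(h * lm / q) + h ^ 2 * V = -y := by rw [hy]; ring
  rw [hyy]
  calc P.real (⋃ c ∈ (Finset.univ : Finset ι), ⋃ r ∈ Finset.range q,
        ({ω | Real.exp y ≤ G h c r ω} ∪ {ω | Real.exp y ≤ G (-h) c r ω}))
      ≤ ∑ c : ι, ∑ r ∈ Finset.range q, (Real.exp (-y) + Real.exp (-y)) := by
        refine (measureReal_biUnion_finset_le _ _).trans (Finset.sum_le_sum fun c _ => ?_)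
        refine (measureReal_biUnion_finset_le _ _).trans (Finset.sum_le_sum fun r _ => ?_)
        exact (measureReal_union_le _ _).trans (add_le_add (hGP _ _ _) (hGP _ _ _))
    _ = 2 * q * Fintype.card ι * Real.exp (-y) := by
        simp; ring

end core

/-! ### Summing the mixing coefficients -/

lemma sum_abs_diff_le {g : ℕ → ℝ} (hg : ∀ k, 0 ≤ g k) (hs : Summable g) (T : Finset ℕ) (t : ℕ) :
    ∑ t' ∈ T, g ((t - t') + (t' - t)) ≤ 2 * ∑' k, g k := by
  classical
  have aux : ∀ (S : Finset ℕ) (e : ℕ → ℕ), Set.InjOn e S → ∑ t' ∈ S, g (e t') ≤ ∑' k, g k := by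
    intro S e he
    rw [← Finset.sum_image (f := g) he]
    exact hs.sum_le_tsum _ fun k _ => hg k
  rw [← Finset.sum_filter_add_sum_filter_not T (fun t' => t' ≤ t), two_mul]
  refine add_le_add (aux _ _ ?_) (aux _ _ ?_)
  · intro x hx y hy hxy
    simp only [Finset.coe_filter, Set.mem_setOf_eq] at hx hy hxy
    omega
  · intro x hx y hy hxy
    simp only [Finset.coe_filter, Set.mem_setOf_eq] at hx hy hxy
    omega

lemma exists_mixing_sum_bound {a : ℝ} (ha : 1 < a) {C : ℝ} (hC : 0 ≤ C) :
    ∃ Cm : ℝ, 0 ≤ Cm ∧ ∀ n q : ℕ, 1 ≤ q →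
      ∑ t ∈ Finset.Icc 1 n, ∑ t' ∈ Finset.Icc 1 n,
        4 * (C * ((q + ((t - t') + (t' - t)) : ℕ) : ℝ) ^ (-a))
        ≤ n * (Cm * (q : ℝ) ^ (-((a - 1) / 2))) := by
  set κ := (a - 1) / 2 with hκ
  have hκ0 : 0 < κ := by rw [hκ]; linarith
  set f : ℕ → ℝ := fun k => ((k + 1 : ℕ) : ℝ) ^ (-(1 + κ)) with hf
  have hfs : Summable f :=
    (summable_nat_add_iff (f := fun k : ℕ => (k : ℝ) ^ (-(1 + κ))) 1).2
      (Real.summable_nat_rpow.2 (by linarith))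
  have hf0 : ∀ k, 0 ≤ f k := fun k => by rw [hf]; positivity
  refine ⟨8 * C * ∑' k, f k, mul_nonneg (by positivity) (tsum_nonneg hf0), fun n q hq => ?_⟩
  have hq0 : (0 : ℝ) < q := by exact_mod_cast hq
  have hterm : ∀ k : ℕ, 4 * (C * ((q + k : ℕ) : ℝ) ^ (-a)) ≤ 4 * C * (q : ℝ) ^ (-κ) * f k := by
    intro k
    have hk : (0 : ℝ) < ((q + k : ℕ) : ℝ) := by exact_mod_cast (by omega : 0 < q + k)
    have e : ((q + k : ℕ) : ℝ) ^ (-a) = ((q + k : ℕ) : ℝ) ^ (-κ) * ((q + k : ℕ) : ℝ) ^ (-(1 + κ)) := by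
      rw [← Real.rpow_add hk]; congr 1; rw [hκ]; ring
    have h1 : ((q + k : ℕ) : ℝ) ^ (-κ) ≤ (q : ℝ) ^ (-κ) :=
      Real.rpow_le_rpow_of_nonpos hq0 (by exact_mod_cast Nat.le_add_right q k) (by linarith)
    have h2 : ((q + k : ℕ) : ℝ) ^ (-(1 + κ)) ≤ f k :=
      Real.rpow_le_rpow_of_nonpos (by positivity)
        (by exact_mod_cast (by omega : k + 1 ≤ q + k)) (by linarith)
    rw [e]
    have := mul_le_mul h1 h2 (by positivity) (by positivity)
    nlinarith
  have hin : ∀ t ∈ Finset.Icc 1 n, ∑ t' ∈ Finset.Icc 1 n,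
      4 * (C * ((q + ((t - t') + (t' - t)) : ℕ) : ℝ) ^ (-a))
      ≤ 8 * C * (∑' k, f k) * (q : ℝ) ^ (-κ) := by
    intro t _
    refine (Finset.sum_le_sum fun t' _ => hterm _).trans ?_
    rw [← Finset.mul_sum]
    have := mul_le_mul_of_nonneg_left (sum_abs_diff_le hf0 hfs (Finset.Icc 1 n) t)
      (show 0 ≤ 4 * C * (q : ℝ) ^ (-κ) by positivity)
    refine this.trans (le_of_eq (by ring))
  refine (Finset.sum_le_card_nsmul _ _ _ hin).trans (le_of_eq ?_)
  rw [Nat.card_Icc, nsmul_eq_mul]; simp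

/-! ### Dyadic chaining on a lattice -/

/-- `φ` is a combination, with coefficients in `[-1, 1]`, of indicators of dyadic intervals, one
interval of length `2 ^ m` for each `m ≤ L` at most; no interval is longer than `2 ^ m0`. -/
def IsChain (L m0 : ℕ) (φ : ℕ → ℝ) : Prop :=
  ∃ (b : ℕ → ℝ) (c : ℕ → ℕ), (∀ m, |b m| ≤ 1) ∧ (∀ m, m0 < m → b m = 0) ∧
    ∀ w, φ w = ∑ m ∈ Finset.range (L + 1), b m * (if w / 2 ^ m = c m then 1 else 0)

/-- Binary expansion of `x` read as a dyadic decomposition of `[0, x)`: the interval of length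
`2 ^ m` just below `x / 2 ^ m` is used when that number is odd. -/
lemma lt_indicator_expand (x w M : ℕ) :
    (if w < x then (1 : ℝ) else 0) =
      ∑ m ∈ Finset.range M, (if x / 2 ^ m % 2 = 1 then (1 : ℝ) else 0) *
          (if w / 2 ^ m = x / 2 ^ m - 1 then 1 else 0)
        + (if w / 2 ^ M < x / 2 ^ M then 1 else 0) := by
  have step : ∀ a b : ℕ, (if a < b then (1 : ℝ) else 0) =
      (if b % 2 = 1 then (1 : ℝ) else 0) * (if a = b - 1 then 1 else 0)
        + (if a / 2 < b / 2 then 1 else 0) := by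
    intro a b
    split_ifs <;> first | (exfalso; omega) | norm_num
  induction M with
  | zero => simp
  | succ M ih =>
    rw [Finset.sum_range_succ, ih, step (w / 2 ^ M) (x / 2 ^ M), Nat.div_div_eq_div_mul,
      Nat.div_div_eq_div_mul, ← pow_succ]
    ring

lemma isChain_prefix {L m0 : ℕ} (hm : m0 ≤ L + 1) (x : ℕ) {e : ℝ} (he : |e| ≤ 1) :
    IsChain L m0 (fun w => e * ∑ m ∈ Finset.range m0, (if x / 2 ^ m % 2 = 1 then (1 : ℝ) else 0) *
          (if w / 2 ^ m = x / 2 ^ m - 1 then 1 else 0)) := by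
  refine ⟨fun m => if m < m0 then e * (if x / 2 ^ m % 2 = 1 then (1 : ℝ) else 0) else 0,
    fun m => x / 2 ^ m - 1, ?_, ?_, ?_⟩
  · intro m
    simp only
    split_ifs <;> simp [he]
  · intro m hm
    simp only [if_neg (by omega : ¬ m < m0)]
  · intro w
    simp only [Finset.mul_sum]
    have hsub : Finset.range m0 ⊆ Finset.range (L + 1) := Finset.range_subset_range.2 hm
    rw [← Finset.sum_subset hsub]
    · refine Finset.sum_congr rfl fun m hm => ?_
      rw [if_pos (Finset.mem_range.1 hm), mul_assoc]
    · intro m _ hm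
      rw [if_neg (by simpa using hm), zero_mul]

lemma isChain_lt {L x : ℕ} (hx : x < 2 ^ (L + 1)) :
    IsChain L (L + 1) (fun w => if w < x then (1 : ℝ) else 0) := by
  have h := isChain_prefix (L := L) (m0 := L + 1) le_rfl x (e := 1) (by simp)
  convert h using 2 with w
  rw [lt_indicator_expand x w (L + 1), Nat.div_eq_of_lt hx]
  simp

lemma isChain_single {L m0 : ℕ} (hm : m0 ≤ L) (c : ℕ) {e : ℝ} (he : |e| ≤ 1) :
    IsChain L m0 (fun w => e * if w / 2 ^ m0 = c then 1 else 0) := by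
  refine ⟨fun m => if m = m0 then e else 0, fun _ => c, fun m => ?_, fun m hm => ?_, fun w => ?_⟩
  · simp only
    split_ifs <;> simp [he]
  · simp only [if_neg (by omega : ¬ m = m0)]
  · rw [Finset.sum_eq_single_of_mem m0 (Finset.mem_range.2 (by omega))
      (fun m _ hm => by simp only [if_neg hm, zero_mul])]
    simp only [if_pos]

lemma exists_chain_diff_of_le {L m0 x y : ℕ} (hm : m0 ≤ L) (hyx : y ≤ x) (hxy : x ≤ y + 2 ^ m0)
    {e : ℝ} (he : |e| ≤ 1) :
    ∃ φ₁ φ₂ φ₃ : ℕ → ℝ, IsChain L m0 φ₁ ∧ IsChain L m0 φ₂ ∧ IsChain L m0 φ₃ ∧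
      ∀ w, e * ((if w < x then (1 : ℝ) else 0) - (if w < y then 1 else 0))
        = φ₁ w + φ₂ w + φ₃ w := by
  have h1 : y / 2 ^ m0 ≤ x / 2 ^ m0 := Nat.div_le_div_right hyx
  have h2 : x / 2 ^ m0 ≤ y / 2 ^ m0 + 1 := by
    have := Nat.div_le_div_right (c := 2 ^ m0) hxy
    rwa [Nat.add_div_right _ (by positivity)] at this
  refine ⟨_, _, _, isChain_prefix (by omega) x he,
    isChain_prefix (by omega) y (e := -e) (by simpa using he),
    isChain_single hm (y / 2 ^ m0) (e := if y / 2 ^ m0 < x / 2 ^ m0 then e else 0) ?_, ?_⟩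
  · split_ifs <;> simp [he]
  · intro w
    rw [lt_indicator_expand x w m0, lt_indicator_expand y w m0]
    have : (if w / 2 ^ m0 < x / 2 ^ m0 then (1 : ℝ) else 0) =
        (if w / 2 ^ m0 < y / 2 ^ m0 then 1 else 0)
          + (if y / 2 ^ m0 < x / 2 ^ m0 then 1 else 0) *
            (if w / 2 ^ m0 = y / 2 ^ m0 then 1 else 0) := by
      split_ifs <;> first | (exfalso; omega) | norm_num
    rw [this]
    split_ifs <;> ring

lemma exists_chain_diff {L m0 x y : ℕ} (hm : m0 ≤ L) (hyx : y ≤ x + 2 ^ m0)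
    (hxy : x ≤ y + 2 ^ m0) :
    ∃ φ₁ φ₂ φ₃ : ℕ → ℝ, IsChain L m0 φ₁ ∧ IsChain L m0 φ₂ ∧ IsChain L m0 φ₃ ∧
      ∀ w, (if w < x then (1 : ℝ) else 0) - (if w < y then 1 else 0) = φ₁ w + φ₂ w + φ₃ w := by
  rcases le_total y x with h | h
  · obtain ⟨φ₁, φ₂, φ₃, h1, h2, h3, h4⟩ := exists_chain_diff_of_le hm h hxy (e := 1) (by simp)
    exact ⟨φ₁, φ₂, φ₃, h1, h2, h3, fun w => by rw [← h4]; ring⟩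
  · obtain ⟨φ₁, φ₂, φ₃, h1, h2, h3, h4⟩ := exists_chain_diff_of_le hm h hyx (e := -1) (by simp)
    exact ⟨φ₁, φ₂, φ₃, h1, h2, h3, fun w => by rw [← h4]; ring⟩

section lattice
variable {ι : Type*} [Fintype ι]

/-- Indicator of the dyadic cell with side lengths `2 ^ m j` and index `c`. -/
def cellInd (m c : ι → ℕ) (w : ι → ℕ) : ℝ := ∏ j, if w j / 2 ^ m j = c j then (1 : ℝ) else 0

/-- Indicator of the box `∏ j, [0, x j)`. -/
def boxInd (x w : ι → ℕ) : ℝ := ∏ j, if w j < x j then (1 : ℝ) else 0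

/-- Fineness of a cell: its shortest side has length `2 ^ (L - level L m)` when `m ≤ L`. -/
def level (L : ℕ) (m : ι → ℕ) : ℕ := Finset.univ.sup fun j => L - m j

/-- All side exponents allowed for cells. -/
def allM (ι : Type*) [Fintype ι] [DecidableEq ι] (L : ℕ) : Finset (ι → ℕ) :=
  Fintype.piFinset fun _ => Finset.range (L + 1)

lemma level_le (L : ℕ) (m : ι → ℕ) : level L m ≤ L := Finset.sup_le fun _ _ => Nat.sub_le _ _

lemma le_level (L : ℕ) (m : ι → ℕ) (j : ι) : L - m j ≤ level L m :=
  Finset.le_sup (f := fun j => L - m j) (Finset.mem_univ j)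

variable [DecidableEq ι]

lemma sum_level_le {L K0 : ℕ} {g : ℕ → ℝ} (hg : ∀ k, 0 ≤ g k) :
    ∑ m ∈ (allM ι L).filter (fun m => K0 ≤ level L m), g (level L m)
      ≤ ∑ K ∈ Finset.Icc K0 L, ((K : ℝ) + 1) ^ Fintype.card ι * g K := by
  have hmaps : ∀ m ∈ (allM ι L).filter (fun m => K0 ≤ level L m), level L m ∈ Finset.Icc K0 L :=
    fun m hm => Finset.mem_Icc.2 ⟨(Finset.mem_filter.1 hm).2, level_le L m⟩
  rw [← Finset.sum_fiberwise_of_maps_to hmaps]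
  refine Finset.sum_le_sum fun K hK => ?_
  have h1 : ∀ m ∈ ((allM ι L).filter (fun m => K0 ≤ level L m)).filter (fun m => level L m = K),
      g (level L m) ≤ g K := fun m hm => by rw [(Finset.mem_filter.1 hm).2]
  refine (Finset.sum_le_card_nsmul _ _ _ h1).trans ?_
  rw [nsmul_eq_mul]
  refine mul_le_mul_of_nonneg_right ?_ (hg K)
  have hsub : ((allM ι L).filter (fun m => K0 ≤ level L m)).filter (fun m => level L m = K)
      ⊆ Fintype.piFinset fun _ => Finset.Icc (L - K) L := by
    intro m hm
    simp only [Finset.mem_filter, allM, Fintype.mem_piFinset, Finset.mem_range] at hm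
    refine Fintype.mem_piFinset.2 fun j => Finset.mem_Icc.2 ⟨?_, ?_⟩
    · have := le_level L m j
      omega
    · have := hm.1.1 j
      omega
  have hcard := Finset.card_le_card hsub
  simp only [Fintype.card_piFinset, Finset.prod_const, Finset.card_univ, Nat.card_Icc] at hcard
  have hKL := (Finset.mem_Icc.1 hK).2
  rw [show L + 1 - (L - K) = K + 1 by omega] at hcard
  exact_mod_cast hcard

/-- A linear functional that is small on all fine cells is small on a product of chains one of
which is built from short intervals. -/
lemma abs_prod_chain_le (T : ((ι → ℕ) → ℝ) →ₗ[ℝ] ℝ) {L K0 : ℕ} (hK : K0 ≤ L) {g : ℕ → ℝ}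
    (hg : ∀ k, 0 ≤ g k)
    (hT : ∀ m ∈ allM ι L, K0 ≤ level L m → ∀ c, |T (cellInd m c)| ≤ g (level L m))
    (φ : ι → ℕ → ℝ) (i : ι) (hφ : ∀ j, IsChain L (L + 1) (φ j)) (hi : IsChain L (L - K0) (φ i)) :
    |T (fun w => ∏ j, φ j (w j))|
      ≤ ∑ K ∈ Finset.Icc K0 L, ((K : ℝ) + 1) ^ Fintype.card ι * g K := by
  have hφ' : ∀ j, ∃ (b : ℕ → ℝ) (c : ℕ → ℕ), (∀ m, |b m| ≤ 1) ∧
      (∀ m, j = i → L - K0 < m → b m = 0) ∧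
      ∀ w, φ j w = ∑ m ∈ Finset.range (L + 1), b m * (if w / 2 ^ m = c m then 1 else 0) := by
    intro j
    by_cases hj : j = i
    · subst hj
      obtain ⟨b, c, h1, h2, h3⟩ := hi
      exact ⟨b, c, h1, fun m _ => h2 m, h3⟩
    · obtain ⟨b, c, h1, h2, h3⟩ := hφ j
      exact ⟨b, c, h1, fun m h => absurd h hj, h3⟩
  choose b c hb hb0 hbc using hφ'
  have e : (fun w : ι → ℕ => ∏ j, φ j (w j)) =
      ∑ m ∈ allM ι L, (∏ j, b j (m j)) • cellInd m (fun j => c j (m j)) := by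
    funext w
    simp only [hbc, Finset.sum_apply, Pi.smul_apply, smul_eq_mul, cellInd]
    rw [Finset.prod_univ_sum]
    exact Finset.sum_congr rfl fun m _ => Finset.prod_mul_distrib
  rw [e, map_sum]
  refine (Finset.abs_sum_le_sum_abs _ _).trans (le_trans ?_ (sum_level_le (ι := ι) hg))
  rw [Finset.sum_filter]
  refine Finset.sum_le_sum fun m hm => ?_
  rw [map_smul, smul_eq_mul, abs_mul]
  by_cases hbig : L - K0 < m i
  · have : ∏ j, b j (m j) = 0 := Finset.prod_eq_zero (Finset.mem_univ i) (hb0 i _ rfl hbig)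
    rw [this, abs_zero, zero_mul]
    split_ifs
    exacts [hg _, le_rfl]
  · have hlev : K0 ≤ level L m := by
      have := le_level L m i
      omega
    rw [if_pos hlev]
    have h1 : |∏ j, b j (m j)| ≤ 1 := by
      rw [Finset.abs_prod]
      exact Finset.prod_le_one (fun _ _ => abs_nonneg _) fun j _ => hb j _
    calc _ ≤ 1 * |T (cellInd m fun j => c j (m j))| := by gcongr
      _ ≤ _ := by rw [one_mul]; exact hT m hm hlev _

lemma abs_box_diff_le (T : ((ι → ℕ) → ℝ) →ₗ[ℝ] ℝ) {L K0 : ℕ} (hK : K0 ≤ L) {g : ℕ → ℝ}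
    (hg : ∀ k, 0 ≤ g k)
    (hT : ∀ m ∈ allM ι L, K0 ≤ level L m → ∀ c, |T (cellInd m c)| ≤ g (level L m))
    (x y : ι → ℕ) (hx : ∀ j, x j < 2 ^ (L + 1)) (hy : ∀ j, y j < 2 ^ (L + 1))
    (hxy : ∀ j, x j ≤ y j + 2 ^ (L - K0)) (hyx : ∀ j, y j ≤ x j + 2 ^ (L - K0)) :
    |T (boxInd x) - T (boxInd y)|
      ≤ Fintype.card ι * (3 * ∑ K ∈ Finset.Icc K0 L, ((K : ℝ) + 1) ^ Fintype.card ι * g K) := by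
  set B := ∑ K ∈ Finset.Icc K0 L, ((K : ℝ) + 1) ^ Fintype.card ι * g K with hB
  have key : ∀ S : Finset ι, |T (boxInd (S.piecewise x y)) - T (boxInd y)| ≤ S.card * (3 * B) := by
    intro S
    induction S using Finset.induction_on with
    | empty => simp
    | insert i S hi ih =>
      obtain ⟨φ₁, φ₂, φ₃, h1, h2, h3, h4⟩ :=
        exists_chain_diff (L := L) (m0 := L - K0) (Nat.sub_le _ _) (hyx i) (hxy i)
      set z := S.piecewise x y with hz
      have hz1 : ∀ j, z j < 2 ^ (L + 1) := by
        intro j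
        by_cases hj : j ∈ S <;> simp [hz, hj, hx, hy]
      set ψ : (ℕ → ℝ) → ι → ℕ → ℝ := fun φ j =>
        if j = i then φ else fun w => if w < z j then (1 : ℝ) else 0 with hψ
      have hψi : ∀ φ, ψ φ i = φ := fun φ => by simp [hψ]
      have hψb : ∀ φ, IsChain L (L - K0) φ → |T (fun w => ∏ j, ψ φ j (w j))| ≤ B := by
        intro φ hφ
        refine abs_prod_chain_le T hK hg hT (ψ φ) i (fun j => ?_) (by rwa [hψi])
        by_cases hj : j = i
        · simp only [hψ, if_pos hj]
          obtain ⟨b, c, h1, h2, h3⟩ := hφ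
          exact ⟨b, c, h1, fun m hm => h2 m (by omega), h3⟩
        · simp only [hψ, if_neg hj]
          exact isChain_lt (hz1 j)
      have hprod : ∀ φ (w : ι → ℕ), ∏ j, ψ φ j (w j)
          = φ (w i) * ∏ j ∈ Finset.univ.erase i, if w j < z j then (1 : ℝ) else 0 := by
        intro φ w
        rw [← Finset.mul_prod_erase _ _ (Finset.mem_univ i), hψi]
        congr 1
        refine Finset.prod_congr rfl fun j hj => ?_
        simp only [hψ, if_neg (Finset.ne_of_mem_erase hj)]
      have hsplit : boxInd ((insert i S).piecewise x y) - boxInd z =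
          (fun w => ∏ j, ψ φ₁ j (w j)) + (fun w => ∏ j, ψ φ₂ j (w j))
            + (fun w => ∏ j, ψ φ₃ j (w j)) := by
        funext w
        simp only [Pi.sub_apply, Pi.add_apply, hprod]
        rw [← add_mul, ← add_mul, ← h4, boxInd, boxInd,
          ← Finset.mul_prod_erase _ _ (Finset.mem_univ i),
          ← Finset.mul_prod_erase _ (fun j => if w j < z j then (1 : ℝ) else 0)
            (Finset.mem_univ i)]
        have e1 : (insert i S).piecewise x y i = x i := by simp
        have e2 : z i = y i := by simp [hz, hi]
        have e3 : ∀ j ∈ Finset.univ.erase i, (insert i S).piecewise x y j = z j := fun j hj => by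
          have := Finset.ne_of_mem_erase hj
          simp [hz, Finset.piecewise, this]
        rw [e1, e2, Finset.prod_congr rfl fun j hj => by rw [e3 j hj]]
        ring
      have h5 : T (boxInd ((insert i S).piecewise x y)) - T (boxInd z)
          = T (fun w => ∏ j, ψ φ₁ j (w j)) + T (fun w => ∏ j, ψ φ₂ j (w j))
            + T (fun w => ∏ j, ψ φ₃ j (w j)) := by
        rw [← map_sub, hsplit, map_add, map_add]
      have h6 : |T (boxInd ((insert i S).piecewise x y)) - T (boxInd z)| ≤ 3 * B := by
        rw [h5]
        refine (abs_add_three _ _ _).trans ?_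
        linarith [hψb _ h1, hψb _ h2, hψb _ h3]
      rw [Finset.card_insert_of_notMem hi]
      push_cast
      have := abs_sub_le (T (boxInd ((insert i S).piecewise x y))) (T (boxInd z)) (T (boxInd y))
      linarith
  simpa using key Finset.univ

end lattice

/-! ### Summability of the tail bounds -/

lemma summable_succ_pow_mul_geometric (p : ℕ) {ρ : ℝ} (h0 : 0 < ρ) (h1 : ρ < 1) :
    Summable fun K : ℕ => ((K : ℝ) + 1) ^ p * ρ ^ K := by
  have h := summable_pow_mul_geometric_of_norm_lt_one (R := ℝ) p (r := ρ)
    (by rwa [Real.norm_of_nonneg h0.le])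
  have h2 := ((summable_nat_add_iff 1).2 h).mul_right ρ⁻¹
  refine h2.congr fun K => ?_
  push_cast
  rw [pow_succ, ← mul_assoc, mul_inv_cancel_right₀ h0.ne']

/-- Bound for the probability that some cell of level `K` has a large increment, in dimension
`D`; the gap between the times used in the martingale approximation is `2 ^ (K / 8)`. -/
noncomputable def tailBound (D : ℕ) (Cm κ : ℝ) (K : ℕ) : ℝ :=
  4 * ((K : ℝ) + 1) ^ (2 * (D + 2)) * (Cm * ((2 ^ (K / 8) : ℕ) : ℝ) ^ (-κ))
    + 2 * ((2 ^ (K / 8) : ℕ) : ℝ) * (2 ^ (K + 1)) ^ D *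
      Real.exp (-(((2 ^ (K / 8) : ℕ) : ℝ) / (4 * ((K : ℝ) + 1) ^ (D + 2))) + 1)

lemma tailBound_nonneg (D : ℕ) {Cm κ : ℝ} (hC : 0 ≤ Cm) (K : ℕ) : 0 ≤ tailBound D Cm κ K := by
  unfold tailBound; positivity

lemma exp_neg_le_factorial_div {y : ℝ} (hy : 0 < y) (r : ℕ) :
    Real.exp (-y) ≤ r.factorial / y ^ r := by
  rw [Real.exp_neg, inv_eq_one_div, div_le_div_iff₀ (Real.exp_pos _) (by positivity), one_mul]
  have := Real.pow_div_factorial_le_exp y hy.le r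
  rwa [div_le_iff₀ (by positivity), mul_comm] at this

lemma summable_tailBound (D : ℕ) {Cm κ : ℝ} (hC : 0 ≤ Cm) (hκ : 0 < κ) :
    Summable fun K : ℕ => ((K : ℝ) + 1) ^ D * tailBound D Cm κ K := by
  set ρ : ℝ := (2 : ℝ) ^ (-(κ / 8)) with hρ
  have hρ0 : 0 < ρ := by positivity
  have hρ1 : ρ < 1 := Real.rpow_lt_one_of_one_lt_of_neg (by norm_num) (by linarith)
  set r := 8 * (D + 2) with hr
  set B1 : ℝ := 4 * Cm * ((2 : ℝ) ^ (-7 : ℝ)) ^ (-(κ / 8)) with hB1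
  set B2 : ℝ := 2 * 2 ^ D * Real.exp 1 * r.factorial * 4 ^ r * (2 ^ 7) ^ (D + 2) with hB2
  have hs := ((summable_succ_pow_mul_geometric (D + 2 * (D + 2)) hρ0 hρ1).mul_left B1).add
    ((summable_succ_pow_mul_geometric (D + (D + 2) * r) (ρ := 1 / 2) (by norm_num)
      (by norm_num)).mul_left B2)
  refine Summable.of_nonneg_of_le
    (fun K => mul_nonneg (by positivity) (tailBound_nonneg D hC K)) (fun K => ?_) hs
  set q : ℝ := ((2 ^ (K / 8) : ℕ) : ℝ) with hq
  have hq0 : 0 < q := by rw [hq]; positivity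
  have hq1 : (2 : ℝ) ^ K ≤ q ^ 8 * 2 ^ 7 := by
    rw [hq]; push_cast; rw [← pow_mul, ← pow_add]
    exact pow_le_pow_right₀ (by norm_num) (by omega)
  have hq2 : q ≤ 2 ^ K := by
    rw [hq]; push_cast
    exact pow_le_pow_right₀ (by norm_num) (Nat.div_le_self _ _)
  have hterm1 : q ^ (-κ) ≤ ((2 : ℝ) ^ (-7 : ℝ)) ^ (-(κ / 8)) * ρ ^ K := by
    have e : q ^ (-κ) = (q ^ 8) ^ (-(κ / 8)) := by
      rw [← Real.rpow_natCast q 8, ← Real.rpow_mul hq0.le]; congr 1; push_cast; ring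
    have e2 : ((2 : ℝ) ^ (-7 : ℝ)) ^ (-(κ / 8)) * ρ ^ K
        = ((2 : ℝ) ^ (-7 : ℝ) * 2 ^ K) ^ (-(κ / 8)) := by
      have e3 : ρ ^ K = ((2 : ℝ) ^ K) ^ (-(κ / 8)) := by
        rw [hρ, ← Real.rpow_natCast, ← Real.rpow_natCast, ← Real.rpow_mul (by norm_num),
          ← Real.rpow_mul (by norm_num), mul_comm]
      rw [Real.mul_rpow (by positivity) (by positivity), e3]
    rw [e, e2]
    refine Real.rpow_le_rpow_of_nonpos (by positivity) ?_ (by linarith)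
    rw [Real.rpow_neg (by norm_num), inv_mul_le_iff₀ (by positivity)]
    calc (2 : ℝ) ^ K ≤ q ^ 8 * 2 ^ 7 := hq1
      _ = _ := by rw [mul_comm]; norm_num
  have hK0 : (0 : ℝ) < (K : ℝ) + 1 := by positivity
  have hterm2 : 2 * q * (2 ^ (K + 1)) ^ D * Real.exp (-(q / (4 * ((K : ℝ) + 1) ^ (D + 2))) + 1)
      ≤ B2 * (((K : ℝ) + 1) ^ ((D + 2) * r) * (1 / 2) ^ K) := by
    have h1 := exp_neg_le_factorial_div (y := q / (4 * ((K : ℝ) + 1) ^ (D + 2))) (by positivity) r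
    have h2 : (q ^ r)⁻¹ ≤ (2 ^ 7) ^ (D + 2) * ((2 : ℝ) ^ K)⁻¹ ^ (D + 2) := by
      rw [← mul_pow, hr, pow_mul, ← inv_pow]
      refine pow_le_pow_left₀ (by positivity) ?_ _
      rw [← div_eq_mul_inv, inv_eq_one_div, div_le_div_iff₀ (by positivity) (by positivity)]
      linarith
    rw [Real.exp_add]
    calc 2 * q * (2 ^ (K + 1)) ^ D * (Real.exp (-(q / (4 * ((K : ℝ) + 1) ^ (D + 2)))) * Real.exp 1)
        ≤ 2 * 2 ^ K * (2 ^ (K + 1)) ^ D *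
          ((r.factorial / (q / (4 * ((K : ℝ) + 1) ^ (D + 2))) ^ r) * Real.exp 1) := by
          gcongr
      _ = 2 * 2 ^ K * (2 ^ (K + 1)) ^ D * (r.factorial * (4 ^ r * ((K : ℝ) + 1) ^ ((D + 2) * r))
            * Real.exp 1) * (q ^ r)⁻¹ := by
          rw [div_pow, mul_pow]
          field_simp
          exact (pow_mul _ _ _).symm
      _ ≤ 2 * 2 ^ K * (2 ^ (K + 1)) ^ D * (r.factorial * (4 ^ r * ((K : ℝ) + 1) ^ ((D + 2) * r))
            * Real.exp 1) * ((2 ^ 7) ^ (D + 2) * ((2 : ℝ) ^ K)⁻¹ ^ (D + 2)) := by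
          gcongr
      _ = _ := by
          rw [hB2]
          have e1 : ((2 : ℝ) ^ (K + 1)) ^ D = (2 ^ K) ^ D * 2 ^ D := by
            rw [pow_succ, mul_pow]
          have e2 : (1 / 2 : ℝ) ^ K = ((2 : ℝ) ^ K)⁻¹ := by
            rw [one_div, inv_pow]
          rw [e1, e2]
          have e3 : (2 : ℝ) ^ K * (2 ^ K) ^ D * ((2 : ℝ) ^ K)⁻¹ ^ (D + 2) = ((2 : ℝ) ^ K)⁻¹ := by
            rw [pow_add, inv_pow]
            field_simp
          linear_combination (2 * 2 ^ D * (r.factorial * (4 ^ r * ((K : ℝ) + 1) ^ ((D + 2) * r))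
            * Real.exp 1) * (2 ^ 7) ^ (D + 2)) * e3
  have hterm3 := mul_le_mul_of_nonneg_left hterm1
    (show 0 ≤ 4 * ((K : ℝ) + 1) ^ (2 * (D + 2)) * Cm by positivity)
  have := mul_le_mul_of_nonneg_left (add_le_add hterm3 hterm2)
    (show 0 ≤ ((K : ℝ) + 1) ^ D by positivity)
  rw [tailBound, ← hq]
  refine le_trans (le_of_eq (by ring)) (this.trans (le_of_eq ?_))
  rw [hB1, pow_add, pow_add]
  ring

/-! ### Uniform margins and the copula -/

section margins
variable {d : ℕ} {P : Measure Ω} [IsProbabilityMeasure P] {X : ℤ → Ω → Fin d → ℝ}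

/-- The vector `U_t = (F_1(X_{t1}), …, F_d(X_{td}))`. -/
noncomputable def unif (P : Measure Ω) (X : ℤ → Ω → Fin d → ℝ) (t : ℤ) (ω : Ω) (j : Fin d) : ℝ :=
  margCdf P X j (X t ω j)

lemma prob_stationary (hX : ∀ i, Measurable (X i)) (hst : Stationary P X) (t : ℤ)
    {S : Set (Fin d → ℝ)} (hS : MeasurableSet S) :
    P {ω | X t ω ∈ S} = P {ω | X 1 ω ∈ S} := by
  have h := congrArg (fun μ : Measure (ℤ → Fin d → ℝ) => μ {f | f 1 ∈ S}) (hst (t - 1))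
  have hm : MeasurableSet {f : ℤ → Fin d → ℝ | f 1 ∈ S} := measurable_pi_apply 1 hS
  rw [Measure.map_apply (measurable_pi_lambda _ fun i => hX _) hm,
    Measure.map_apply (measurable_pi_lambda _ fun i => hX _) hm] at h
  simpa using h

lemma margCdf_mono (j : Fin d) : Monotone (margCdf P X j) := fun _ _ h =>
  measureReal_mono (fun _ hω => le_trans hω h)

lemma margCdf_nonneg (j : Fin d) (x : ℝ) : 0 ≤ margCdf P X j x := ENNReal.toReal_nonneg

lemma margCdf_le_one (j : Fin d) (x : ℝ) : margCdf P X j x ≤ 1 := measureReal_le_one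

lemma unif_mem (t : ℤ) (ω : Ω) (j : Fin d) : unif P X t ω j ∈ Icc (0 : ℝ) 1 :=
  ⟨margCdf_nonneg _ _, margCdf_le_one _ _⟩

lemma margCdf_eq_cdf (hX : ∀ i, Measurable (X i)) (j : Fin d) (x : ℝ) :
    margCdf P X j x = ProbabilityTheory.cdf (P.map fun ω => X 1 ω j) x := by
  have hm : Measurable fun ω => X 1 ω j := (measurable_pi_apply j).comp (hX 1)
  have : IsProbabilityMeasure (P.map fun ω => X 1 ω j) := Measure.isProbabilityMeasure_map hm.aemeasurable
  rw [ProbabilityTheory.cdf_eq_real, map_measureReal_apply hm measurableSet_Iic]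
  rfl

lemma exists_margCdf_eq (hX : ∀ i, Measurable (X i)) (hcont : ∀ j, Continuous (margCdf P X j))
    (j : Fin d) {u : ℝ} (h0 : 0 < u) (h1 : u < 1) : ∃ x, margCdf P X j x = u := by
  have hb : Tendsto (margCdf P X j) atBot (nhds 0) := by
    rw [funext (margCdf_eq_cdf hX j)]; exact ProbabilityTheory.tendsto_cdf_atBot _
  have ht : Tendsto (margCdf P X j) atTop (nhds 1) := by
    rw [funext (margCdf_eq_cdf hX j)]; exact ProbabilityTheory.tendsto_cdf_atTop _
  obtain ⟨x, hx⟩ := (hb.eventually (gt_mem_nhds h0)).exists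
  obtain ⟨y, hy⟩ := (ht.eventually (lt_mem_nhds h1)).exists
  exact mem_range_of_exists_le_of_exists_ge (hcont j) ⟨x, hx.le⟩ ⟨y, hy.le⟩

lemma prob_X_le (hX : ∀ i, Measurable (X i)) (hst : Stationary P X) (t : ℤ) (j : Fin d) (x : ℝ) :
    P.real {ω | X t ω j ≤ x} = margCdf P X j x := by
  have hm : MeasurableSet {f : Fin d → ℝ | f j ≤ x} := measurable_pi_apply j measurableSet_Iic
  have := prob_stationary hX hst t hm
  exact congrArg ENNReal.toReal this

lemma prob_unif_le (hX : ∀ i, Measurable (X i)) (hst : Stationary P X)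
    (hcont : ∀ j, Continuous (margCdf P X j)) (t : ℤ) (j : Fin d) {u : ℝ} (hu : u ∈ Icc (0 : ℝ) 1) :
    P.real {ω | unif P X t ω j ≤ u} = u := by
  refine le_antisymm ?_ ?_
  · refine le_of_forall_gt_imp_ge_of_dense fun v hv => ?_
    rcases le_or_gt 1 v with h1 | h1
    · exact measureReal_le_one.trans h1
    obtain ⟨x, hx⟩ := exists_margCdf_eq hX hcont j (hu.1.trans_lt hv) h1
    rw [← hx, ← prob_X_le hX hst t j x]
    refine measureReal_mono fun ω hω => ?_
    by_contra hc
    have h2 : margCdf P X j x ≤ unif P X t ω j := margCdf_mono j (not_le.1 hc).le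
    have h3 : unif P X t ω j ≤ u := hω
    linarith
  · rcases hu.1.eq_or_lt with h0 | h0
    · rw [← h0]; exact measureReal_nonneg
    rcases hu.2.eq_or_lt with h1 | h1
    · have : {ω | unif P X t ω j ≤ u} = Set.univ :=
        eq_univ_of_forall fun ω => by rw [h1]; exact (unif_mem t ω j).2
      rw [this, h1]; simp
    obtain ⟨x, hx⟩ := exists_margCdf_eq hX hcont j h0 h1
    calc u = P.real {ω | X t ω j ≤ x} := by rw [prob_X_le hX hst t j x, hx]
      _ ≤ _ := measureReal_mono fun ω hω => by
        rw [← hx]; exact margCdf_mono j hω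

lemma measurable_unif_comap (hcont : ∀ j, Continuous (margCdf P X j)) (t : ℤ) (j : Fin d) :
    Measurable[MeasurableSpace.comap (X t) inferInstance] fun ω => unif P X t ω j := by
  have h : Measurable fun x : Fin d → ℝ => margCdf P X j (x j) :=
    (hcont j).measurable.comp (measurable_pi_apply j)
  exact h.comp (comap_measurable (X t))

lemma measurable_unif (hX : ∀ i, Measurable (X i)) (hcont : ∀ j, Continuous (margCdf P X j))
    (t : ℤ) (j : Fin d) : Measurable fun ω => unif P X t ω j :=
  (measurable_unif_comap hcont t j).mono (hX t).comap_le le_rfl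

lemma prob_unif_Ioc_le (hX : ∀ i, Measurable (X i)) (hst : Stationary P X)
    (hcont : ∀ j, Continuous (margCdf P X j)) (t : ℤ) (j : Fin d) {x y : ℝ} (hxy : x ≤ y) :
    P.real {ω | x < unif P X t ω j ∧ unif P X t ω j ≤ y} ≤ y - x := by
  have hG : ∀ z : ℝ, P.real {ω | unif P X t ω j ≤ z} = max 0 (min z 1) := by
    intro z
    rcases lt_or_ge z 0 with h | h
    · have : {ω | unif P X t ω j ≤ z} = ∅ := eq_empty_of_forall_notMem fun ω hω =>
        absurd ((unif_mem (P := P) (X := X) t ω j).1.trans hω) (not_le.2 h)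
      rw [this, max_eq_left ((min_le_left _ _).trans h.le)]; simp
    rcases le_or_gt z 1 with h1 | h1
    · rw [prob_unif_le hX hst hcont t j ⟨h, h1⟩, min_eq_left h1, max_eq_right h]
    · have : {ω | unif P X t ω j ≤ z} = Set.univ := eq_univ_of_forall fun ω =>
        (unif_mem t ω j).2.trans h1.le
      rw [this, min_eq_right h1.le, max_eq_right zero_le_one]; simp
  have e : {ω | x < unif P X t ω j ∧ unif P X t ω j ≤ y}
      = {ω | unif P X t ω j ≤ y} \ {ω | unif P X t ω j ≤ x} := by
    ext ω; simp only [Set.mem_sdiff, mem_ofPred_eq, not_le]; tauto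
  have hsub : {ω | unif P X t ω j ≤ x} ⊆ {ω | unif P X t ω j ≤ y} := fun ω hω => le_trans hω hxy
  rw [e, measureReal_sdiff hsub (measurable_unif hX hcont t j measurableSet_Iic), hG, hG]
  rcases le_total x 1 with h1 | h1 <;> rcases le_total y 1 with h2 | h2 <;>
    rcases le_total x 0 with h3 | h3 <;> rcases le_total y 0 with h4 | h4 <;>
    simp [*] <;> linarith

lemma copula_eq (hX : ∀ i, Measurable (X i)) (hst : Stationary P X)
    (hcont : ∀ j, Continuous (margCdf P X j)) (t : ℤ) (u : Fin d → ℝ) :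
    P.real {ω | ∀ j, unif P X t ω j ≤ u j} = copula P X u := by
  have hm : MeasurableSet {f : Fin d → ℝ | ∀ j, margCdf P X j (f j) ≤ u j} := by
    simp only [ofPred_forall]
    exact MeasurableSet.iInter fun j =>
      ((hcont j).measurable.comp (measurable_pi_apply j)) measurableSet_Iic
  exact congrArg ENNReal.toReal (prob_stationary hX hst t hm)

lemma copula_mono {u v : Fin d → ℝ} (h : u ≤ v) : copula P X u ≤ copula P X v :=
  measureReal_mono fun _ hω j => (hω j).trans (h j)

lemma copula_le_add (hX : ∀ i, Measurable (X i)) (hst : Stationary P X)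
    (hcont : ∀ j, Continuous (margCdf P X j)) {u v : Fin d → ℝ} (h : u ≤ v) :
    copula P X v ≤ copula P X u + ∑ j, (v j - u j) := by
  rw [← copula_eq hX hst hcont 1 u, ← copula_eq hX hst hcont 1 v]
  calc P.real {ω | ∀ j, unif P X 1 ω j ≤ v j}
      ≤ P.real ({ω | ∀ j, unif P X 1 ω j ≤ u j} ∪
          ⋃ j ∈ (Finset.univ : Finset (Fin d)), {ω | u j < unif P X 1 ω j ∧ unif P X 1 ω j ≤ v j}) := by
        refine measureReal_mono fun ω hω => ?_
        by_cases hc : ∀ j, unif P X 1 ω j ≤ u j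
        · exact Or.inl hc
        · push Not at hc
          obtain ⟨j, hj⟩ := hc
          exact Or.inr (mem_biUnion (Finset.mem_univ j) ⟨hj, hω j⟩)
    _ ≤ _ := by
        refine (measureReal_union_le _ _).trans (add_le_add le_rfl ?_)
        refine (measureReal_biUnion_finset_le _ _).trans (Finset.sum_le_sum fun j _ => ?_)
        exact prob_unif_Ioc_le hX hst hcont 1 j (h j)

end margins

/-! ### Lattice points and the increments of the cells -/

section latticePoints
variable {d : ℕ} {P : Measure Ω} [IsProbabilityMeasure P] {X : ℤ → Ω → Fin d → ℝ}

/-- The pair `(t, U_t)` rounded up to the lattice with mesh `1` in time (coordinate `none`) and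
`2 ^ (-L)` in space (coordinates `some j`), in units of the mesh. -/
noncomputable def latPt (P : Measure Ω) (X : ℤ → Ω → Fin d → ℝ) (L t : ℕ) (ω : Ω) :
    Option (Fin d) → ℕ
  | none => t
  | some j => ⌈(2 : ℝ) ^ L * unif P X t ω j⌉₊

lemma latPt_le {L t : ℕ} (ht : t ≤ 2 ^ L) (ω : Ω) (i : Option (Fin d)) :
    latPt P X L t ω i ≤ 2 ^ L := by
  cases i with
  | none => exact ht
  | some j =>
    refine Nat.ceil_le.2 ?_
    push_cast
    exact mul_le_of_le_one_right (by positivity) (unif_mem _ ω j).2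

lemma measurable_latPt (hcont : ∀ j, Continuous (margCdf P X j)) (L t : ℕ) :
    Measurable[MeasurableSpace.comap (X t) inferInstance] (latPt P X L t) := by
  refine @measurable_pi_lambda _ _ _ (_) _ _ fun i => ?_
  cases i with
  | none => exact @measurable_const _ _ _ (_) t
  | some j => exact Nat.measurable_ceil.comp ((measurable_unif_comap hcont t j).const_mul _)

/-- The centred sum `∑ t ≤ n, (φ (W_t) - E φ (W_t))` over the lattice points `W_t`, linear in `φ`.
The expectation is written as a finite sum over the lattice points. -/
noncomputable def latT (P : Measure Ω) (X : ℤ → Ω → Fin d → ℝ) (L n : ℕ) (ω : Ω) :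
    ((Option (Fin d) → ℕ) → ℝ) →ₗ[ℝ] ℝ where
  toFun φ := ∑ t ∈ Finset.Icc 1 n, (φ (latPt P X L t ω) -
    ∑ w ∈ Fintype.piFinset fun _ : Option (Fin d) => Finset.range (2 ^ L + 1),
      P.real {ω' | latPt P X L t ω' = w} * φ w)
  map_add' φ ψ := by
    rw [← Finset.sum_add_distrib]
    refine Finset.sum_congr rfl fun t _ => ?_
    simp only [Pi.add_apply, mul_add, Finset.sum_add_distrib]
    ring
  map_smul' a φ := by
    simp only [Pi.smul_apply, smul_eq_mul, RingHom.id_apply, Finset.mul_sum, mul_sub]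
    refine Finset.sum_congr rfl fun t _ => ?_
    congr 1
    exact Finset.sum_congr rfl fun w _ => by ring

lemma latT_indicator (hX : ∀ i, Measurable (X i)) (hcont : ∀ j, Continuous (margCdf P X j))
    {L n : ℕ} (hn : n ≤ 2 ^ L) (ω : Ω) (p : (Option (Fin d) → ℕ) → Prop) [DecidablePred p] :
    latT P X L n ω (fun w => if p w then 1 else 0)
      = ∑ t ∈ Finset.Icc 1 n, ((if p (latPt P X L t ω) then 1 else 0)
          - P.real {ω' | p (latPt P X L t ω')}) := by
  change ∑ t ∈ Finset.Icc 1 n, (_ - _) = _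
  refine Finset.sum_congr rfl fun t ht => ?_
  congr 1
  have htL : t ≤ 2 ^ L := (Finset.mem_Icc.1 ht).2.trans hn
  have hm : Measurable (latPt P X L t) := (measurable_latPt hcont L t).mono (hX t).comap_le le_rfl
  set Box := Fintype.piFinset fun _ : Option (Fin d) => Finset.range (2 ^ L + 1) with hBox
  have e : {ω' | p (latPt P X L t ω')} =
      ⋃ w ∈ Box.filter p, {ω' | latPt P X L t ω' = w} := by
    ext ω'
    simp only [mem_ofPred_eq, mem_iUnion, Finset.mem_filter, exists_prop]
    constructor
    · intro h
      refine ⟨latPt P X L t ω', ⟨?_, h⟩, rfl⟩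
      exact Fintype.mem_piFinset.2 fun i =>
        Finset.mem_range.2 (Nat.lt_succ_of_le (latPt_le htL ω' i))
    · rintro ⟨w, ⟨_, h⟩, rfl⟩
      exact h
  rw [e, measureReal_biUnion_finset]
  · rw [Finset.sum_filter]
    exact Finset.sum_congr rfl fun w _ => by by_cases hp : p w <;> simp [hp]
  · intro w _ w' _ hww'
    exact Set.disjoint_left.2 fun ω' h h' => hww' (h.symm.trans h')
  · intro w _
    exact hm (measurableSet_singleton w)

lemma cellInd_eq {ι : Type*} [Fintype ι] [DecidableEq ι] (m c w : ι → ℕ) :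
    cellInd m c w = if ∀ j, w j / 2 ^ m j = c j then 1 else 0 := by
  rw [cellInd, Finset.prod_ite_zero]
  simp

lemma boxInd_eq {ι : Type*} [Fintype ι] [DecidableEq ι] (x w : ι → ℕ) :
    boxInd x w = if ∀ j, w j < x j then 1 else 0 := by
  rw [boxInd, Finset.prod_ite_zero]
  simp

lemma prob_latPt_cell_le (hX : ∀ i, Measurable (X i)) (hst : Stationary P X)
    (hcont : ∀ j, Continuous (margCdf P X j)) (L m c t : ℕ) (j : Fin d) :
    P.real {ω | latPt P X L t ω (some j) / 2 ^ m = c} ≤ 2 ^ m / 2 ^ L := by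
  have h2 : (0 : ℝ) < 2 ^ L := by positivity
  have hsub : {ω | latPt P X L t ω (some j) / 2 ^ m = c} ⊆
      {ω | ((c : ℝ) * 2 ^ m - 1) / 2 ^ L < unif P X t ω j ∧
        unif P X t ω j ≤ ((c : ℝ) * 2 ^ m - 1 + 2 ^ m) / 2 ^ L} := by
    intro ω hω
    have hω' : ⌈(2 : ℝ) ^ L * unif P X t ω j⌉₊ / 2 ^ m = c := hω
    rw [Nat.div_eq_iff (by positivity)] at hω'
    obtain ⟨h3, h4⟩ := hω'
    have hU : 0 ≤ (2 : ℝ) ^ L * unif P X t ω j := mul_nonneg h2.le (unif_mem _ ω j).1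
    constructor
    · rw [div_lt_iff₀ h2]
      have h5 := Nat.ceil_lt_add_one hU
      have h6 : (c : ℝ) * 2 ^ m ≤ (⌈(2 : ℝ) ^ L * unif P X t ω j⌉₊ : ℝ) := by exact_mod_cast h3
      linarith
    · rw [le_div_iff₀ h2]
      have h5 := Nat.le_ceil ((2 : ℝ) ^ L * unif P X t ω j)
      have h6 : ((⌈(2 : ℝ) ^ L * unif P X t ω j⌉₊ : ℕ) : ℝ) + 1 ≤ (c : ℝ) * 2 ^ m + 2 ^ m := by
        have : ⌈(2 : ℝ) ^ L * unif P X t ω j⌉₊ + 1 ≤ c * 2 ^ m + 2 ^ m := by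
          have : 0 < 2 ^ m := by positivity
          omega
        exact_mod_cast this
      linarith
  refine (measureReal_mono hsub).trans ((prob_unif_Ioc_le hX hst hcont t j ?_).trans (le_of_eq ?_))
  · gcongr
    linarith [show (0 : ℝ) < 2 ^ m by positivity]
  · ring

lemma sum_cell_prob_le (hX : ∀ i, Measurable (X i)) (hst : Stationary P X)
    (hcont : ∀ j, Continuous (margCdf P X j)) {L n : ℕ} (hn : 2 ^ L ≤ 2 * n)
    {m : Option (Fin d) → ℕ} (hm : m ∈ allM (Option (Fin d)) L) (c : Option (Fin d) → ℕ) :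
    ∑ t ∈ Finset.Icc 1 n, P.real {ω | ∀ i, latPt P X L t ω i / 2 ^ m i = c i}
      ≤ 2 * n / 2 ^ level L m := by
  obtain ⟨i, -, hi⟩ := Finset.exists_mem_eq_sup Finset.univ ⟨none, Finset.mem_univ _⟩
    (fun i : Option (Fin d) => L - m i)
  have hi : level L m = L - m i := hi
  have hmi : m i ≤ L := by
    have := Finset.mem_range.1 (Fintype.mem_piFinset.1 hm i)
    omega
  have hpow : (2 : ℝ) ^ m i / 2 ^ L = 1 / 2 ^ level L m := by
    rw [hi, div_eq_div_iff (by positivity) (by positivity), one_mul, ← pow_add]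
    congr 1; omega
  have hnR : (2 : ℝ) ^ L ≤ 2 * n := by exact_mod_cast hn
  rw [div_eq_mul_one_div, ← hpow]
  cases i with
  | some j =>
    have : ∀ t ∈ Finset.Icc 1 n, P.real {ω | ∀ i, latPt P X L t ω i / 2 ^ m i = c i}
        ≤ 2 ^ m (some j) / 2 ^ L := fun t _ =>
      (measureReal_mono (s₂ := {ω | latPt P X L t ω (some j) / 2 ^ m (some j) = c (some j)})
        (fun ω (hω : ∀ i, latPt P X L t ω i / 2 ^ m i = c i) => hω (some j))).trans
        (prob_latPt_cell_le hX hst hcont L (m (some j)) (c (some j)) t j)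
    refine (Finset.sum_le_card_nsmul _ _ _ this).trans ?_
    rw [Nat.card_Icc, nsmul_eq_mul]
    have h0 : (0 : ℝ) ≤ 2 ^ m (some j) / 2 ^ L := by positivity
    have : (0 : ℝ) ≤ n := by positivity
    rw [Nat.add_sub_cancel]
    nlinarith
  | none =>
    have : ∀ t ∈ Finset.Icc 1 n, P.real {ω | ∀ i, latPt P X L t ω i / 2 ^ m i = c i}
        ≤ if t / 2 ^ m none = c none then 1 else 0 := by
      intro t _
      split_ifs with h
      · exact measureReal_le_one
      · have : {ω | ∀ i, latPt P X L t ω i / 2 ^ m i = c i} = ∅ :=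
          eq_empty_of_forall_notMem fun ω hω => h (hω none)
        rw [this]; simp
    refine (Finset.sum_le_sum this).trans ?_
    rw [← Finset.sum_filter, Finset.sum_const, nsmul_eq_mul, mul_one]
    have hcard : ((Finset.Icc 1 n).filter fun t => t / 2 ^ m none = c none).card ≤ 2 ^ m none := by
      have hsub : ((Finset.Icc 1 n).filter fun t => t / 2 ^ m none = c none)
          ⊆ Finset.Ico (c none * 2 ^ m none) (c none * 2 ^ m none + 2 ^ m none) := by
        intro t ht
        have := (Finset.mem_filter.1 ht).2
        rw [Nat.div_eq_iff (by positivity)] at this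
        have h0 : 0 < 2 ^ m none := by positivity
        rw [Finset.mem_Ico]
        omega
      refine (Finset.card_le_card hsub).trans ?_
      simp
    have hcR : (((Finset.Icc 1 n).filter fun t => t / 2 ^ m none = c none).card : ℝ)
        ≤ 2 ^ m none := by exact_mod_cast hcard
    refine hcR.trans ?_
    rw [mul_div_assoc', le_div_iff₀ (by positivity), mul_comm]
    gcongr

/-- Tail bound for the cells of a given shape. The maximal inequality is applied with threshold
`√n / (K + 1) ^ (d + 3)` where `K` is the level. A gap `q = 2 ^ (K / 8)` makes the mixing term
decay geometrically in `K`, and is small enough for the exponential term to win against the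
`2 ^ ((K + 1) (d + 1))` cells. -/
lemma prob_cells_le (hX : ∀ i, Measurable (X i)) (hst : Stationary P X)
    (hcont : ∀ j, Continuous (margCdf P X j)) {a C Cm : ℝ}
    (hγ : ∀ r : ℕ, 1 ≤ r → alphaMix P X r ≤ C * (r : ℝ) ^ (-a))
    (hCm : ∀ n q : ℕ, 1 ≤ q → ∑ t ∈ Finset.Icc 1 n, ∑ t' ∈ Finset.Icc 1 n,
        4 * (C * ((q + ((t - t') + (t' - t)) : ℕ) : ℝ) ^ (-a))
        ≤ n * (Cm * (q : ℝ) ^ (-((a - 1) / 2))))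
    {L n : ℕ} (hn0 : 1 ≤ n) (hn : 2 ^ L ≤ 2 * n) (hnL : n ≤ 2 ^ L)
    {m : Option (Fin d) → ℕ} (hm : m ∈ allM (Option (Fin d)) L) :
    P.real {ω | ∃ c, Real.sqrt n / ((level L m : ℝ) + 1) ^ (d + 1 + 2)
        < |latT P X L n ω (cellInd m c)|} ≤ tailBound (d + 1) Cm ((a - 1) / 2) (level L m) := by
  set K := level L m with hK
  set D := d + 1 with hD
  have hKL : K ≤ L := level_le L m
  set q := 2 ^ (K / 8) with hq
  have hq1 : 1 ≤ q := Nat.one_le_two_pow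
  have hn0R : (0 : ℝ) < n := by exact_mod_cast hn0
  have hs0 : 0 < Real.sqrt n := Real.sqrt_pos.2 hn0R
  have hss : Real.sqrt n * Real.sqrt n = n := Real.mul_self_sqrt hn0R.le
  set κ := ((K : ℝ) + 1) ^ (D + 2) with hκ
  have hκ1 : 1 ≤ κ := one_le_pow₀ (by linarith [show (0 : ℝ) ≤ K by positivity])
  have hκ0 : 0 < κ := by linarith
  set lm := Real.sqrt n / (2 * κ) with hlm
  have hlm0 : 0 < lm := by positivity
  have hqR : (1 : ℝ) ≤ q := by exact_mod_cast hq1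
  have hq8 : (q : ℝ) ^ 8 ≤ 2 ^ K := by
    rw [hq]; push_cast; rw [← pow_mul]
    exact pow_le_pow_right₀ (by norm_num) (by omega)
  have h2K : (2 : ℝ) ^ K ≤ 2 * n :=
    (pow_le_pow_right₀ (by norm_num) hKL).trans (by exact_mod_cast hn)
  have hq4 : (q : ℝ) ^ 4 ≤ 2 * Real.sqrt n := by
    refine abs_le_of_sq_le_sq' ?_ (by positivity) |>.2
    calc ((q : ℝ) ^ 4) ^ 2 = (q : ℝ) ^ 8 := by ring
      _ ≤ 2 * (n : ℝ) := hq8.trans h2K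
      _ ≤ (2 * Real.sqrt n) ^ 2 := by nlinarith
  -- with this exponent the drift term `h * lm / q` is `q / (4 κ)`, while `h ^ 2 * V` is at most `1`
  set h := (q : ℝ) ^ 2 / (2 * Real.sqrt n) with hh
  have hh0 : 0 < h := by positivity
  have hh1 : h ≤ 1 := by
    rw [hh, div_le_one (by positivity)]
    exact (pow_le_pow_right₀ hqR (by norm_num)).trans hq4
  set A : (Option (Fin d) → Fin (2 ^ (K + 1))) → ℕ → Set Ω := fun c t =>
    {ω | ∀ i, latPt P X L t ω i / 2 ^ m i = c i} with hA
  have hAm : ∀ c (t : ℕ), MeasurableSet[MeasurableSpace.comap (X t) inferInstance] (A c t) :=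
    fun c t => measurable_latPt hcont L t
      (MeasurableSet.of_discrete (s := {w : Option (Fin d) → ℕ | ∀ i, w i / 2 ^ m i = (c i : ℕ)}))
  have hdisj : ∀ t, Pairwise (Function.onFun Disjoint fun c => A c t) := by
    intro t c c' hcc'
    refine Set.disjoint_left.2 fun ω h h' => hcc' ?_
    funext i
    exact Fin.ext ((h i).symm.trans (h' i))
  have hV : ∀ c, ∑ t ∈ Finset.Icc 1 n, P.real (A c t) + lm ≤ 2 * n / 2 ^ K + lm := fun c =>
    add_le_add (sum_cell_prob_le hX hst hcont hn hm _) le_rfl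
  have hcore := core_maximal (P := P) hX hq1 hAm hdisj (γ := fun r => C * (r : ℝ) ^ (-a)) hγ
    (Finset.Icc 1 n) hlm0 hV hh0 hh1
  refine le_trans (measureReal_mono ?_) (hcore.trans ?_)
  · rintro ω ⟨c, hc⟩
    have e0 : cellInd m c = fun w => if ∀ i, w i / 2 ^ m i = c i then (1 : ℝ) else 0 :=
      funext fun w => cellInd_eq m c w
    rw [e0, latT_indicator hX hcont hnL] at hc
    have hlt : ∀ i, c i < 2 ^ (K + 1) := by
      by_contra hcon
      push Not at hcon
      obtain ⟨i, hi⟩ := hcon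
      -- cells this far out contain no lattice point
      have hne : ∀ t ∈ Finset.Icc 1 n, ∀ ω', ¬ ∀ i, latPt P X L t ω' i / 2 ^ m i = c i := by
        intro t ht ω' hω'
        have h1 := latPt_le (P := P) (X := X) ((Finset.mem_Icc.1 ht).2.trans hnL) ω' i
        have h2 := Nat.div_le_div_right (c := 2 ^ m i) h1
        have h3 : m i ≤ L := by
          have := Finset.mem_range.1 (Fintype.mem_piFinset.1 hm i)
          omega
        rw [hω' i, Nat.pow_div h3 (by norm_num)] at h2
        have h4 : 2 ^ (L - m i) ≤ 2 ^ K := Nat.pow_le_pow_right (by norm_num) (le_level L m i)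
        have h5 : 2 ^ K < 2 ^ (K + 1) := Nat.pow_lt_pow_right (by norm_num) (by omega)
        omega
      rw [Finset.sum_eq_zero] at hc
      · rw [abs_zero] at hc
        exact absurd hc (not_lt.2 (by positivity))
      · intro t ht
        rw [if_neg (hne t ht ω)]
        have : {ω' | ∀ i, latPt P X L t ω' i / 2 ^ m i = c i} = ∅ :=
          eq_empty_of_forall_notMem fun ω' => hne t ht ω'
        rw [this]; simp
    refine ⟨fun i => ⟨c i, hlt i⟩, ?_⟩
    have e1 : 2 * lm = Real.sqrt n / κ := by rw [hlm]; field_simp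
    rw [e1]
    refine hc.trans_le (le_of_eq ?_)
    congr 1
    refine Finset.sum_congr rfl fun t _ => ?_
    congr 1
    simp only [Set.indicator, hA, mem_ofPred_eq, Pi.one_apply]
  · rw [tailBound]
    have hcard : (Fintype.card (Option (Fin d) → Fin (2 ^ (K + 1))) : ℝ) = (2 ^ (K + 1)) ^ D := by
      rw [Fintype.card_fun]; simp [hD]
    rw [hcard]
    refine add_le_add ?_ ?_
    · rw [div_le_iff₀ (by positivity)]
      refine (hCm n q hq1).trans (le_of_eq ?_)
      have e2 : lm ^ 2 = n / (4 * ((K : ℝ) + 1) ^ (2 * (D + 2))) := by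
        rw [hlm, div_pow, sq (Real.sqrt n), hss, mul_pow, hκ, ← pow_mul, mul_comm (D + 2)]
        norm_num
      rw [e2]
      field_simp
      rw [hq]
    · refine mul_le_mul_of_nonneg_left (Real.exp_le_exp.2 (add_le_add ?_ ?_)) (by positivity)
      · rw [neg_le_neg_iff]
        refine le_of_eq ?_
        rw [hh, hlm]
        field_simp
        rw [hκ, hq]
        ring
      · have e3 : h ^ 2 = (q : ℝ) ^ 4 / (4 * n) := by
          rw [hh, div_pow, mul_pow, sq (Real.sqrt n), hss]; ring
        have e4 : h ^ 2 * (2 * n / 2 ^ K + lm)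
            = (q : ℝ) ^ 4 / (2 * 2 ^ K) + (q : ℝ) ^ 4 / (8 * Real.sqrt n * κ) := by
          rw [e3, hlm, mul_add]
          congr 1
          · field_simp; ring
          · field_simp; rw [Real.sq_sqrt hn0R.le]; ring
        rw [e4]
        have h5 : (q : ℝ) ^ 4 / (2 * 2 ^ K) ≤ 1 / 2 := by
          rw [div_le_div_iff₀ (by positivity) (by norm_num)]
          have := (pow_le_pow_right₀ hqR (show 4 ≤ 8 by norm_num)).trans hq8
          linarith
        have h6 : (q : ℝ) ^ 4 / (8 * Real.sqrt n * κ) ≤ 1 / 2 := by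
          rw [div_le_div_iff₀ (by positivity) (by norm_num)]
          nlinarith
        linarith

end latticePoints

/-! ### Asymptotic equicontinuity of the sequential empirical process -/

lemma exists_tail_sum_le {f : ℕ → ℝ} (hf : Summable f) {ε : ℝ} (hε : 0 < ε) :
    ∃ K1, ∀ K0, K1 ≤ K0 → ∀ L, ∑ K ∈ Finset.Icc K0 L, f K ≤ ε := by
  obtain ⟨s, hs⟩ := summable_iff_vanishing_norm.1 hf ε hε
  refine ⟨s.sup id + 1, fun K0 hK0 L => ?_⟩
  have := hs (Finset.Icc K0 L) (Finset.disjoint_left.2 fun k hk hks => by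
    have h1 : k ≤ s.sup id := Finset.le_sup (f := id) hks
    have h2 := (Finset.mem_Icc.1 hk).1
    omega)
  exact (le_abs_self _).trans this.le

section equicontinuity
variable {d : ℕ} {P : Measure Ω} [IsProbabilityMeasure P] {X : ℤ → Ω → Fin d → ℝ}

/-- The event that every dyadic cell of level at least `K0` has a small centred count. -/
def GoodCells (P : Measure Ω) (X : ℤ → Ω → Fin d → ℝ) (L n K0 : ℕ) (ω : Ω) : Prop :=
  ∀ m ∈ allM (Option (Fin d)) L, K0 ≤ level L m → ∀ c,
    |latT P X L n ω (cellInd m c)| ≤ Real.sqrt n / ((level L m : ℝ) + 1) ^ (d + 1 + 2)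

lemma exists_prob_goodCells (hX : ∀ i, Measurable (X i)) (hst : Stationary P X)
    (hcont : ∀ j, Continuous (margCdf P X j)) {a C : ℝ} (ha : 1 < a) (hC : 0 ≤ C)
    (hγ : ∀ r : ℕ, 1 ≤ r → alphaMix P X r ≤ C * (r : ℝ) ^ (-a)) {ε : ℝ} (hε : 0 < ε) :
    ∃ K1, ∀ K0, K1 ≤ K0 → ∀ L n : ℕ, 1 ≤ n → 2 ^ L ≤ 2 * n → n ≤ 2 ^ L →
      P.real {ω | ¬ GoodCells P X L n K0 ω} ≤ ε := by
  obtain ⟨Cm, hCm0, hCm⟩ := exists_mixing_sum_bound ha hC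
  have hκ : 0 < (a - 1) / 2 := by linarith
  obtain ⟨K1, hK1⟩ := exists_tail_sum_le (summable_tailBound (d + 1) hCm0 hκ) hε
  refine ⟨K1, fun K0 hK0 L n hn0 hn hnL => ?_⟩
  have hsub : {ω | ¬ GoodCells P X L n K0 ω} ⊆
      ⋃ m ∈ (allM (Option (Fin d)) L).filter (K0 ≤ level L ·),
        {ω | ∃ c, Real.sqrt n / ((level L m : ℝ) + 1) ^ (d + 1 + 2)
          < |latT P X L n ω (cellInd m c)|} := by
    intro ω hω
    simp only [mem_ofPred_eq, GoodCells] at hω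
    push Not at hω
    obtain ⟨m, hm, hK, c, hc⟩ := hω
    exact mem_biUnion (Finset.mem_coe.2 (Finset.mem_filter.2 ⟨hm, hK⟩)) ⟨c, hc⟩
  refine (measureReal_mono hsub (measure_ne_top _ _)).trans ((measureReal_biUnion_finset_le _ _).trans ?_)
  refine (Finset.sum_le_sum fun m hm =>
    prob_cells_le hX hst hcont hγ hCm hn0 hn hnL (Finset.mem_filter.1 hm).1).trans ?_
  refine (sum_level_le (fun K => tailBound_nonneg (d + 1) hCm0 K)).trans ?_
  have : Fintype.card (Option (Fin d)) = d + 1 := by simp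
  rw [this]
  exact hK1 K0 hK0 L

/-- The centred sum `√n B̃_n(k / n, u)`. -/
noncomputable def cSum (P : Measure Ω) (X : ℤ → Ω → Fin d → ℝ) (k : ℕ) (u : Fin d → ℝ) (ω : Ω) :
    ℝ :=
  ∑ t ∈ Finset.Icc 1 k, ((if ∀ j, unif P X t ω j ≤ u j then (1 : ℝ) else 0) - copula P X u)

lemma Btilde_eq_cSum {n : ℕ} {s : ℝ} (hs : 0 ≤ s) (u : Fin d → ℝ) (ω : Ω) :
    Btilde P X n s u ω = (Real.sqrt n)⁻¹ * cSum P X ⌊(n : ℝ) * s⌋₊ u ω := by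
  rw [Btilde, cSum]
  congr 1
  have h0 : 0 ≤ (n : ℝ) * s := by positivity
  rw [← Int.natCast_floor_eq_floor h0]
  symm
  refine Finset.sum_bij (fun (t : ℕ) _ => (t : ℤ)) ?_ ?_ ?_ ?_
  · intro t ht
    rw [Finset.mem_Icc] at ht ⊢
    omega
  · intro t _ t' _ h
    exact_mod_cast h
  · intro b hb
    rw [Finset.mem_Icc] at hb
    exact ⟨b.toNat, by rw [Finset.mem_Icc]; omega, by omega⟩
  · intro t _
    rfl

/-- The upper corner of the half-open lattice box that corresponds to times up to `k` and to
values up to `x / 2 ^ L`. -/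
def bx (k : ℕ) (x : Fin d → ℕ) : Option (Fin d) → ℕ
  | none => k + 1
  | some j => x j + 1

lemma latT_boxInd_bx (hX : ∀ i, Measurable (X i)) (hst : Stationary P X)
    (hcont : ∀ j, Continuous (margCdf P X j)) {L n : ℕ} (hnL : n ≤ 2 ^ L) (ω : Ω)
    {k : ℕ} (hk : k ≤ n) (x : Fin d → ℕ) :
    latT P X L n ω (boxInd (bx k x)) = cSum P X k (fun j => (x j : ℝ) / 2 ^ L) ω := by
  have e0 : boxInd (bx k x) = fun w => if ∀ i, w i < bx k x i then (1 : ℝ) else 0 :=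
    funext fun w => boxInd_eq _ w
  have h2 : (0 : ℝ) < 2 ^ L := by positivity
  have hiff : ∀ (t : ℕ) ω', (∀ i, latPt P X L t ω' i < bx k x i) ↔
      t ≤ k ∧ ∀ j, unif P X t ω' j ≤ (x j : ℝ) / 2 ^ L := by
    intro t ω'
    rw [Option.forall]
    refine and_congr Nat.lt_succ_iff (forall_congr' fun j => ?_)
    rw [le_div_iff₀ h2, mul_comm, ← Nat.ceil_le]
    exact Nat.lt_succ_iff
  rw [e0, latT_indicator hX hcont hnL, cSum]
  have hsub : Finset.Icc 1 k ⊆ Finset.Icc 1 n := Finset.Icc_subset_Icc_right hk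
  refine (Finset.sum_subset_zero_on_sdiff hsub ?_ ?_).symm
  · intro t ht
    have htk : ¬ t ≤ k := by
      simp only [Finset.mem_sdiff, Finset.mem_Icc] at ht
      omega
    simp only [hiff, htk, false_and, if_false]
    simp
  · intro t ht
    have htk : t ≤ k := (Finset.mem_Icc.1 ht).2
    simp only [hiff, htk, true_and]
    rw [copula_eq hX hst hcont]

lemma cSum_bracket (hX : ∀ i, Measurable (X i)) (hst : Stationary P X)
    (hcont : ∀ j, Continuous (margCdf P X j)) {k : ℕ} {u v w : Fin d → ℝ} (hvu : v ≤ u)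
    (huw : u ≤ w) {b : ℝ} (hb : k * ∑ j, (w j - v j) ≤ b) (ω : Ω) :
    |cSum P X k u ω - cSum P X k v ω| ≤ |cSum P X k w ω - cSum P X k v ω| + b := by
  have hcp := copula_le_add (P := P) (X := X) hX hst hcont (hvu.trans huw)
  have hvu' := copula_mono (P := P) (X := X) hvu
  have huw' := copula_mono (P := P) (X := X) huw
  have hcount : ∀ {v u : Fin d → ℝ}, v ≤ u →
      ∑ t ∈ Finset.Icc 1 k, (if ∀ j, unif P X t ω j ≤ v j then (1 : ℝ) else 0) ≤
      ∑ t ∈ Finset.Icc 1 k, (if ∀ j, unif P X t ω j ≤ u j then (1 : ℝ) else 0) := by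
    intro v u h
    refine Finset.sum_le_sum fun t _ => ?_
    by_cases h1 : ∀ j, unif P X t ω j ≤ v j
    · rw [if_pos h1, if_pos fun j => (h1 j).trans (h j)]
    · rw [if_neg h1]; split_ifs <;> norm_num
  have e : ∀ u, cSum P X k u ω =
      ∑ t ∈ Finset.Icc 1 k, (if ∀ j, unif P X t ω j ≤ u j then (1 : ℝ) else 0)
        - k * copula P X u := by
    intro u
    rw [cSum, Finset.sum_sub_distrib]
    simp
  have h1 := hcount hvu
  have h2 := hcount huw
  have h3 : (k : ℝ) * copula P X w ≤ k * copula P X v + k * ∑ j, (w j - v j) := by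
    rw [← mul_add]; gcongr
  have h4 : (k : ℝ) * copula P X v ≤ k * copula P X u := by gcongr
  have h5 : (k : ℝ) * copula P X u ≤ k * copula P X w := by gcongr
  rw [abs_le]
  rw [e u, e v, e w]
  constructor
  · have := abs_nonneg (∑ t ∈ Finset.Icc 1 k, (if ∀ j, unif P X t ω j ≤ w j then (1 : ℝ) else 0)
        - k * copula P X w -
      (∑ t ∈ Finset.Icc 1 k, (if ∀ j, unif P X t ω j ≤ v j then (1 : ℝ) else 0)
        - k * copula P X v))
    linarith
  · have := le_abs_self (∑ t ∈ Finset.Icc 1 k, (if ∀ j, unif P X t ω j ≤ w j then (1 : ℝ) else 0)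
        - k * copula P X w -
      (∑ t ∈ Finset.Icc 1 k, (if ∀ j, unif P X t ω j ≤ v j then (1 : ℝ) else 0)
        - k * copula P X v))
    linarith

lemma floor_le_floor_add {x y : ℝ} (hy : 0 ≤ y) {N : ℕ} (h : x ≤ y + N) :
    ⌊x⌋₊ ≤ ⌊y⌋₊ + (N + 1) := by
  by_cases hx : 0 ≤ x
  · have h1 := Nat.floor_le hx
    have h2 := Nat.lt_floor_add_one y
    have h3 : (⌊x⌋₊ : ℝ) < ⌊y⌋₊ + (N + 1) := by linarith
    have : ⌊x⌋₊ < ⌊y⌋₊ + (N + 1) := by exact_mod_cast h3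
    omega
  · rw [Nat.floor_of_nonpos (not_le.1 hx).le]; omega

/-- On the event `GoodCells`, the process `B̃_n` moves little over distances `2 ^ (-K0 - 1)`:
its values are compared with those on the lattice, where the chaining bound applies. -/
lemma abs_cSum_sub_le (hX : ∀ i, Measurable (X i)) (hst : Stationary P X)
    (hcont : ∀ j, Continuous (margCdf P X j)) {L n K0 : ℕ} (hL2 : 2 ≤ L) (hK : K0 + 1 ≤ L)
    (hnL : n ≤ 2 ^ L) {ω : Ω} (hω : GoodCells P X L n K0 ω) {θ : ℝ}
    (hθ : ∑ K ∈ Finset.Icc K0 L, 1 / ((K : ℝ) + 1) ^ 2 ≤ θ)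
    {s t : ℝ} {u v : Fin d → ℝ} (hs : s ∈ Icc (0 : ℝ) 1) (ht : t ∈ Icc (0 : ℝ) 1)
    (hu : ∀ j, u j ∈ Icc (0 : ℝ) 1) (hv : ∀ j, v j ∈ Icc (0 : ℝ) 1)
    (hst' : |s - t| ≤ (1 / 2) ^ (K0 + 1)) (huv : ∀ j, |u j - v j| ≤ (1 / 2) ^ (K0 + 1)) :
    |cSum P X ⌊(n : ℝ) * s⌋₊ u ω - cSum P X ⌊(n : ℝ) * t⌋₊ v ω|
      ≤ 9 * (d + 1) * θ * Real.sqrt n + 2 * d := by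
  have h2 : (0 : ℝ) < 2 ^ L := by positivity
  have hnLR : (n : ℝ) ≤ 2 ^ L := by exact_mod_cast hnL
  have h4 : 4 ≤ 2 ^ L := by
    calc 4 = 2 ^ 2 := by norm_num
      _ ≤ 2 ^ L := Nat.pow_le_pow_right (by norm_num) hL2
  have hL1 : 2 ^ (L + 1) = 2 * 2 ^ L := by ring
  set N := 2 ^ (L - (K0 + 1)) with hN
  have hN1 : 1 ≤ N := Nat.one_le_two_pow
  have h2N : 2 ^ (L - K0) = 2 * N := by
    rw [hN, ← pow_succ']; congr 1; omega
  have hNR : (2 : ℝ) ^ L * (1 / 2) ^ (K0 + 1) = N := by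
    rw [hN, one_div, inv_pow, ← div_eq_mul_inv, div_eq_iff (by positivity)]
    push_cast
    rw [← pow_add]; congr 1; omega
  set M := (3 * (d + 1) * θ) * Real.sqrt n with hM
  -- the chaining bound on the lattice
  have hlat : ∀ x y : Option (Fin d) → ℕ, (∀ i, x i < 2 ^ (L + 1)) → (∀ i, y i < 2 ^ (L + 1)) →
      (∀ i, x i ≤ y i + 2 * N) → (∀ i, y i ≤ x i + 2 * N) →
      |latT P X L n ω (boxInd x) - latT P X L n ω (boxInd y)| ≤ M := by
    intro x y hx hy hxy hyx
    refine (abs_box_diff_le (K0 := K0) (L := L) (latT P X L n ω) (by omega)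
      (g := fun K => Real.sqrt n / ((K : ℝ) + 1) ^ (d + 1 + 2)) (fun K => by positivity)
      (fun m hm hKm c => hω m hm hKm c) x y hx hy (by rwa [h2N]) (by rwa [h2N])).trans ?_
    have hc : Fintype.card (Option (Fin d)) = d + 1 := by simp
    rw [hc]
    have e : ∀ K : ℕ, ((K : ℝ) + 1) ^ (d + 1) * (Real.sqrt n / ((K : ℝ) + 1) ^ (d + 1 + 2))
        = Real.sqrt n * (1 / ((K : ℝ) + 1) ^ 2) := by
      intro K
      have : (K : ℝ) + 1 ≠ 0 := by positivity
      rw [pow_add _ (d + 1) 2]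
      field_simp
    simp only [e]
    rw [← Finset.mul_sum, hM]
    have : 0 ≤ Real.sqrt n := Real.sqrt_nonneg _
    push_cast
    calc ((d : ℝ) + 1) * (3 * (Real.sqrt n * ∑ K ∈ Finset.Icc K0 L, 1 / ((K : ℝ) + 1) ^ 2))
        ≤ ((d : ℝ) + 1) * (3 * (Real.sqrt n * θ)) := by gcongr
      _ = 3 * (d + 1) * θ * Real.sqrt n := by ring
  have hflx : ∀ {u : Fin d → ℝ}, (∀ j, u j ∈ Icc (0 : ℝ) 1) → ∀ j, ⌊(2 : ℝ) ^ L * u j⌋₊ ≤ 2 ^ L := by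
    intro u hu j
    refine Nat.floor_le_of_le ?_
    push_cast
    exact mul_le_of_le_one_right h2.le (hu j).2
  have hflk : ∀ {s : ℝ}, s ∈ Icc (0 : ℝ) 1 → ⌊(n : ℝ) * s⌋₊ ≤ n := fun hs =>
    Nat.floor_le_of_le (mul_le_of_le_one_right (Nat.cast_nonneg n) hs.2)
  -- comparison of a point with the lattice point below it
  have hround : ∀ {s : ℝ} {u : Fin d → ℝ}, s ∈ Icc (0 : ℝ) 1 → (∀ j, u j ∈ Icc (0 : ℝ) 1) →
      |cSum P X ⌊(n : ℝ) * s⌋₊ u ω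
        - latT P X L n ω (boxInd (bx ⌊(n : ℝ) * s⌋₊ fun j => ⌊(2 : ℝ) ^ L * u j⌋₊))| ≤ M + d := by
    intro s u hs hu
    have hk := hflk hs
    have hb : ((⌊(n : ℝ) * s⌋₊ : ℕ) : ℝ) * ∑ j, (((⌊(2 : ℝ) ^ L * u j⌋₊ + 1 : ℕ) : ℝ) / 2 ^ L
        - (⌊(2 : ℝ) ^ L * u j⌋₊ : ℝ) / 2 ^ L) ≤ d := by
      have : ∀ j : Fin d, (((⌊(2 : ℝ) ^ L * u j⌋₊ + 1 : ℕ) : ℝ) / 2 ^ L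
        - (⌊(2 : ℝ) ^ L * u j⌋₊ : ℝ) / 2 ^ L) = 1 / 2 ^ L := by
        intro j; push_cast; ring
      simp only [this]
      rw [Finset.sum_const, Finset.card_univ, Fintype.card_fin, nsmul_eq_mul]
      have hkR : ((⌊(n : ℝ) * s⌋₊ : ℕ) : ℝ) ≤ 2 ^ L := le_trans (by exact_mod_cast hk) hnLR
      calc ((⌊(n : ℝ) * s⌋₊ : ℕ) : ℝ) * (d * (1 / 2 ^ L)) ≤ 2 ^ L * (d * (1 / 2 ^ L)) := by gcongr
        _ = d := by field_simp
    have hbr := cSum_bracket (P := P) (X := X) hX hst hcont (k := ⌊(n : ℝ) * s⌋₊) (u := u)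
      (v := fun j => (⌊(2 : ℝ) ^ L * u j⌋₊ : ℝ) / 2 ^ L)
      (w := fun j => ((⌊(2 : ℝ) ^ L * u j⌋₊ + 1 : ℕ) : ℝ) / 2 ^ L)
      (fun j => by
        rw [div_le_iff₀ h2, mul_comm (u j)]
        exact Nat.floor_le (mul_nonneg h2.le (hu j).1))
      (fun j => by
        rw [le_div_iff₀ h2, mul_comm]
        push_cast
        exact (Nat.lt_floor_add_one _).le) hb ω
    rw [← latT_boxInd_bx hX hst hcont hnL ω hk, ← latT_boxInd_bx hX hst hcont hnL ω hk] at hbr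
    refine hbr.trans (add_le_add (hlat _ _ ?_ ?_ ?_ ?_) le_rfl) <;> intro i <;> cases i with
    | none => simp only [bx]; omega
    | some j =>
      have := hflx hu j
      simp only [bx]; omega
  have hx := hround hs hu
  have hy := hround ht hv
  have hxy : |latT P X L n ω (boxInd (bx ⌊(n : ℝ) * s⌋₊ fun j => ⌊(2 : ℝ) ^ L * u j⌋₊))
      - latT P X L n ω (boxInd (bx ⌊(n : ℝ) * t⌋₊ fun j => ⌊(2 : ℝ) ^ L * v j⌋₊))| ≤ M := by
    have hb1 : ∀ {s : ℝ} {u : Fin d → ℝ}, s ∈ Icc (0 : ℝ) 1 → (∀ j, u j ∈ Icc (0 : ℝ) 1) →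
        ∀ i, bx ⌊(n : ℝ) * s⌋₊ (fun j => ⌊(2 : ℝ) ^ L * u j⌋₊) i < 2 ^ (L + 1) := by
      intro s u hs hu i
      cases i with
      | none =>
        have := hflk hs
        simp only [bx]; omega
      | some j =>
        have := hflx hu j
        simp only [bx]; omega
    have hb2 : ∀ {s t : ℝ} {u v : Fin d → ℝ}, t ∈ Icc (0 : ℝ) 1 → (∀ j, v j ∈ Icc (0 : ℝ) 1) →
        |s - t| ≤ (1 / 2) ^ (K0 + 1) → (∀ j, |u j - v j| ≤ (1 / 2) ^ (K0 + 1)) →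
        ∀ i, bx ⌊(n : ℝ) * s⌋₊ (fun j => ⌊(2 : ℝ) ^ L * u j⌋₊) i
          ≤ bx ⌊(n : ℝ) * t⌋₊ (fun j => ⌊(2 : ℝ) ^ L * v j⌋₊) i + 2 * N := by
      intro s t u v ht hv hst' huv i
      cases i with
      | none =>
        have : (n : ℝ) * s ≤ n * t + N := by
          have h5 := (le_abs_self _).trans hst'
          have h6 : (n : ℝ) * (s - t) ≤ n * (1 / 2) ^ (K0 + 1) := by gcongr
          have h7 : (n : ℝ) * (1 / 2) ^ (K0 + 1) ≤ 2 ^ L * (1 / 2) ^ (K0 + 1) := by gcongr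
          linarith
        have := floor_le_floor_add (mul_nonneg (Nat.cast_nonneg n) ht.1) this
        simp only [bx]; omega
      | some j =>
        have : (2 : ℝ) ^ L * u j ≤ 2 ^ L * v j + N := by
          have h5 := (le_abs_self _).trans (huv j)
          have h6 : (2 : ℝ) ^ L * (u j - v j) ≤ 2 ^ L * (1 / 2) ^ (K0 + 1) := by gcongr
          linarith
        have := floor_le_floor_add (mul_nonneg h2.le (hv j).1) this
        simp only [bx]; omega
    refine hlat _ _ (hb1 hs hu) (hb1 ht hv) (hb2 ht hv hst' huv) (hb2 hs hu ?_ fun j => ?_)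
    · rwa [abs_sub_comm]
    · rw [abs_sub_comm]; exact huv j
  rw [abs_le] at hx hy hxy ⊢
  constructor <;> linarith [hx.1, hx.2, hy.1, hy.2, hxy.1, hxy.2]

/-- Modulus-of-continuity event: `B̃_n` moves by at most `ε` over distances at most `δ`. -/
def Equi (P : Measure Ω) (X : ℤ → Ω → Fin d → ℝ) (n : ℕ) (δ ε : ℝ) (ω : Ω) : Prop :=
  ∀ (s t : ℝ) (u v : Fin d → ℝ), s ∈ Icc (0 : ℝ) 1 → t ∈ Icc (0 : ℝ) 1 →
    (∀ j, u j ∈ Icc (0 : ℝ) 1) → (∀ j, v j ∈ Icc (0 : ℝ) 1) → |s - t| ≤ δ →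
    (∀ j, |u j - v j| ≤ δ) → |Btilde P X n s u ω - Btilde P X n t v ω| ≤ ε

/-- Asymptotic equicontinuity: with probability close to one, and for all large `n`, the process
`B̃_n` moves by at most `ε` over small distances. -/
theorem exists_equi (hX : ∀ i, Measurable (X i)) (hst : Stationary P X)
    (hcont : ∀ j, Continuous (margCdf P X j)) {a Ca : ℝ} (ha : 1 < a)
    (hmix : ∀ r : ℕ, 1 ≤ r → alphaMix P X r ≤ Ca * (r : ℝ) ^ (-a)) {ε ε' : ℝ} (hε : 0 < ε)
    (hε' : 0 < ε') :
    ∃ δ : ℝ, 0 < δ ∧ ∃ n0 : ℕ, ∀ n, n0 ≤ n → P.real {ω | ¬ Equi P X n δ ε ω} ≤ ε' := by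
  have hγ : ∀ r : ℕ, 1 ≤ r → alphaMix P X r ≤ |Ca| * (r : ℝ) ^ (-a) := fun r hr =>
    (hmix r hr).trans (by gcongr; exact le_abs_self _)
  obtain ⟨K1, hK1⟩ := exists_prob_goodCells hX hst hcont ha (abs_nonneg Ca) hγ hε'
  have hsum : Summable fun K : ℕ => 1 / ((K : ℝ) + 1) ^ 2 := by
    have := (summable_nat_add_iff 1).2 (Real.summable_one_div_nat_pow.2 (le_refl 2))
    simpa using this
  set θ := ε / (18 * (d + 1)) with hθ
  have hθ0 : 0 < θ := by positivity
  obtain ⟨K2, hK2⟩ := exists_tail_sum_le hsum hθ0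
  set K0 := max K1 K2 with hK0
  obtain ⟨n1, hn1⟩ := exists_nat_gt ((4 * d / ε) ^ 2)
  refine ⟨(1 / 2) ^ (K0 + 1), by positivity, max (2 ^ (K0 + 1)) (max n1 2), fun n hn => ?_⟩
  have hnK : 2 ^ (K0 + 1) ≤ n := (le_max_left _ _).trans hn
  have hnn1 : n1 ≤ n := ((le_max_left _ _).trans (le_max_right _ _)).trans hn
  have hn2 : 2 ≤ n := ((le_max_right _ _).trans (le_max_right _ _)).trans hn
  -- the lattice has between `n` and `2 * n` points in each direction
  set L := Nat.log 2 n + 1 with hL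
  have hnL : n ≤ 2 ^ L := (Nat.lt_pow_succ_log_self (by norm_num) n).le
  have hLn : 2 ^ L ≤ 2 * n := by
    rw [hL, pow_succ']
    exact Nat.mul_le_mul_left 2 (Nat.pow_log_le_self 2 (by omega))
  have hlog : K0 + 1 ≤ Nat.log 2 n := Nat.le_log_of_pow_le (by norm_num) hnK
  have hn0R : (0 : ℝ) < n := by exact_mod_cast (by omega : 0 < n)
  have hs0 : 0 < Real.sqrt n := Real.sqrt_pos.2 hn0R
  have hsq : 4 * d / ε ≤ Real.sqrt n := by
    refine Real.le_sqrt_of_sq_le (hn1.le.trans (by exact_mod_cast hnn1))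
  refine (measureReal_mono ?_).trans (hK1 K0 (le_max_left _ _) L n (by omega) hLn hnL)
  intro ω hω hgood
  refine hω fun s t u v hs ht hu hv hst' huv => ?_
  have := abs_cSum_sub_le hX hst hcont (by omega) (by omega) hnL hgood
    (hK2 K0 (le_max_right _ _) L) hs ht hu hv hst' huv
  rw [Btilde_eq_cSum hs.1, Btilde_eq_cSum ht.1, ← mul_sub, abs_mul, abs_of_pos (inv_pos.2 hs0),
    inv_mul_le_iff₀ hs0]
  refine this.trans ?_
  have e1 : 9 * ((d : ℝ) + 1) * θ = ε / 2 := by rw [hθ]; field_simp; norm_num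
  rw [e1]
  rw [div_le_iff₀ hε] at hsq
  linarith

end equicontinuity

/-! ### Ranks, and the empirical copula in terms of the empirical process -/

/-- The level set `{rank ≤ y}` of the ranks of a finite injective family is a lower level set
`{f ≤ v}` of the family itself, and has about `y` elements. -/
lemma exists_threshold (I : Finset ℤ) {f : ℤ → ℝ} (hinj : ∀ i ∈ I, ∀ i' ∈ I, i ≠ i' → f i ≠ f i')
    (h0 : ∀ i ∈ I, 0 < f i) (h1 : ∀ i ∈ I, f i ≤ 1) {y : ℝ} (hy0 : 0 ≤ y) (hy : y ≤ I.card) :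
    ∃ v ∈ Icc (0 : ℝ) 1,
      (∀ i ∈ I, (((I.filter fun m => f m ≤ f i).card : ℝ) ≤ y ↔ f i ≤ v)) ∧
      |((I.filter fun i => f i ≤ v).card : ℝ) - y| ≤ 1 := by
  set rk : ℤ → ℕ := fun i => (I.filter fun m => f m ≤ f i).card with hrk
  set S := I.filter fun i => (rk i : ℝ) ≤ y with hS
  have hupper : y ≤ S.card + 1 := by
    by_cases hSI : S = I
    · rw [hSI]; linarith
    · have hne : (I \ S).Nonempty := by
        rw [Finset.sdiff_nonempty]
        exact fun h => hSI (Finset.Subset.antisymm (Finset.filter_subset _ _) h)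
      obtain ⟨m, hm, hmin⟩ := Finset.exists_min_image (I \ S) f hne
      rw [Finset.mem_sdiff] at hm
      have hsub : (I.filter fun i => f i ≤ f m) ⊆ insert m S := by
        intro i hi
        rw [Finset.mem_filter] at hi
        rw [Finset.mem_insert]
        by_contra hcon
        push Not at hcon
        have := hmin i (Finset.mem_sdiff.2 ⟨hi.1, hcon.2⟩)
        exact hinj i hi.1 m hm.1 hcon.1 (le_antisymm hi.2 this)
      have hcard : rk m ≤ S.card + 1 :=
        (Finset.card_le_card hsub).trans (Finset.card_insert_le _ _)
      have hlt : y < rk m := by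
        by_contra hcon
        exact hm.2 (Finset.mem_filter.2 ⟨hm.1, not_lt.1 hcon⟩)
      have : (rk m : ℝ) ≤ S.card + 1 := by exact_mod_cast hcard
      linarith
  rcases S.eq_empty_or_nonempty with hemp | hne
  · refine ⟨0, ⟨le_rfl, zero_le_one⟩, fun i hi => ?_, ?_⟩
    · refine iff_of_false (fun h => ?_) (not_le.2 (h0 i hi))
      have : i ∈ S := Finset.mem_filter.2 ⟨hi, h⟩
      rw [hemp] at this
      exact absurd this (Finset.notMem_empty i)
    · have : (I.filter fun i => f i ≤ 0) = ∅ :=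
        Finset.filter_false_of_mem fun i hi => not_le.2 (h0 i hi)
      rw [hemp, Finset.card_empty] at hupper
      rw [this, Finset.card_empty, abs_le]
      push_cast at hupper ⊢
      constructor <;> linarith
  · obtain ⟨m, hm, hmax⟩ := Finset.exists_max_image S f hne
    have hm' := Finset.mem_filter.1 hm
    have hiff : ∀ i ∈ I, ((rk i : ℝ) ≤ y ↔ f i ≤ f m) := by
      intro i hi
      refine ⟨fun h => hmax i (Finset.mem_filter.2 ⟨hi, h⟩), fun h => ?_⟩
      have : rk i ≤ rk m := Finset.card_le_card fun k hk => by
        rw [Finset.mem_filter] at hk ⊢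
        exact ⟨hk.1, hk.2.trans h⟩
      exact le_trans (by exact_mod_cast this) hm'.2
    refine ⟨f m, ⟨(h0 m hm'.1).le, h1 m hm'.1⟩, hiff, ?_⟩
    have e : (I.filter fun i => f i ≤ f m) = S := Finset.filter_congr fun i hi => (hiff i hi).symm
    have h3 : (S.card : ℝ) ≤ y := by rw [← e]; exact hm'.2
    rw [e, abs_le]
    constructor <;> linarith

section ranks
variable {d : ℕ} {P : Measure Ω} [IsProbabilityMeasure P] {X : ℤ → Ω → Fin d → ℝ}

/-- The almost sure event on which the first `n` observations have no ties, `F_j` is strictly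
increasing along the observations, and no `U_{ij}` vanishes. -/
def Nice (P : Measure Ω) (X : ℤ → Ω → Fin d → ℝ) (n : ℕ) (ω : Ω) : Prop :=
  (∀ j, ∀ i ∈ Finset.Icc (1 : ℤ) (n : ℤ), ∀ i' ∈ Finset.Icc (1 : ℤ) (n : ℤ),
        i ≠ i' → X i ω j ≠ X i' ω j) ∧
  (∀ i i' j, X i ω j < X i' ω j → unif P X i ω j < unif P X i' ω j) ∧
  ∀ i j, 0 < unif P X i ω j

lemma ae_nice (hX : ∀ i, Measurable (X i)) (hst : Stationary P X)
    (hcont : ∀ j, Continuous (margCdf P X j)) (n : ℕ)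
    (hties : ∀ j : Fin d, ∀ᵐ ω ∂P,
      ∀ i ∈ Finset.Icc (1 : ℤ) (n : ℤ), ∀ i' ∈ Finset.Icc (1 : ℤ) (n : ℤ),
        i ≠ i' → X i ω j ≠ X i' ω j) : ∀ᵐ ω ∂P, Nice P X n ω := by
  have h1 : ∀ᵐ ω ∂P, ∀ (i : ℤ) (j : Fin d) (r : ℚ), ¬ (unif P X i ω j ≤ margCdf P X j r ∧
      ¬ X i ω j ≤ r) := by
    rw [ae_all_iff]; intro i
    rw [ae_all_iff]; intro j
    rw [ae_all_iff]; intro r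
    rw [ae_iff]
    simp only [not_not]
    have hsub : {ω | X i ω j ≤ r} ⊆ {ω | unif P X i ω j ≤ margCdf P X j r} :=
      fun ω hω => margCdf_mono j hω
    have hm : MeasurableSet {ω | X i ω j ≤ r} :=
      ((measurable_pi_apply j).comp (hX i)) measurableSet_Iic
    have := measureReal_sdiff hsub hm (μ := P)
    rw [prob_X_le hX hst, prob_unif_le hX hst hcont i j ⟨margCdf_nonneg _ _, margCdf_le_one _ _⟩,
      sub_self, measureReal_eq_zero_iff] at this
    exact this
  have h2 : ∀ᵐ ω ∂P, ∀ (i : ℤ) (j : Fin d), ¬ unif P X i ω j ≤ 0 := by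
    rw [ae_all_iff]; intro i
    rw [ae_all_iff]; intro j
    rw [ae_iff]
    simp only [not_not]
    have := prob_unif_le hX hst hcont i j (u := 0) ⟨le_rfl, zero_le_one⟩
    rwa [measureReal_eq_zero_iff] at this
  filter_upwards [ae_all_iff.2 hties, h1, h2] with ω ht h1 h2
  refine ⟨ht, fun i i' j h => ?_, fun i j => not_le.1 (h2 i j)⟩
  obtain ⟨r, hr1, hr2⟩ := exists_rat_btwn h
  have h3 : margCdf P X j r < unif P X i' ω j := by
    by_contra hcon
    exact h1 i' j r ⟨not_lt.1 hcon, not_le.2 hr2⟩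
  exact (margCdf_mono j hr1.le).trans_lt h3

/-- The increment `B̃_n(t, u) - B̃_n(s, u)`. -/
noncomputable def Binc (P : Measure Ω) (X : ℤ → Ω → Fin d → ℝ) (n : ℕ) (s t : ℝ) (u : Fin d → ℝ)
    (ω : Ω) : ℝ :=
  Btilde P X n t u ω - Btilde P X n s u ω

lemma Binc_eq {n : ℕ} {s t : ℝ} (hs : 0 ≤ s) (hst : s ≤ t) (u : Fin d → ℝ) (ω : Ω) :
    Binc P X n s t u ω = (Real.sqrt n)⁻¹ *
      ((((Finset.Icc (⌊(n : ℝ) * s⌋ + 1) ⌊(n : ℝ) * t⌋).filter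
          fun i => ∀ j, unif P X i ω j ≤ u j).card : ℝ)
        - ((Finset.Icc (⌊(n : ℝ) * s⌋ + 1) ⌊(n : ℝ) * t⌋).card : ℝ) * copula P X u) := by
  have h0 : 0 ≤ ⌊(n : ℝ) * s⌋ := Int.floor_nonneg.2 (by positivity)
  have hle : ⌊(n : ℝ) * s⌋ ≤ ⌊(n : ℝ) * t⌋ := Int.floor_le_floor (by gcongr)
  set k := ⌊(n : ℝ) * s⌋
  set l := ⌊(n : ℝ) * t⌋
  rw [Binc, Btilde, Btilde, ← mul_sub]
  congr 1
  have hdisj : Disjoint (Finset.Icc 1 k) (Finset.Icc (k + 1) l) := by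
    rw [Finset.disjoint_left]
    intro i hi hi'
    rw [Finset.mem_Icc] at hi hi'
    omega
  have hun : Finset.Icc 1 l = Finset.Icc 1 k ∪ Finset.Icc (k + 1) l := by
    ext i
    simp only [Finset.mem_union, Finset.mem_Icc]
    omega
  change ∑ i ∈ Finset.Icc 1 l, _ - ∑ i ∈ Finset.Icc 1 k, _ = _
  rw [hun, Finset.sum_union hdisj, add_sub_cancel_left, Finset.sum_sub_distrib, Finset.sum_const,
    nsmul_eq_mul, Finset.sum_ite, Finset.sum_const_zero, add_zero, Finset.sum_const, nsmul_eq_mul,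
    mul_one]
  rfl

lemma copula_uvec (hX : ∀ i, Measurable (X i)) (hst : Stationary P X)
    (hcont : ∀ j, Continuous (margCdf P X j)) {v : Fin d → ℝ} {j : Fin d}
    (hv : v j ∈ Icc (0 : ℝ) 1) : copula P X (uvec v j) = v j := by
  rw [← copula_eq hX hst hcont 1, ← prob_unif_le hX hst hcont 1 j hv]
  congr 1
  ext ω
  refine ⟨fun h => by simpa [uvec] using h j, fun h i => ?_⟩
  by_cases hij : i = j
  · subst hij; simpa [uvec] using h
  · simpa [uvec, hij] using (unif_mem (P := P) (X := X) 1 ω i).2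

lemma forall_unif_le_uvec {v : Fin d → ℝ} {j : Fin d} (i : ℤ) (ω : Ω) :
    (∀ j', unif P X i ω j' ≤ uvec v j j') ↔ unif P X i ω j ≤ v j := by
  refine ⟨fun h => by simpa [uvec] using h j, fun h j' => ?_⟩
  by_cases hij : j' = j
  · subst hij; simpa [uvec] using h
  · simpa [uvec, hij] using (unif_mem (P := P) (X := X) i ω j').2

lemma lam_eq {n : ℕ} {s t : ℝ} (hst : s ≤ t) :
    lam n s t = ((Finset.Icc (⌊(n : ℝ) * s⌋ + 1) ⌊(n : ℝ) * t⌋).card : ℝ) / n := by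
  have hle : ⌊(n : ℝ) * s⌋ ≤ ⌊(n : ℝ) * t⌋ := Int.floor_le_floor (by gcongr)
  rw [lam, Int.card_Icc]
  congr 1
  have : (((⌊(n : ℝ) * t⌋ + 1 - (⌊(n : ℝ) * s⌋ + 1)).toNat : ℤ) : ℝ)
      = ((⌊(n : ℝ) * t⌋ - ⌊(n : ℝ) * s⌋ : ℤ) : ℝ) := by
    rw [Int.toNat_of_nonneg (by omega)]; congr 1; omega
  rw [Int.cast_natCast] at this
  rw [this]
  push_cast; ring

/-- The empirical copula at `u` is the empirical c.d.f. of the `U_i` at a random point `v`, whose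
distance to `u` is governed by the marginal empirical processes. -/
lemma exists_representation (hX : ∀ i, Measurable (X i)) (hst : Stationary P X)
    (hcont : ∀ j, Continuous (margCdf P X j)) {n : ℕ} (hn : 1 ≤ n) {ω : Ω} (hω : Nice P X n ω)
    {s t : ℝ} (hs : 0 ≤ s) (hst' : s ≤ t) (ht : t ≤ 1) {u : Fin d → ℝ}
    (hu : ∀ j, u j ∈ Icc (0 : ℝ) 1) :
    ∃ v : Fin d → ℝ, (∀ j, v j ∈ Icc (0 : ℝ) 1) ∧
      seqEmpCopProc P X n s t u ω = Binc P X n s t v ω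
        + Real.sqrt n * lam n s t * (copula P X v - copula P X u) ∧
      ∀ j, |Real.sqrt n * lam n s t * (v j - u j) + Binc P X n s t (uvec v j) ω|
        ≤ (Real.sqrt n)⁻¹ := by
  have hn0R : (0 : ℝ) < n := by exact_mod_cast hn
  have hs0 : 0 < Real.sqrt n := Real.sqrt_pos.2 hn0R
  have hss : Real.sqrt n * Real.sqrt n = n := Real.mul_self_sqrt hn0R.le
  set I := Finset.Icc (⌊(n : ℝ) * s⌋ + 1) ⌊(n : ℝ) * t⌋ with hI
  have hIn : I ⊆ Finset.Icc (1 : ℤ) n := by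
    have h0 : 0 ≤ ⌊(n : ℝ) * s⌋ := Int.floor_nonneg.2 (by positivity)
    have h1 : ⌊(n : ℝ) * t⌋ ≤ (n : ℤ) := by
      refine Int.floor_le_iff.2 ?_
      push_cast
      nlinarith
    intro i hi
    rw [hI, Finset.mem_Icc] at hi
    rw [Finset.mem_Icc]
    omega
  have hcore : Real.sqrt n * lam n s t = (Real.sqrt n)⁻¹ * I.card := by
    rw [lam_eq hst', ← hI]
    field_simp
    rw [Real.sq_sqrt hn0R.le]
    ring
  have hxu : ∀ i i' j, X i ω j ≤ X i' ω j ↔ unif P X i ω j ≤ unif P X i' ω j := by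
    intro i i' j
    refine ⟨fun h => margCdf_mono j h, fun h => ?_⟩
    by_contra hcon
    exact absurd (hω.2.1 i' i j (not_le.1 hcon)) (not_lt.2 h)
  have hthr : ∀ j, ∃ v ∈ Icc (0 : ℝ) 1,
      (∀ i ∈ I, (((I.filter fun m => unif P X m ω j ≤ unif P X i ω j).card : ℝ) ≤ I.card * u j ↔
        unif P X i ω j ≤ v)) ∧
      |((I.filter fun i => unif P X i ω j ≤ v).card : ℝ) - I.card * u j| ≤ 1 := by
    intro j
    refine exists_threshold I (f := fun i => unif P X i ω j) (fun i hi i' hi' hne h => ?_)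
      (fun i _ => hω.2.2 i j) (fun i _ => (unif_mem i ω j).2)
      (mul_nonneg (Nat.cast_nonneg _) (hu j).1) (mul_le_of_le_one_right (Nat.cast_nonneg _) (hu j).2)
    exact hω.1 j i (hIn hi) i' (hIn hi') hne
      (le_antisymm ((hxu i i' j).2 (le_of_eq h)) ((hxu i' i j).2 (le_of_eq h.symm)))
  choose v hv hviff hvcard using hthr
  refine ⟨v, hv, ?_, fun j => ?_⟩
  · rw [Binc_eq hs hst', ← hI, seqEmpCopProc, hcore, empCop, ← hI]
    rcases I.eq_empty_or_nonempty with hemp | hne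
    · rw [hemp]; simp
    have hc0 : (0 : ℝ) < I.card := by exact_mod_cast hne.card_pos
    have hsum : ∑ i ∈ I, (if ∀ j, (rank X (⌊(n : ℝ) * s⌋ + 1) ⌊(n : ℝ) * t⌋ i j ω : ℝ) / (I.card : ℝ)
          ≤ u j then (1 : ℝ) else 0)
        = ((I.filter fun i => ∀ j, unif P X i ω j ≤ v j).card : ℝ) := by
      rw [Finset.sum_boole]
      congr 2
      refine Finset.filter_congr fun i hi => forall_congr' fun j => ?_
      rw [div_le_iff₀ hc0, mul_comm (u j), ← hviff j i hi, rank, ← hI]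
      simp only [hxu]
    rw [hsum]
    field_simp
    ring
  · rw [Binc_eq hs hst', ← hI, copula_uvec hX hst hcont (hv j), hcore]
    simp only [forall_unif_le_uvec]
    rw [mul_assoc, ← mul_add, abs_mul, abs_of_pos (inv_pos.2 hs0)]
    refine mul_le_of_le_one_right (inv_pos.2 hs0).le (le_of_eq_of_le ?_ (hvcard j))
    congr 1
    ring

lemma Btilde_uvec_eq_zero (hX : ∀ i, Measurable (X i)) (hst : Stationary P X)
    (hcont : ∀ j, Continuous (margCdf P X j)) {n : ℕ} {ω : Ω} (hω : Nice P X n ω) (s : ℝ)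
    {u : Fin d → ℝ} {j : Fin d} (hu : u j = 0 ∨ u j = 1) :
    Btilde P X n s (uvec u j) ω = 0 := by
  have hmem : u j ∈ Icc (0 : ℝ) 1 := by
    rcases hu with h | h <;> rw [h] <;> norm_num
  rw [Btilde, Finset.sum_eq_zero, mul_zero]
  intro i _
  have h1 : (∀ j', margCdf P X j' (X i ω j') ≤ uvec u j j') ↔ unif P X i ω j ≤ u j :=
    forall_unif_le_uvec i ω
  rw [copula_uvec hX hst hcont hmem]
  simp only [h1]
  rcases hu with h | h
  · rw [h, if_neg (not_le.2 (hω.2.2 i j)), sub_zero]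
  · rw [h, if_pos (unif_mem i ω j).2, sub_self]

end ranks

/-! ### Partial derivatives of the copula -/

section derivatives
variable {d : ℕ} {P : Measure Ω} [IsProbabilityMeasure P] {X : ℤ → Ω → Fin d → ℝ}

lemma abs_copula_update_sub_le (hX : ∀ i, Measurable (X i)) (hst : Stationary P X)
    (hcont : ∀ j, Continuous (margCdf P X j)) (p : Fin d → ℝ) (j : Fin d) (x y : ℝ) :
    |copula P X (Function.update p j x) - copula P X (Function.update p j y)| ≤ |x - y| := by
  wlog h : y ≤ x generalizing x y
  · rw [abs_sub_comm, abs_sub_comm x]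
    exact this y x (le_of_not_ge h)
  have hle : Function.update p j y ≤ Function.update p j x :=
    update_le_update_iff.2 ⟨h, fun _ _ => le_rfl⟩
  have h1 := copula_mono (P := P) (X := X) hle
  have h2 := copula_le_add hX hst hcont hle
  have h3 : ∑ i, (Function.update p j x i - Function.update p j y i) = x - y := by
    rw [Finset.sum_eq_single j]
    · simp
    · intro i _ hij
      simp [hij]
    · simp
  rw [abs_of_nonneg (by linarith), abs_of_nonneg (by linarith)]
  linarith

variable {Cdot : Fin d → (Fin d → ℝ) → ℝ}

lemma hasDerivAt_copula_update
    (hpd_deriv : ∀ (j : Fin d) (u : Fin d → ℝ), (∀ i, u i ∈ Icc (0 : ℝ) 1) →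
      u j ∈ Ioo (0 : ℝ) 1 →
      HasDerivWithinAt (fun v => copula P X (Function.update u j v))
        (Cdot j u) (Icc (0 : ℝ) 1) (u j))
    {p : Fin d → ℝ} (hp : ∀ i, p i ∈ Icc (0 : ℝ) 1) {j : Fin d} {x : ℝ} (hx : x ∈ Ioo (0 : ℝ) 1) :
    HasDerivAt (fun v => copula P X (Function.update p j v)) (Cdot j (Function.update p j x)) x := by
  have := hpd_deriv j (Function.update p j x) (fun i => ?_) (by simpa using hx)
  · simp only [Function.update_idem, Function.update_self] at this
    exact this.hasDerivAt (Icc_mem_nhds hx.1 hx.2)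
  · by_cases hij : i = j
    · subst hij; simpa using Ioo_subset_Icc_self hx
    · simpa [hij] using hp i

lemma abs_Cdot_le_one (hX : ∀ i, Measurable (X i)) (hst : Stationary P X)
    (hcont : ∀ j, Continuous (margCdf P X j))
    (hpd_deriv : ∀ (j : Fin d) (u : Fin d → ℝ), (∀ i, u i ∈ Icc (0 : ℝ) 1) →
      u j ∈ Ioo (0 : ℝ) 1 →
      HasDerivWithinAt (fun v => copula P X (Function.update u j v))
        (Cdot j u) (Icc (0 : ℝ) 1) (u j))
    (hpd_zero : ∀ (j : Fin d) (u : Fin d → ℝ), u j = 0 ∨ u j = 1 → Cdot j u = 0)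
    {u : Fin d → ℝ} (hu : ∀ i, u i ∈ Icc (0 : ℝ) 1) (j : Fin d) : |Cdot j u| ≤ 1 := by
  by_cases h0 : u j = 0 ∨ u j = 1
  · rw [hpd_zero j u h0]; norm_num
  · push Not at h0
    have hj : u j ∈ Ioo (0 : ℝ) 1 :=
      ⟨lt_of_le_of_ne (hu j).1 (Ne.symm h0.1), lt_of_le_of_ne (hu j).2 h0.2⟩
    have hder := hasDerivAt_copula_update (j := j) hpd_deriv hu hj
    rw [Function.update_eq_self] at hder
    refine hder.le_of_lip' zero_le_one (Eventually.of_forall fun x => ?_)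
    rw [one_mul]
    exact abs_copula_update_sub_le hX hst hcont u j x (u j)

/-- Mean value theorem along one coordinate. -/
lemma exists_mvt_coord (hX : ∀ i, Measurable (X i)) (hst : Stationary P X)
    (hcont : ∀ j, Continuous (margCdf P X j))
    (hpd_deriv : ∀ (j : Fin d) (u : Fin d → ℝ), (∀ i, u i ∈ Icc (0 : ℝ) 1) →
      u j ∈ Ioo (0 : ℝ) 1 →
      HasDerivWithinAt (fun v => copula P X (Function.update u j v))
        (Cdot j u) (Icc (0 : ℝ) 1) (u j))
    {p : Fin d → ℝ} (hp : ∀ i, p i ∈ Icc (0 : ℝ) 1) (j : Fin d) {x y : ℝ}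
    (hx : x ∈ Icc (0 : ℝ) 1) (hy : y ∈ Icc (0 : ℝ) 1) :
    ∃ z ∈ Icc (0 : ℝ) 1, |z - x| ≤ |y - x| ∧
      copula P X (Function.update p j y) - copula P X (Function.update p j x)
        = Cdot j (Function.update p j z) * (y - x) := by
  have hcts : Continuous fun v => copula P X (Function.update p j v) := by
    refine LipschitzWith.continuous (K := 1) (LipschitzWith.of_dist_le_mul fun x y => ?_)
    rw [NNReal.coe_one, one_mul]
    exact abs_copula_update_sub_le hX hst hcont p j x y
  rcases lt_trichotomy x y with h | h | h
  · obtain ⟨z, hz, hz'⟩ := exists_hasDerivAt_eq_slope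
      (fun v => copula P X (Function.update p j v)) (fun v => Cdot j (Function.update p j v)) h
      hcts.continuousOn fun z hz => hasDerivAt_copula_update hpd_deriv hp
        ⟨hx.1.trans_lt hz.1, hz.2.trans_le hy.2⟩
    refine ⟨z, ⟨hx.1.trans hz.1.le, hz.2.le.trans hy.2⟩, ?_, ?_⟩
    · rw [abs_of_pos (by linarith [hz.1]), abs_of_pos (by linarith)]; linarith [hz.2]
    · rw [eq_div_iff (by linarith)] at hz'
      exact hz'.symm
  · subst h
    exact ⟨x, hx, le_rfl, by simp⟩
  · obtain ⟨z, hz, hz'⟩ := exists_hasDerivAt_eq_slope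
      (fun v => copula P X (Function.update p j v)) (fun v => Cdot j (Function.update p j v)) h
      hcts.continuousOn fun z hz => hasDerivAt_copula_update hpd_deriv hp
        ⟨hy.1.trans_lt hz.1, hz.2.trans_le hx.2⟩
    refine ⟨z, ⟨hy.1.trans hz.1.le, hz.2.le.trans hx.2⟩, ?_, ?_⟩
    · rw [abs_of_neg (by linarith [hz.2]), abs_of_neg (by linarith)]; linarith [hz.1]
    · rw [eq_div_iff (by linarith)] at hz'
      linarith

/-- The increment of the copula as a combination of partial derivatives at intermediate points,
obtained by changing one coordinate at a time. -/
lemma exists_copula_increment (hX : ∀ i, Measurable (X i)) (hst : Stationary P X)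
    (hcont : ∀ j, Continuous (margCdf P X j))
    (hpd_deriv : ∀ (j : Fin d) (u : Fin d → ℝ), (∀ i, u i ∈ Icc (0 : ℝ) 1) →
      u j ∈ Ioo (0 : ℝ) 1 →
      HasDerivWithinAt (fun v => copula P X (Function.update u j v))
        (Cdot j u) (Icc (0 : ℝ) 1) (u j))
    {u v : Fin d → ℝ} (hu : ∀ i, u i ∈ Icc (0 : ℝ) 1) (hv : ∀ i, v i ∈ Icc (0 : ℝ) 1) :
    ∃ w : Fin d → Fin d → ℝ, (∀ j i, w j i ∈ Icc (0 : ℝ) 1) ∧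
      (∀ j i, |w j i - u i| ≤ |v i - u i|) ∧
      copula P X v - copula P X u = ∑ j, Cdot j (w j) * (v j - u j) := by
  have key : ∀ S : Finset (Fin d), ∃ w : Fin d → Fin d → ℝ, (∀ j i, w j i ∈ Icc (0 : ℝ) 1) ∧
      (∀ j i, |w j i - u i| ≤ |v i - u i|) ∧
      copula P X (S.piecewise v u) - copula P X u = ∑ j ∈ S, Cdot j (w j) * (v j - u j) := by
    intro S
    induction S using Finset.induction_on with
    | empty => exact ⟨fun _ => u, fun _ => hu, fun j i => by simp, by simp⟩
    | insert j S hj ih =>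
      obtain ⟨w, hw, hwu, he⟩ := ih
      set p := S.piecewise v u with hp
      have hpm : ∀ i, p i ∈ Icc (0 : ℝ) 1 := fun i => by
        by_cases h : i ∈ S
        · rw [hp, Finset.piecewise_eq_of_mem _ _ _ h]; exact hv i
        · rw [hp, Finset.piecewise_eq_of_notMem _ _ _ h]; exact hu i
      have hpu : ∀ i, |p i - u i| ≤ |v i - u i| := fun i => by
        by_cases h : i ∈ S
        · rw [hp, Finset.piecewise_eq_of_mem _ _ _ h]
        · rw [hp, Finset.piecewise_eq_of_notMem _ _ _ h]; simp
      have hpj : p j = u j := Finset.piecewise_eq_of_notMem _ _ _ hj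
      obtain ⟨z, hz, hzu, hze⟩ :=
        exists_mvt_coord hX hst hcont hpd_deriv hpm j (hu j) (hv j)
      rw [← hpj, Function.update_eq_self, hpj] at hze
      refine ⟨Function.update w j (Function.update p j z), fun k i => ?_, fun k i => ?_, ?_⟩
      · by_cases hk : k = j
        · subst hk
          by_cases hi : i = k
          · subst hi; simpa using hz
          · simpa [hi] using hpm i
        · simpa [hk] using hw k i
      · by_cases hk : k = j
        · subst hk
          by_cases hi : i = k
          · subst hi; simpa using hzu
          · simpa [hi] using hpu i
        · simpa [hk] using hwu k i
      · rw [Finset.piecewise_insert, Finset.sum_insert hj, Function.update_self, ← hze]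
        have : ∑ k ∈ S, Cdot k (Function.update w j (Function.update p j z) k) * (v k - u k)
            = ∑ k ∈ S, Cdot k (w k) * (v k - u k) := Finset.sum_congr rfl fun k hk => by
          rw [Function.update_of_ne (ne_of_mem_of_not_mem hk hj)]
        rw [this, ← he]
        ring
  obtain ⟨w, h1, h2, h3⟩ := key Finset.univ
  exact ⟨w, h1, h2, by simpa using h3⟩

/-- `Ċ_j` is uniformly continuous away from the faces `u_j = 0` and `u_j = 1`. -/
lemma exists_Cdot_modulus
    (hpd_cont : ∀ j : Fin d,
      ContinuousOn (Cdot j)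
        {u : Fin d → ℝ | (∀ i, u i ∈ Icc (0 : ℝ) 1) ∧ u j ∈ Ioo (0 : ℝ) 1})
    {δ θ : ℝ} (hδ : 0 < δ) (hθ : 0 < θ) :
    ∃ ρ : ℝ, 0 < ρ ∧ ∀ (j : Fin d) (u w : Fin d → ℝ), (∀ i, u i ∈ Icc (0 : ℝ) 1) →
      (∀ i, w i ∈ Icc (0 : ℝ) 1) → δ ≤ u j → u j ≤ 1 - δ → (∀ i, |w i - u i| ≤ ρ) →
      |Cdot j w - Cdot j u| ≤ θ := by
  have hj : ∀ j : Fin d, ∃ ρ : ℝ, 0 < ρ ∧ ∀ (u w : Fin d → ℝ), (∀ i, u i ∈ Icc (0 : ℝ) 1) →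
      (∀ i, w i ∈ Icc (0 : ℝ) 1) → δ ≤ u j → u j ≤ 1 - δ → (∀ i, |w i - u i| < ρ) →
      |Cdot j w - Cdot j u| ≤ θ := by
    intro j
    set Q : Set (Fin d → ℝ) := Icc 0 1 ∩ {u | u j ∈ Icc (δ / 2) (1 - δ / 2)} with hQ
    have hQc : IsCompact Q :=
      isCompact_Icc.inter_right (isClosed_Icc.preimage (continuous_apply j))
    have huc : UniformContinuousOn (Cdot j) Q :=
      hQc.uniformContinuousOn_of_continuous ((hpd_cont j).mono fun u hu =>
        ⟨fun i => ⟨hu.1.1 i, hu.1.2 i⟩, by linarith [hu.2.1], by linarith [hu.2.2]⟩)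
    obtain ⟨ρ, hρ, h⟩ := Metric.uniformContinuousOn_iff.1 huc θ hθ
    refine ⟨min ρ (δ / 2), by positivity, fun u w hu hw h1 h2 h3 => ?_⟩
    have h4 := abs_lt.1 ((h3 j).trans_le (min_le_right _ _))
    refine (h w ⟨⟨fun i => (hw i).1, fun i => (hw i).2⟩, by linarith [h4.1], by linarith [h4.2]⟩
      u ⟨⟨fun i => (hu i).1, fun i => (hu i).2⟩, by linarith, by linarith⟩ ?_).le
    exact (dist_pi_lt_iff hρ).2 fun i => (h3 i).trans_le (min_le_left _ _)
  choose ρ hρ h using hj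
  obtain ⟨r, hr, hr'⟩ : ∃ r : ℝ, 0 < r ∧ ∀ j, r < ρ j := by
    have h1 : ∀ᶠ r in nhdsWithin (0 : ℝ) (Ioi 0), ∀ j, r < ρ j :=
      eventually_all.2 fun j => eventually_nhdsWithin_of_eventually_nhds (gt_mem_nhds (hρ j))
    obtain ⟨r, hr1, hr0⟩ := (h1.and (eventually_mem_nhdsWithin (s := Ioi (0 : ℝ)))).exists
    exact ⟨r, hr0, hr1⟩
  exact ⟨r, hr, fun j u w hu hw h1 h2 h3 => h j u w hu hw h1 h2 fun i => (h3 i).trans_lt (hr' j)⟩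

end derivatives

/-! ### The bound for the empirical copula process -/

section bound
variable {d : ℕ} {P : Measure Ω} [IsProbabilityMeasure P] {X : ℤ → Ω → Fin d → ℝ}

lemma uvec_mem {u : Fin d → ℝ} (hu : ∀ i, u i ∈ Icc (0 : ℝ) 1) (j i : Fin d) :
    uvec u j i ∈ Icc (0 : ℝ) 1 := by
  unfold uvec
  split_ifs
  · exact hu j
  · exact ⟨zero_le_one, le_rfl⟩

lemma abs_uvec_sub_le {u v : Fin d → ℝ} {j : Fin d} {δ : ℝ} (hδ : 0 ≤ δ) (h : |u j - v j| ≤ δ)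
    (i : Fin d) : |uvec u j i - uvec v j i| ≤ δ := by
  unfold uvec
  split_ifs
  · exact h
  · simpa using hδ

lemma Btilde_zero (n : ℕ) (u : Fin d → ℝ) (ω : Ω) : Btilde P X n 0 u ω = 0 := by
  simp [Btilde]

/-- Equicontinuity in time bounds the process, since `B̃_n(0, ·) = 0`. -/
lemma abs_Btilde_le {n : ℕ} {δ ε : ℝ} (hδ : 0 ≤ δ) {ω : Ω} (hω : Equi P X n δ ε ω) {m : ℕ}
    (hm0 : 0 < m) (hm : 1 ≤ m * δ) {s : ℝ} (hs : s ∈ Icc (0 : ℝ) 1) {u : Fin d → ℝ}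
    (hu : ∀ i, u i ∈ Icc (0 : ℝ) 1) : |Btilde P X n s u ω| ≤ m * ε := by
  have hm0R : (0 : ℝ) < m := by exact_mod_cast hm0
  have key : ∀ i : ℕ, i ≤ m → |Btilde P X n (i * (s / m)) u ω| ≤ i * ε := by
    intro i
    induction i with
    | zero => intro _; simp [Btilde_zero]
    | succ i ih =>
      intro hi
      have h1 := ih (by omega)
      have hmem : ∀ k : ℕ, k ≤ m → (k : ℝ) * (s / m) ∈ Icc (0 : ℝ) 1 := by
        intro k hk
        have hkR : (k : ℝ) ≤ m := by exact_mod_cast hk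
        refine ⟨by have := hs.1; positivity, ?_⟩
        calc (k : ℝ) * (s / m) ≤ m * (s / m) := by
              have := hs.1
              gcongr
          _ = s := by field_simp
          _ ≤ 1 := hs.2
      have h2 := hω (((i + 1 : ℕ) : ℝ) * (s / m)) (i * (s / m)) u u (hmem _ hi)
        (hmem _ (by omega)) hu hu ?_ (fun j => by simpa using hδ)
      · calc |Btilde P X n (((i + 1 : ℕ) : ℝ) * (s / m)) u ω|
            = |(Btilde P X n (((i + 1 : ℕ) : ℝ) * (s / m)) u ω - Btilde P X n (i * (s / m)) u ω)
              + Btilde P X n (i * (s / m)) u ω| := by rw [sub_add_cancel]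
          _ ≤ ε + i * ε := (abs_add_le _ _).trans (add_le_add h2 h1)
          _ = ((i + 1 : ℕ) : ℝ) * ε := by push_cast; ring
      · have : ((i + 1 : ℕ) : ℝ) * (s / m) - i * (s / m) = s / m := by push_cast; ring
        rw [this, abs_of_nonneg (div_nonneg hs.1 hm0R.le), div_le_iff₀ hm0R]
        linarith [hs.2]
  have := key m le_rfl
  rwa [mul_div_cancel₀ _ hm0R.ne'] at this

variable {Cdot : Fin d → (Fin d → ℝ) → ℝ}

/-- On the equicontinuity event, the empirical copula process is close to its approximation for
all large `n`. Short time intervals are handled by smallness of both processes; on longer ones the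
random point `v` is close to `u`, and the copula increment is linearised at `u`. -/
lemma exists_uniform_bound (hX : ∀ i, Measurable (X i)) (hst : Stationary P X)
    (hcont : ∀ j, Continuous (margCdf P X j))
    (hpd_deriv : ∀ (j : Fin d) (u : Fin d → ℝ), (∀ i, u i ∈ Icc (0 : ℝ) 1) →
      u j ∈ Ioo (0 : ℝ) 1 →
      HasDerivWithinAt (fun v => copula P X (Function.update u j v))
        (Cdot j u) (Icc (0 : ℝ) 1) (u j))
    (hpd_cont : ∀ j : Fin d,
      ContinuousOn (Cdot j)
        {u : Fin d → ℝ | (∀ i, u i ∈ Icc (0 : ℝ) 1) ∧ u j ∈ Ioo (0 : ℝ) 1})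
    (hpd_zero : ∀ (j : Fin d) (u : Fin d → ℝ), u j = 0 ∨ u j = 1 → Cdot j u = 0)
    {δ ε : ℝ} (hδ : 0 < δ) (hε : 0 < ε) :
    ∃ n0 : ℕ, ∀ n, n0 ≤ n → ∀ ω, Nice P X n ω → Equi P X n δ ε ω →
      ∀ (s t : ℝ) (u : Fin d → ℝ), 0 ≤ s → s ≤ t → t ≤ 1 → (∀ j, u j ∈ Icc (0 : ℝ) 1) →
      |seqEmpCopProc P X n s t u ω - Ctilde P X Cdot n s t u ω| ≤ 16 * (d + 1) * ε := by
  obtain ⟨m, hm⟩ := exists_nat_gt (1 / δ)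
  have hm0R : (0 : ℝ) < m := (by positivity : (0 : ℝ) < 1 / δ).trans hm
  have hm0 : 0 < m := by exact_mod_cast hm0R
  rw [div_lt_iff₀ hδ] at hm
  set M : ℝ := 2 * m * ε with hM
  have hM0 : 0 < M := by positivity
  obtain ⟨ρ, hρ, hmod⟩ := exists_Cdot_modulus hpd_cont hδ (show 0 < ε / (M + ε) by positivity)
  set ρ' := min ρ δ with hρ'
  have hρ'0 : 0 < ρ' := lt_min hρ hδ
  -- beyond `n0`: `1 / √n ≤ ε`, `1 / n ≤ δ / 2` and `(M + ε) / (√n δ / 2) ≤ ρ'`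
  have hev : ∀ᶠ n : ℕ in atTop, (max (1 / ε) ((M + ε) / (ρ' * (δ / 2))) ≤ Real.sqrt n) ∧
      2 / δ ≤ n ∧ 1 ≤ n :=
    ((Real.tendsto_sqrt_atTop.comp tendsto_natCast_atTop_atTop).eventually_ge_atTop _).and
      ((tendsto_natCast_atTop_atTop.eventually_ge_atTop _).and (eventually_ge_atTop 1))
  obtain ⟨n0, hn0⟩ := eventually_atTop.1 hev
  refine ⟨n0, fun n hn ω hnice heq s t u hs hst' ht hu => ?_⟩
  obtain ⟨hsq, hnδ, hn1⟩ := hn0 n hn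
  have hn0R : (0 : ℝ) < n := by exact_mod_cast hn1
  have hs0 : 0 < Real.sqrt n := Real.sqrt_pos.2 hn0R
  have hinv : (Real.sqrt n)⁻¹ ≤ ε := by
    have := (le_max_left _ _).trans hsq
    rw [div_le_iff₀ hε] at this
    rw [inv_le_iff_one_le_mul₀ hs0]; linarith
  have hrho : M + ε ≤ Real.sqrt n * (δ / 2) * ρ' := by
    have := (le_max_right _ _).trans hsq
    rw [div_le_iff₀ (by positivity)] at this
    linarith
  have hsI : s ∈ Icc (0 : ℝ) 1 := ⟨hs, hst'.trans ht⟩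
  have htI : t ∈ Icc (0 : ℝ) 1 := ⟨hs.trans hst', ht⟩
  obtain ⟨v, hv, hrep, hvu⟩ := exists_representation hX hst hcont hn1 hnice hs hst' ht hu
  set B : (Fin d → ℝ) → ℝ := fun w => Binc P X n s t w ω with hB
  have hBM : ∀ w, (∀ i, w i ∈ Icc (0 : ℝ) 1) → |B w| ≤ M := by
    intro w hw
    have h1 := abs_Btilde_le hδ.le heq hm0 hm.le hsI hw
    have h2 := abs_Btilde_le hδ.le heq hm0 hm.le htI hw
    refine (abs_sub _ _).trans ?_
    rw [hM]; linarith
  have hBd : ∀ w w', (∀ i, w i ∈ Icc (0 : ℝ) 1) → (∀ i, w' i ∈ Icc (0 : ℝ) 1) →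
      (∀ i, |w i - w' i| ≤ δ) → |B w - B w'| ≤ 2 * ε := by
    intro w w' hw hw' hww'
    have h1 := abs_le.1 (heq s s w w' hsI hsI hw hw' (by simpa using hδ.le) hww')
    have h2 := abs_le.1 (heq t t w w' htI htI hw hw' (by simpa using hδ.le) hww')
    change |(_ - _) - (_ - _)| ≤ _
    rw [abs_le]
    constructor <;> linarith [h1.1, h1.2, h2.1, h2.2]
  have hCt : Ctilde P X Cdot n s t u ω = B u - ∑ j, Cdot j u * B (uvec u j) := rfl
  have hrep' : seqEmpCopProc P X n s t u ω = B v
        + Real.sqrt n * lam n s t * (copula P X v - copula P X u) := hrep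
  have hvu' : ∀ j, |Real.sqrt n * lam n s t * (v j - u j) + B (uvec v j)| ≤ ε :=
    fun j => (hvu j).trans hinv
  obtain ⟨w, hw, hwu, hinc⟩ := exists_copula_increment hX hst hcont hpd_deriv hu hv
  have hCd : ∀ {w : Fin d → ℝ}, (∀ i, w i ∈ Icc (0 : ℝ) 1) → ∀ j, |Cdot j w| ≤ 1 :=
    fun hw j => abs_Cdot_le_one hX hst hcont hpd_deriv hpd_zero hw j
  set Dv : Fin d → ℝ := fun j => Real.sqrt n * lam n s t * (v j - u j) with hDv
  have hdiff : seqEmpCopProc P X n s t u ω - Ctilde P X Cdot n s t u ω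
      = (B v - B u) + ∑ j, (Cdot j (w j) * Dv j + Cdot j u * B (uvec u j)) := by
    rw [hrep', hCt, hinc, Finset.sum_add_distrib, Finset.mul_sum]
    have : ∀ j, Real.sqrt n * lam n s t * (Cdot j (w j) * (v j - u j)) = Cdot j (w j) * Dv j := by
      intro j; simp only [hDv]; ring
    simp only [this]
    ring
  have hDvB : ∀ j, |Dv j + B (uvec v j)| ≤ ε := hvu'
  have hfinal : |B v - B u| ≤ 2 * ε →
      (∀ j, |Cdot j (w j) * Dv j + Cdot j u * B (uvec u j)| ≤ 16 * ε) →
      |seqEmpCopProc P X n s t u ω - Ctilde P X Cdot n s t u ω| ≤ 16 * (d + 1) * ε := by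
    intro h1 h2
    rw [hdiff]
    refine (abs_add_le _ _).trans ?_
    have h3 := (Finset.abs_sum_le_sum_abs _ _).trans
      (Finset.sum_le_sum fun j (_ : j ∈ Finset.univ) => h2 j)
    rw [Finset.sum_const, Finset.card_univ, Fintype.card_fin, nsmul_eq_mul] at h3
    linarith
  by_cases hcase : t - s ≤ δ
  -- on a short time interval every increment of `B̃_n` is at most `ε`
  · have hBs : ∀ w, (∀ i, w i ∈ Icc (0 : ℝ) 1) → |B w| ≤ ε := fun w hw =>
      heq t s w w htI hsI hw hw (by rwa [abs_of_nonneg (by linarith)])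
        (fun i => by simpa using hδ.le)
    refine hfinal ?_ fun j => ?_
    · refine (abs_sub _ _).trans ?_
      linarith [hBs v hv, hBs u hu]
    · have h1 : |Dv j| ≤ 2 * ε := by
        have h2 := abs_le.1 (hDvB j)
        have h3 := abs_le.1 (hBs _ (uvec_mem hv j))
        rw [abs_le]; constructor <;> linarith [h2.1, h2.2, h3.1, h3.2]
      have h4 := hBs _ (uvec_mem hu j)
      refine (abs_add_le _ _).trans ?_
      rw [abs_mul (Cdot j (w j)), abs_mul (Cdot j u)]
      have h5 : |Cdot j (w j)| * |Dv j| ≤ 1 * (2 * ε) :=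
        mul_le_mul (hCd (hw j) j) h1 (abs_nonneg _) zero_le_one
      have h6 : |Cdot j u| * |B (uvec u j)| ≤ 1 * ε :=
        mul_le_mul (hCd hu j) h4 (abs_nonneg _) zero_le_one
      refine (add_le_add h5 h6).trans ?_
      linarith
  · push Not at hcase
    have hlam : δ / 2 ≤ lam n s t := by
      rw [lam, le_div_iff₀ hn0R]
      have h1 := Int.sub_one_lt_floor ((n : ℝ) * t)
      have h2 := Int.floor_le ((n : ℝ) * s)
      rw [div_le_iff₀ hδ] at hnδ
      nlinarith
    have hDM : ∀ j, |Dv j| ≤ M + ε := by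
      intro j
      have h2 := abs_le.1 (hDvB j)
      have h3 := abs_le.1 (hBM _ (uvec_mem hv j))
      rw [abs_le]; constructor <;> linarith [h2.1, h2.2, h3.1, h3.2]
    have hclose : ∀ j, |v j - u j| ≤ ρ' := by
      intro j
      have h1 := hDM j
      simp only [hDv] at h1
      rw [abs_mul, abs_of_nonneg (mul_nonneg hs0.le (by linarith))] at h1
      by_contra hcon
      push Not at hcon
      have h2 : Real.sqrt n * (δ / 2) * ρ' < Real.sqrt n * lam n s t * |v j - u j| := by
        have h3 : Real.sqrt n * (δ / 2) ≤ Real.sqrt n * lam n s t := by gcongr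
        have h4 : 0 < Real.sqrt n * (δ / 2) := by positivity
        calc Real.sqrt n * (δ / 2) * ρ' < Real.sqrt n * (δ / 2) * |v j - u j| := by gcongr
          _ ≤ _ := by gcongr
      linarith
    have hcloseδ : ∀ j, |v j - u j| ≤ δ := fun j => (hclose j).trans (min_le_right _ _)
    refine hfinal (hBd v u hv hu hcloseδ) fun j => ?_
    have hDB : |Dv j + B (uvec u j)| ≤ 3 * ε := by
      have h1 := abs_le.1 (hDvB j)
      have h2 := abs_le.1 (hBd _ _ (uvec_mem hv j) (uvec_mem hu j)
        (abs_uvec_sub_le hδ.le (hcloseδ j)))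
      rw [abs_le]; constructor <;> linarith [h1.1, h1.2, h2.1, h2.2]
    have hmain : |(Cdot j (w j) - Cdot j u) * Dv j| ≤ 10 * ε := by
      rw [abs_mul]
      have h2' : |Cdot j (w j) - Cdot j u| ≤ 2 :=
        (abs_sub _ _).trans (by linarith [hCd (hw j) j, hCd hu j])
      -- near the faces `u_j = 0` and `u_j = 1` the marginal process is small
      have hface : ∀ c : ℝ, (c = 0 ∨ c = 1) → |u j - c| ≤ δ →
          |Cdot j (w j) - Cdot j u| * |Dv j| ≤ 10 * ε := by
        intro c hc huc
        have hcm : ∀ i : Fin d, (fun _ : Fin d => c) i ∈ Icc (0 : ℝ) 1 := fun i => by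
          rcases hc with h | h <;> simp [h]
        have h1 := hBd _ _ (uvec_mem hu j) (uvec_mem hcm j) (abs_uvec_sub_le hδ.le huc)
        have h0 : B (uvec (fun _ => c) j) = 0 := by
          change Btilde P X n t _ ω - Btilde P X n s _ ω = 0
          rw [Btilde_uvec_eq_zero hX hst hcont hnice t hc,
            Btilde_uvec_eq_zero hX hst hcont hnice s hc, sub_zero]
        rw [h0, sub_zero] at h1
        have h3 : |Dv j| ≤ 5 * ε := by
          have h4 := abs_le.1 hDB
          have h5 := abs_le.1 h1
          rw [abs_le]; constructor <;> linarith [h4.1, h4.2, h5.1, h5.2]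
        have := mul_le_mul h2' h3 (abs_nonneg _) zero_le_two
        linarith
      by_cases hu0 : u j < δ
      · exact hface 0 (Or.inl rfl) (by rw [sub_zero, abs_of_nonneg (hu j).1]; exact hu0.le)
      by_cases hu1 : 1 - δ < u j
      · refine hface 1 (Or.inr rfl) ?_
        rw [abs_sub_comm, abs_of_nonneg (by linarith [(hu j).2])]
        linarith
      have h1 := hmod j u (w j) hu (hw j) (not_lt.1 hu0) (not_lt.1 hu1)
        fun i => (hwu j i).trans ((hclose i).trans (min_le_left _ _))
      calc |Cdot j (w j) - Cdot j u| * |Dv j| ≤ ε / (M + ε) * (M + ε) :=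
            mul_le_mul h1 (hDM j) (abs_nonneg _) (by positivity)
        _ = ε := by field_simp
        _ ≤ 10 * ε := by linarith
    have hsecond : |Cdot j u * (Dv j + B (uvec u j))| ≤ 3 * ε := by
      rw [abs_mul]
      have := mul_le_mul (hCd hu j) hDB (abs_nonneg _) zero_le_one
      linarith
    calc |Cdot j (w j) * Dv j + Cdot j u * B (uvec u j)|
        = |(Cdot j (w j) - Cdot j u) * Dv j + Cdot j u * (Dv j + B (uvec u j))| := by
          congr 1; ring
      _ ≤ 10 * ε + 3 * ε := (abs_add_le _ _).trans (add_le_add hmain hsecond)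
      _ ≤ 16 * ε := by linarith

end bound

/-- Asymptotics of the sequential empirical copula process.
Under strong mixing with `α_r = O(r^{−a})`, `a > 1`, continuous margins, and
Conditions (pd) and (noTies),
`sup_{(s,t,u) ∈ Δ×[0,1]^d} |ℂ_n(s,t,u) − C̃_n(s,t,u)| → 0` in outer probability. -/
theorem seqEmpCopProc_asymptotic_representation
    (P : Measure Ω) [IsProbabilityMeasure P] (hd : 1 ≤ d)
    (X : ℤ → Ω → Fin d → ℝ) (hXmeas : ∀ i, Measurable (X i))
    (hXstat : Stationary P X)
    (hcont : ∀ j, Continuous (margCdf P X j))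
    (a : ℝ) (ha : 1 < a) (Ca : ℝ)
    (hmix : ∀ r : ℕ, 1 ≤ r → alphaMix P X r ≤ Ca * (r : ℝ) ^ (-a))
    -- Condition (pd)
    (Cdot : Fin d → (Fin d → ℝ) → ℝ)
    (hpd_deriv : ∀ (j : Fin d) (u : Fin d → ℝ), (∀ i, u i ∈ Icc (0 : ℝ) 1) →
      u j ∈ Ioo (0 : ℝ) 1 →
      HasDerivWithinAt (fun v => copula P X (Function.update u j v))
        (Cdot j u) (Icc (0 : ℝ) 1) (u j))
    (hpd_cont : ∀ j : Fin d,
      ContinuousOn (Cdot j)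
        {u : Fin d → ℝ | (∀ i, u i ∈ Icc (0 : ℝ) 1) ∧ u j ∈ Ioo (0 : ℝ) 1})
    (hpd_zero : ∀ (j : Fin d) (u : Fin d → ℝ), u j = 0 ∨ u j = 1 → Cdot j u = 0)
    -- Condition (noTies)
    (hties : ∀ (n : ℕ) (j : Fin d), ∀ᵐ ω ∂P,
      ∀ i ∈ Finset.Icc (1 : ℤ) (n : ℤ), ∀ i' ∈ Finset.Icc (1 : ℤ) (n : ℤ),
        i ≠ i' → X i ω j ≠ X i' ω j) :
    ∀ ε : ℝ, 0 < ε →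
      Tendsto
        (fun n : ℕ =>
          (P.toOuterMeasure {ω | ε <
            sSup {x : ℝ | ∃ (s t : ℝ) (u : Fin d → ℝ),
              0 ≤ s ∧ s ≤ t ∧ t ≤ 1 ∧ (∀ j, u j ∈ Icc (0 : ℝ) 1) ∧
              x = |seqEmpCopProc P X n s t u ω
                    - Ctilde P X Cdot n s t u ω|}}).toReal)
        atTop (nhds 0) := by
  intro ε hε
  rw [Metric.tendsto_atTop]
  intro ε' hε'
  have hε1 : 0 < ε / (16 * (d + 1)) := by positivity
  obtain ⟨δ, hδ, n1, hn1⟩ := exists_equi hXmeas hXstat hcont ha hmix hε1 (half_pos hε')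
  obtain ⟨n2, hn2⟩ := exists_uniform_bound hXmeas hXstat hcont hpd_deriv hpd_cont hpd_zero hδ hε1
  refine ⟨max n1 n2, fun n hn => ?_⟩
  have hnice := ae_nice hXmeas hXstat hcont n (hties n)
  rw [Real.dist_0_eq_abs, abs_of_nonneg ENNReal.toReal_nonneg]
  refine lt_of_le_of_lt ?_ (half_lt_self hε')
  refine le_trans ?_ (hn1 n ((le_max_left _ _).trans hn))
  refine ENNReal.toReal_mono (measure_ne_top P _) (measure_mono_ae ?_)
  filter_upwards [hnice] with ω hω hlt hequi
  refine absurd (Real.sSup_le ?_ hε.le) (not_le.2 hlt)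
  rintro x ⟨s, t, u, hs, hst, ht, hu, rfl⟩
  refine (hn2 n ((le_max_right _ _).trans hn) ω hω hequi s t u hs hst ht hu).trans (le_of_eq ?_)
  field_simp

end Stmt0
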